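/- arXiv:1912.05118 — 5 statements merged into one kernel-verified Lean document; each statement's English description precedes it below -/
import Mathlib

section
/- Let X be a finite subset of the unit sphere S^d ⊂ ℝ^{d+1} not contained in any open hemisphere. Then for every ε with 0 < ε ≤ π/2, the spherical measure of the ε-neighbourhood of X in S^d is at least twice the spherical measure of a spherical cap of angular radius ε. -/
open Metric Set MeasureTheory RealInnerProductSpace

lemma nested_aux {R : Type*} [MeasurableSpace R] (ν : Measure R) (A B Q : Set R)
    (hA : A ⊆ Q) (hB : B ⊆ Q) (h : A ⊆ B ∨ B ⊆ A) : ν A * ν B ≤ ν (A ∩ B) * ν Q := by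
  rcases h with h | h
  · rw [inter_eq_left.2 h]; gcongr
  · rw [inter_eq_right.2 h, mul_comm]; gcongr

lemma fiber_aux {Θ R : Type*} [MeasurableSpace Θ] [MeasurableSpace R] (σ : Measure Θ) [SFinite σ]
    (ν : Measure R) [SFinite ν] (P : Set (Θ × R)) (B Q : Set R)
    (hP : MeasurableSet P) (hB : MeasurableSet B) (hPQ : ∀ p ∈ P, p.2 ∈ Q) (hBQ : B ⊆ Q)
    (h : ∀ t, {r | (t, r) ∈ P} ⊆ B ∨ B ⊆ {r | (t, r) ∈ P}) :
    (σ.prod ν) P * (σ.prod ν) (Prod.snd ⁻¹' B)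
      ≤ (σ.prod ν) (P ∩ Prod.snd ⁻¹' B) * (σ.prod ν) (Prod.snd ⁻¹' Q) := by
  have e : ∀ S : Set R, (σ.prod ν) (Prod.snd ⁻¹' S) = σ univ * ν S := by
    intro S; rw [← univ_prod, Measure.prod_prod]
  have hPB : MeasurableSet (P ∩ Prod.snd ⁻¹' B) := hP.inter (measurable_snd hB)
  rw [e, e, Measure.prod_apply hP, Measure.prod_apply hPB, mul_left_comm, mul_left_comm _ (σ univ)]
  apply mul_le_mul' le_rfl
  rw [← lintegral_mul_const _ (measurable_measure_prodMk_left hP),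
    ← lintegral_mul_const _ (measurable_measure_prodMk_left hPB)]
  refine lintegral_mono fun t => ?_
  exact nested_aux ν (Prod.mk t ⁻¹' P) B Q (fun r hr => hPQ _ hr) hBQ (h t)

lemma polar_mp (F : Type*) [NormedAddCommGroup F] [InnerProductSpace ℝ F] [FiniteDimensional ℝ F]
    [MeasurableSpace F] [BorelSpace F] [Nontrivial F] :
    MeasurePreserving (fun q : sphere (0 : F) 1 × Ioi (0 : ℝ) => (q.2 : ℝ) • (q.1 : F))
      ((volume : Measure F).toSphere.prod (Measure.volumeIoiPow (Module.finrank ℝ F - 1)))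
      volume := by
  have h1 := (Measure.measurePreserving_homeomorphUnitSphereProd (volume : Measure F))
  have h2 := MeasurePreserving.symm (homeomorphUnitSphereProd F).toMeasurableEquiv h1
  have h3 : MeasurePreserving (Subtype.val : ({0}ᶜ : Set F) → F) ((volume : Measure F).comap (Subtype.val : ({0}ᶜ : Set F) → F)) volume := by
    refine ⟨measurable_subtype_coe, ?_⟩
    rw [map_comap_subtype_coe (measurableSet_singleton _).compl]
    exact restrict_compl_singleton 0
  exact h3.comp h2

lemma mp_assoc {A B C : Type*} [MeasurableSpace A] [MeasurableSpace B] [MeasurableSpace C]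
      (μ : Measure A) (ν : Measure B) (τ : Measure C) [SFinite μ] [SFinite ν] [SFinite τ] :
      MeasurePreserving (MeasurableEquiv.prodAssoc : (A × B) × C ≃ᵐ A × B × C)
        ((μ.prod ν).prod τ) (μ.prod (ν.prod τ)) :=
    ⟨MeasurableEquiv.prodAssoc.measurable, Measure.prodAssoc_prod⟩

lemma polar_mp2 (F : Type*) [NormedAddCommGroup F] [InnerProductSpace ℝ F] [FiniteDimensional ℝ F]
    [MeasurableSpace F] [BorelSpace F] [Nontrivial F] :
    MeasurePreserving (fun q : sphere (0 : F) 1 × (ℝ × Ioi (0 : ℝ)) =>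
        (q.2.1, (q.2.2 : ℝ) • (q.1 : F)))
      ((volume : Measure F).toSphere.prod
        ((volume : Measure ℝ).prod (Measure.volumeIoiPow (Module.finrank ℝ F - 1))))
      (volume.prod volume) := by
  have h1 := (MeasurePreserving.id (volume : Measure ℝ)).prod (polar_mp F)
  have h2 := (mp_assoc (volume : Measure F).toSphere (volume : Measure ℝ)
    (Measure.volumeIoiPow (Module.finrank ℝ F - 1))).symm
  have h3 := (Measure.measurePreserving_swap (μ := (volume : Measure F).toSphere)
    (ν := (volume : Measure ℝ))).prod
    (MeasurePreserving.id (Measure.volumeIoiPow (Module.finrank ℝ F - 1)))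
  have h4 := (mp_assoc (volume : Measure ℝ) (volume : Measure F).toSphere
    (Measure.volumeIoiPow (Module.finrank ℝ F - 1)))
  exact h1.comp (h4.comp (h3.comp h2))

lemma polar_E {E : Type*} [NormedAddCommGroup E] [InnerProductSpace ℝ E] [FiniteDimensional ℝ E]
    [MeasurableSpace E] [BorelSpace E] (x : E) (hx : ‖x‖ = 1) [Nontrivial (ℝ ∙ x)ᗮ] :
    ∃ c : ENNReal, ∀ S : Set E, MeasurableSet S → volume S = c *
      ((volume : Measure (ℝ ∙ x)ᗮ).toSphere.prod
        ((volume : Measure ℝ).prod (Measure.volumeIoiPow (Module.finrank ℝ (ℝ ∙ x)ᗮ - 1))))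
      ((fun q : sphere (0 : (ℝ ∙ x)ᗮ) 1 × (ℝ × Ioi (0 : ℝ)) =>
        q.2.1 • x + (q.2.2 : ℝ) • ((q.1 : (ℝ ∙ x)ᗮ) : E)) ⁻¹' S) := by
  have hx0 : x ≠ 0 := by rintro rfl; simp at hx
  let L : (ℝ × (ℝ ∙ x)ᗮ) ≃L[ℝ] E :=
    (((LinearEquiv.toSpanNonzeroSingleton ℝ E x hx0).prodCongr (LinearEquiv.refl ℝ _)).trans
      (Submodule.prodEquivOfIsCompl (ℝ ∙ x) (ℝ ∙ x)ᗮ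
        (Submodule.isCompl_orthogonal _))).toContinuousLinearEquiv
  have hL : ∀ p, L p = p.1 • x + (p.2 : E) := by
    intro p
    simp [L]
  have : Measure.IsAddHaarMeasure
      (((volume : Measure ℝ).prod (volume : Measure (ℝ ∙ x)ᗮ)).map L) :=
    L.isAddHaarMeasure_map _
  have h := Measure.isAddLeftInvariant_eq_smul (volume : Measure E)
      (((volume : Measure ℝ).prod (volume : Measure (ℝ ∙ x)ᗮ)).map L)
  refine ⟨((Measure.addHaarScalarFactor (volume : Measure E)
    (((volume : Measure ℝ).prod (volume : Measure (ℝ ∙ x)ᗮ)).map L) : NNReal) : ENNReal), fun S hS => ?_⟩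
  · have hS2 := congrArg (fun m : Measure E => m S) h
    beta_reduce at hS2
    rw [hS2, Measure.smul_apply, Measure.map_apply L.continuous.measurable hS,
      ← (polar_mp2 (ℝ ∙ x)ᗮ).measure_preimage (L.continuous.measurable hS).nullMeasurableSet]
    rw [← preimage_comp]
    have e : (⇑L ∘ fun q : sphere (0 : (ℝ ∙ x)ᗮ) 1 × (ℝ × Ioi (0 : ℝ)) =>
        (q.2.1, (q.2.2 : ℝ) • (q.1 : (ℝ ∙ x)ᗮ))) =
        (fun q => q.2.1 • x + (q.2.2 : ℝ) • ((q.1 : (ℝ ∙ x)ᗮ) : E)) := by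
      ext q; simp [hL]
    rw [e]
    rfl

lemma ms_and {α : Type*} [MeasurableSpace α] {p q : α → Prop} (hp : MeasurableSet {x | p x})
    (hq : MeasurableSet {x | q x}) : MeasurableSet {x | p x ∧ q x} := by
  have : {x | p x ∧ q x} = {x | p x} ∩ {x | q x} := by ext; simp
  rw [this]; exact hp.inter hq

lemma cone_ineq {E : Type*} [NormedAddCommGroup E] [InnerProductSpace ℝ E] [FiniteDimensional ℝ E]
    [MeasurableSpace E] [BorelSpace E] (x : E) (hx : ‖x‖ = 1) (c : ℝ) (hc : 0 ≤ c) (hc1 : c ≤ 1)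
    (P : Set E) (hP : MeasurableSet P)
    (hcone : ∀ p ∈ P, ∀ a b : ℝ, 0 < a → 0 ≤ b → a • p + b • x ∈ P) :
    volume (P ∩ {y | ‖y‖ < 1 ∧ 0 ≤ ⟪x, y⟫}) * volume {y : E | ‖y‖ < 1 ∧ c * ‖y‖ ≤ ⟪x, y⟫} ≤
    volume ((P ∩ {y | ‖y‖ < 1 ∧ 0 ≤ ⟪x, y⟫}) ∩ {y : E | ‖y‖ < 1 ∧ c * ‖y‖ ≤ ⟪x, y⟫}) *
      volume {y : E | ‖y‖ < 1 ∧ 0 ≤ ⟪x, y⟫} := by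
  have hQm : MeasurableSet {y : E | ‖y‖ < 1 ∧ 0 ≤ ⟪x, y⟫} :=
    ms_and (measurableSet_lt (by fun_prop) (by fun_prop))
      (measurableSet_le (by fun_prop) (by fun_prop))
  have hBm : MeasurableSet {y : E | ‖y‖ < 1 ∧ c * ‖y‖ ≤ ⟪x, y⟫} :=
    ms_and (measurableSet_lt (by fun_prop) (by fun_prop))
      (measurableSet_le (by fun_prop) (by fun_prop))
  rcases subsingleton_or_nontrivial (ℝ ∙ x)ᗮ with hF | hF
  · have key : ∀ y : E, 0 ≤ ⟪x, y⟫ → ‖y‖ = ⟪x, y⟫ := by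
      intro y hy
      have h1 : y - ⟪x, y⟫ • x ∈ (ℝ ∙ x)ᗮ := by
        rw [Submodule.mem_orthogonal_singleton_iff_inner_right, inner_sub_right, inner_smul_right,
          real_inner_self_eq_norm_sq, hx]
        ring
      have h2 : y - ⟪x, y⟫ • x = 0 := by
        have := Subsingleton.elim (⟨_, h1⟩ : (ℝ ∙ x)ᗮ) 0
        simpa using congrArg Subtype.val this
      have h3 := sub_eq_zero.1 h2
      calc ‖y‖ = ‖⟪x, y⟫ • x‖ := by rw [← h3]
        _ = ⟪x, y⟫ := by rw [norm_smul, hx, mul_one, Real.norm_of_nonneg hy]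
    have hBQ : {y : E | ‖y‖ < 1 ∧ c * ‖y‖ ≤ ⟪x, y⟫} = {y : E | ‖y‖ < 1 ∧ 0 ≤ ⟪x, y⟫} := by
      ext y
      simp only [mem_ofPred_eq]
      constructor
      · rintro ⟨h1, h2⟩
        exact ⟨h1, le_trans (by positivity) h2⟩
      · rintro ⟨h1, h2⟩
        refine ⟨h1, ?_⟩
        rw [key y h2]
        nlinarith
    rw [hBQ, inter_assoc, inter_self]
  · obtain ⟨k, hk⟩ := polar_E x hx
    rw [hk _ (hP.inter hQm), hk _ hBm, hk _ ((hP.inter hQm).inter hBm), hk _ hQm]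
    set σ := (volume : Measure (ℝ ∙ x)ᗮ).toSphere
    set ν := ((volume : Measure ℝ).prod
      (Measure.volumeIoiPow (Module.finrank ℝ (ℝ ∙ x)ᗮ - 1)))
    set ψ := (fun q : sphere (0 : (ℝ ∙ x)ᗮ) 1 × (ℝ × Ioi (0 : ℝ)) =>
        q.2.1 • x + (q.2.2 : ℝ) • ((q.1 : (ℝ ∙ x)ᗮ) : E)) with hψ
    have hψm : Measurable ψ := by
      apply Continuous.measurable
      fun_prop
    have hinner : ∀ q, ⟪x, ψ q⟫ = q.2.1 := by
      intro q
      have : ⟪x, ((q.1 : (ℝ ∙ x)ᗮ) : E)⟫ = 0 :=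
        Submodule.mem_orthogonal_singleton_iff_inner_right.1 (q.1 : (ℝ ∙ x)ᗮ).2
      simp [hψ, inner_add_right, inner_smul_right, this, hx]
    have hnorm : ∀ q, ‖ψ q‖ = √(q.2.1 ^ 2 + (q.2.2 : ℝ) ^ 2) := by
      intro q
      have h0 : ⟪x, ((q.1 : (ℝ ∙ x)ᗮ) : E)⟫ = 0 :=
        Submodule.mem_orthogonal_singleton_iff_inner_right.1 (q.1 : (ℝ ∙ x)ᗮ).2
      have h1 : ‖((q.1 : (ℝ ∙ x)ᗮ) : E)‖ = 1 := by
        exact norm_eq_of_mem_sphere q.1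
      rw [eq_comm, Real.sqrt_eq_iff_mul_self_eq (by positivity) (by positivity), ← pow_two,
        hψ, norm_add_sq_real, norm_smul, norm_smul, inner_smul_left, inner_smul_right, h0, hx, h1]
      simp
    let B : Set (ℝ × Ioi (0 : ℝ)) := {p | √(p.1 ^ 2 + (p.2 : ℝ) ^ 2) < 1 ∧
      c * √(p.1 ^ 2 + (p.2 : ℝ) ^ 2) ≤ p.1}
    let Q : Set (ℝ × Ioi (0 : ℝ)) := {p | √(p.1 ^ 2 + (p.2 : ℝ) ^ 2) < 1 ∧ 0 ≤ p.1}
    have hB' : ψ ⁻¹' {y : E | ‖y‖ < 1 ∧ c * ‖y‖ ≤ ⟪x, y⟫} = Prod.snd ⁻¹' B := by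
      ext q; simp [B, hinner, hnorm]
    have hQ' : ψ ⁻¹' {y : E | ‖y‖ < 1 ∧ 0 ≤ ⟪x, y⟫} = Prod.snd ⁻¹' Q := by
      ext q; simp [Q, hinner, hnorm]
    have hBm' : MeasurableSet B :=
      ms_and (measurableSet_lt (by fun_prop) (by fun_prop))
        (measurableSet_le (by fun_prop) (by fun_prop))
    have main := fiber_aux σ ν (ψ ⁻¹' (P ∩ {y | ‖y‖ < 1 ∧ 0 ≤ ⟪x, y⟫})) B Q
      (hψm (hP.inter hQm)) hBm' (by
        rintro p ⟨_, hp⟩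
        have : p ∈ Prod.snd ⁻¹' Q := by rw [← hQ']; exact hp
        exact this) (by
        rintro p ⟨h1, h2⟩
        exact ⟨h1, le_trans (by positivity) h2⟩) (by
        intro t
        by_contra! hcon
        obtain ⟨h1, h2⟩ := hcon
        obtain ⟨⟨s, r⟩, hp, hpB⟩ := not_subset.1 h1
        obtain ⟨⟨s', r'⟩, hpB', hp'⟩ := not_subset.1 h2
        apply hp'
        have hr : (0 : ℝ) < r := r.2
        have hr' : (0 : ℝ) < r' := r'.2
        have hQ1 : (s, r) ∈ Q := by
          have : ((t, (s, r)) : sphere (0 : (ℝ ∙ x)ᗮ) 1 × (ℝ × Ioi (0 : ℝ))) ∈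
            Prod.snd ⁻¹' Q := by rw [← hQ']; exact hp.2
          exact this
        have hs : 0 ≤ s := hQ1.2
        have hlt : s < c * √(s ^ 2 + (r : ℝ) ^ 2) := by
          by_contra hle
          exact hpB ⟨hQ1.1, not_lt.1 hle⟩
        have hle : c * √(s' ^ 2 + (r' : ℝ) ^ 2) ≤ s' := hpB'.2
        have hs' : 0 ≤ s' := le_trans (by positivity) hle
        have e1 : √(s ^ 2 + (r : ℝ) ^ 2) ^ 2 = s ^ 2 + (r : ℝ) ^ 2 := Real.sq_sqrt (by positivity)
        have e2 : √(s' ^ 2 + (r' : ℝ) ^ 2) ^ 2 = s' ^ 2 + (r' : ℝ) ^ 2 :=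
          Real.sq_sqrt (by positivity)
        have hcr : s * r' ≤ s' * r := by
          have a1 : s * √(s' ^ 2 + (r' : ℝ) ^ 2) ≤ s' * √(s ^ 2 + (r : ℝ) ^ 2) := by
            calc s * √(s' ^ 2 + (r' : ℝ) ^ 2)
                ≤ (c * √(s ^ 2 + (r : ℝ) ^ 2)) * √(s' ^ 2 + (r' : ℝ) ^ 2) := by gcongr
              _ = (c * √(s' ^ 2 + (r' : ℝ) ^ 2)) * √(s ^ 2 + (r : ℝ) ^ 2) := by ring
              _ ≤ _ := by gcongr
          have a2 := pow_le_pow_left₀ (by positivity) a1 2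
          rw [mul_pow, mul_pow, e1, e2] at a2
          apply le_of_sq_le_sq _ (by positivity)
          nlinarith
        have hmem : ψ (t, (s', r')) ∈ P := by
          have := hcone _ hp.1 (r' / r) (s' - s * r' / r) (by positivity) (by
            rw [sub_nonneg, div_le_iff₀ hr]; exact hcr)
          convert this using 1
          simp only [hψ, smul_add, smul_smul, sub_smul]
          rw [div_mul_cancel₀ _ hr.ne', show (r' : ℝ) / r * s = s * r' / r by ring]
          abel
        refine ⟨hmem, ?_⟩
        have : ((t, (s', r')) : sphere (0 : (ℝ ∙ x)ᗮ) 1 × (ℝ × Ioi (0 : ℝ))) ∈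
            ψ ⁻¹' {y : E | ‖y‖ < 1 ∧ 0 ≤ ⟪x, y⟫} := by
          rw [hQ']; exact ⟨hpB'.1, hs'⟩
        exact this)
    rw [preimage_inter (t := {y : E | ‖y‖ < 1 ∧ c * ‖y‖ ≤ ⟪x, y⟫}), hB', hQ']
    rw [mul_mul_mul_comm k _ k, mul_mul_mul_comm k _ k]
    exact mul_le_mul' le_rfl main

lemma cap_inv {E : Type*} [NormedAddCommGroup E] [InnerProductSpace ℝ E] [FiniteDimensional ℝ E]
    [MeasurableSpace E] [BorelSpace E] (x u : E) (hx : ‖x‖ = 1) (hu : ‖u‖ = 1) (c : ℝ) :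
    volume {y : E | ‖y‖ < 1 ∧ c * ‖y‖ ≤ ⟪x, y⟫} = volume {y : E | ‖y‖ < 1 ∧ c * ‖y‖ ≤ ⟪u, y⟫} := by
  have hm : MeasurableSet {y : E | ‖y‖ < 1 ∧ c * ‖y‖ ≤ ⟪u, y⟫} :=
    ms_and (measurableSet_lt (by fun_prop) (by fun_prop))
      (measurableSet_le (by fun_prop) (by fun_prop))
  have hR : (ℝ ∙ (x - u))ᗮ.reflection x = u := Submodule.reflection_sub (hx.trans hu.symm)
  rw [← ((ℝ ∙ (x - u))ᗮ.reflection).measurePreserving.measure_preimage hm.nullMeasurableSet]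
  congr 1
  ext y
  simp only [mem_preimage, mem_ofPred_eq, LinearIsometryEquiv.norm_map]
  have hi := ((ℝ ∙ (x - u))ᗮ.reflection).inner_map_map x y
  rw [hR] at hi
  rw [hi]

lemma hyper_null {E : Type*} [NormedAddCommGroup E] [InnerProductSpace ℝ E] [FiniteDimensional ℝ E]
    [MeasurableSpace E] [BorelSpace E] (x : E) (hx : x ≠ 0) :
    volume {y : E | ⟪x, y⟫ = 0} = 0 := by
  have h := Measure.addHaar_submodule (volume : Measure E) (ℝ ∙ x)ᗮ (by
    intro h
    have : x ∈ (ℝ ∙ x)ᗮ := by rw [h]; trivial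
    rw [Submodule.mem_orthogonal_singleton_iff_inner_right] at this
    exact hx (inner_self_eq_zero.1 this))
  convert h using 2
  ext y
  simp [Submodule.mem_orthogonal_singleton_iff_inner_right]

lemma half_ball {E : Type*} [NormedAddCommGroup E] [InnerProductSpace ℝ E] [FiniteDimensional ℝ E]
    [MeasurableSpace E] [BorelSpace E] (x : E) (hx : ‖x‖ = 1) :
    2 * volume {y : E | ‖y‖ < 1 ∧ 0 ≤ ⟪x, y⟫} ≤ volume (ball (0 : E) 1) := by
  have hm : ∀ z : E, MeasurableSet {y : E | ‖y‖ < 1 ∧ 0 ≤ ⟪z, y⟫} := fun z =>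
    ms_and (measurableSet_lt (by fun_prop) (by fun_prop))
      (measurableSet_le (by fun_prop) (by fun_prop))
  have hx0 : x ≠ 0 := by rintro rfl; simp at hx
  have e := cap_inv x (-x) hx (by simpa using hx) 0
  simp only [zero_mul] at e
  rw [two_mul]
  nth_rewrite 2 [e]
  rw [← measure_union₀ (hm _).nullMeasurableSet]
  · apply measure_mono
    rintro y (h | h) <;> simpa using h.1
  · refine measure_mono_null ?_ (hyper_null x hx0)
    rintro y ⟨h1, h2⟩
    have h3 := h1.2
    have h4 := h2.2
    rw [inner_neg_left] at h4
    exact le_antisymm (by linarith) h3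

lemma main_E {E : Type*} [NormedAddCommGroup E] [InnerProductSpace ℝ E] [FiniteDimensional ℝ E]
    [MeasurableSpace E] [BorelSpace E] (X : Finset E) (hX : ∀ x ∈ X, ‖x‖ = 1)
    (hcov : ∀ y : E, ∃ x ∈ X, 0 ≤ ⟪x, y⟫) (u : E) (hu : ‖u‖ = 1)
    (c : ℝ) (hc : 0 ≤ c) (hc1 : c ≤ 1) :
    2 * volume {y : E | ‖y‖ < 1 ∧ c * ‖y‖ ≤ ⟪u, y⟫} ≤
      volume {y : E | ‖y‖ < 1 ∧ ∃ x ∈ X, c * ‖y‖ ≤ ⟪x, y⟫} := by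
  let C : E → Set E := fun x => ⋂ z ∈ X, {y | ⟪z, y⟫ ≤ ⟪x, y⟫}
  have hC : ∀ x y, y ∈ C x ↔ ∀ z ∈ X, ⟪z, y⟫ ≤ ⟪x, y⟫ := by intro x y; simp [C]
  have hCm : ∀ x, MeasurableSet (C x) := fun x =>
    Finset.measurableSet_biInter _ fun z _ => measurableSet_le (by fun_prop) (by fun_prop)
  let Q : E → Set E := fun x => {y | ‖y‖ < 1 ∧ 0 ≤ ⟪x, y⟫}
  let B : E → Set E := fun x => {y | ‖y‖ < 1 ∧ c * ‖y‖ ≤ ⟪x, y⟫}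
  have hQm : ∀ x, MeasurableSet (Q x) := fun x =>
    ms_and (measurableSet_lt (by fun_prop) (by fun_prop))
      (measurableSet_le (by fun_prop) (by fun_prop))
  have hBm : ∀ x, MeasurableSet (B x) := fun x =>
    ms_and (measurableSet_lt (by fun_prop) (by fun_prop))
      (measurableSet_le (by fun_prop) (by fun_prop))
  have hBu : ∀ x ∈ X, volume (B x) = volume (B u) := fun x hx => cap_inv x u (hX x hx) hu c
  have hQu : ∀ x ∈ X, volume (Q x) = volume (Q u) := by
    intro x hx
    have := cap_inv x u (hX x hx) hu 0
    simpa only [zero_mul] using this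
  have hineq : ∀ x ∈ X, volume (C x ∩ Q x) * volume (B u) ≤
      volume ((C x ∩ Q x) ∩ B x) * volume (Q u) := by
    intro x hx
    rw [← hBu x hx, ← hQu x hx]
    refine cone_ineq x (hX x hx) c hc hc1 (C x) (hCm x) ?_
    intro p hp a b ha hb
    rw [hC] at hp ⊢
    intro z hz
    have h1 : ⟪z, x⟫ ≤ 1 := by
      have := real_inner_le_norm z x
      rwa [hX z hz, hX x hx, one_mul] at this
    have h2 : ⟪x, x⟫ = 1 := by rw [real_inner_self_eq_norm_sq, hX x hx]; norm_num
    simp only [inner_add_right, inner_smul_right, h2]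
    have := hp z hz
    gcongr
  have hsum : (∑ x ∈ X, volume (C x ∩ Q x)) * volume (B u) ≤
      (∑ x ∈ X, volume ((C x ∩ Q x) ∩ B x)) * volume (Q u) := by
    rw [Finset.sum_mul, Finset.sum_mul]
    exact Finset.sum_le_sum hineq
  have hcover : volume (ball (0 : E) 1) ≤ ∑ x ∈ X, volume (C x ∩ Q x) := by
    refine le_trans (measure_mono ?_) (measure_biUnion_finset_le X fun x => C x ∩ Q x)
    intro y hy
    obtain ⟨x0, hx0, hx0y⟩ := hcov y
    obtain ⟨x, hx, hmax⟩ := X.exists_max_image (fun z => ⟪z, y⟫) ⟨x0, hx0⟩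
    simp only [mem_iUnion]
    refine ⟨x, hx, (hC x y).2 hmax, by simpa using hy, hx0y.trans (hmax x0 hx0)⟩
  have hdisj : ∑ x ∈ X, volume ((C x ∩ Q x) ∩ B x) ≤
      volume {y : E | ‖y‖ < 1 ∧ ∃ x ∈ X, c * ‖y‖ ≤ ⟪x, y⟫} := by
    rw [← measure_biUnion_finset₀]
    · apply measure_mono
      intro y hy
      simp only [mem_iUnion] at hy
      obtain ⟨x, hx, hy⟩ := hy
      exact ⟨hy.2.1, x, hx, hy.2.2⟩
    · intro x hx z hz hxz
      refine measure_mono_null ?_ (hyper_null (x - z) (sub_ne_zero.2 hxz))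
      rintro y ⟨h1, h2⟩
      have h3 := (hC x y).1 h1.1.1 z hz
      have h4 := (hC z y).1 h2.1.1 x hx
      show ⟪x - z, y⟫ = 0
      rw [inner_sub_left]
      linarith
    · intro x _
      exact (((hCm x).inter (hQm x)).inter (hBm x)).nullMeasurableSet
  have hq0 : volume (Q u) ≠ 0 := by
    intro h0
    have h1 : volume (ball (0 : E) 1) ≤ 0 := by
      refine hcover.trans ?_
      rw [nonpos_iff_eq_zero]
      refine Finset.sum_eq_zero fun x hx => ?_
      exact measure_mono_null inter_subset_right ((hQu x hx).trans h0)
    exact (measure_ball_pos volume (0 : E) one_pos).not_ge h1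
  have hqt : volume (Q u) ≠ ⊤ := by
    refine ((measure_mono (fun y hy => ?_)).trans_lt
      (measure_ball_lt_top (μ := (volume : Measure E)) (x := 0) (r := 1))).ne
    simpa using hy.1
  refine (ENNReal.mul_le_mul_iff_left hq0 hqt).1 ?_
  calc 2 * volume (B u) * volume (Q u) = (2 * volume (Q u)) * volume (B u) := by ring
    _ ≤ volume (ball (0 : E) 1) * volume (B u) := by gcongr; exact half_ball u hu
    _ ≤ _ := by gcongr
    _ ≤ _ := hsum
    _ ≤ _ := by gcongr

/-- If a finite set X on the unit sphere S^d ⊂ ℝ^{d+1} does not lie in an open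
hemisphere, then for 0 < ε ≤ π/2 the spherical measure of its ε-neighbourhood is
at least twice the measure of a spherical cap of angular radius ε. -/
theorem measure_eps_nbhd_ge_two_caps (d : ℕ)
    (X : Set (sphere (0 : EuclideanSpace ℝ (Fin (d + 1))) 1))
    (hXfin : X.Finite) (hXne : X.Nonempty)
    (hhemi : ¬∃ u : sphere (0 : EuclideanSpace ℝ (Fin (d + 1))) 1,
      ∀ x ∈ X, 0 < ⟪(u : EuclideanSpace ℝ (Fin (d + 1))), (x : EuclideanSpace ℝ (Fin (d + 1)))⟫)
    (ε : ℝ) (hε : 0 < ε) (hε' : ε ≤ Real.pi / 2)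
    (u : sphere (0 : EuclideanSpace ℝ (Fin (d + 1))) 1) :
    2 * (volume : Measure (EuclideanSpace ℝ (Fin (d + 1)))).toSphere
        {y : sphere (0 : EuclideanSpace ℝ (Fin (d + 1))) 1 |
          Real.arccos ⟪(u : EuclideanSpace ℝ (Fin (d + 1))), (y : EuclideanSpace ℝ (Fin (d + 1)))⟫ ≤ ε}
      ≤ (volume : Measure (EuclideanSpace ℝ (Fin (d + 1)))).toSphere
        {y : sphere (0 : EuclideanSpace ℝ (Fin (d + 1))) 1 | ∃ x ∈ X,
          Real.arccos ⟪(x : EuclideanSpace ℝ (Fin (d + 1))), (y : EuclideanSpace ℝ (Fin (d + 1)))⟫ ≤ ε} := by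
  have hc : 0 ≤ Real.cos ε := Real.cos_nonneg_of_mem_Icc ⟨by linarith, hε'⟩
  have hc1 : Real.cos ε ≤ 1 := Real.cos_le_one ε
  have harc : ∀ x y : sphere (0 : EuclideanSpace ℝ (Fin (d + 1))) 1,
      Real.arccos ⟪(x : EuclideanSpace ℝ (Fin (d + 1))), (y : EuclideanSpace ℝ (Fin (d + 1)))⟫ ≤ ε ↔
      Real.cos ε ≤ ⟪(x : EuclideanSpace ℝ (Fin (d + 1))), (y : EuclideanSpace ℝ (Fin (d + 1)))⟫ := by
    intro x y
    have h1 := abs_real_inner_le_norm (x : EuclideanSpace ℝ (Fin (d + 1))) y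
    rw [norm_eq_of_mem_sphere, norm_eq_of_mem_sphere, one_mul, abs_le] at h1
    rw [← Real.strictAntiOn_cos.le_iff_ge ⟨hε.le, by linarith [Real.pi_pos]⟩
      ⟨Real.arccos_nonneg _, Real.arccos_le_pi _⟩, Real.cos_arccos h1.1 h1.2]
  simp only [harc]
  have hm : ∀ x : sphere (0 : EuclideanSpace ℝ (Fin (d + 1))) 1,
      MeasurableSet {y : sphere (0 : EuclideanSpace ℝ (Fin (d + 1))) 1 |
        Real.cos ε ≤ ⟪(x : EuclideanSpace ℝ (Fin (d + 1))), (y : EuclideanSpace ℝ (Fin (d + 1)))⟫} :=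
    fun x => measurableSet_le (by fun_prop) (by fun_prop)
  have hm2 : MeasurableSet {y : sphere (0 : EuclideanSpace ℝ (Fin (d + 1))) 1 | ∃ x ∈ X,
        Real.cos ε ≤ ⟪(x : EuclideanSpace ℝ (Fin (d + 1))), (y : EuclideanSpace ℝ (Fin (d + 1)))⟫} := by
    have := hXfin.measurableSet_biUnion (fun x _ => hm x)
    convert this using 1
    ext y; simp
  rw [Measure.toSphere_apply' _ (hm u), Measure.toSphere_apply' _ hm2, mul_left_comm]
  apply mul_le_mul' le_rfl
  classical
  let Y : Finset (EuclideanSpace ℝ (Fin (d + 1))) := hXfin.toFinset.image Subtype.val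
  have hY : ∀ z, z ∈ Y ↔ ∃ x ∈ X, (x : EuclideanSpace ℝ (Fin (d + 1))) = z := by
    intro z; simp [Y]
  have main := main_E Y (by
    intro z hz
    obtain ⟨x, _, rfl⟩ := (hY z).1 hz
    exact norm_eq_of_mem_sphere x) (by
    intro y
    rcases eq_or_ne y 0 with rfl | hy
    · obtain ⟨x, hx⟩ := hXne
      exact ⟨x, (hY _).2 ⟨x, hx, rfl⟩, by simp⟩
    · by_contra! hcon
      have hn : 0 < ‖y‖ := norm_pos_iff.2 hy
      apply hhemi
      refine ⟨⟨-(‖y‖⁻¹ • y), by simp [norm_smul, hn.ne']⟩, fun x hx => ?_⟩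
      have h1 := hcon x ((hY _).2 ⟨x, hx, rfl⟩)
      rw [real_inner_comm] at h1
      simp only [inner_neg_left, inner_smul_left]
      have : 0 < ‖y‖⁻¹ * -⟪y, (x : EuclideanSpace ℝ (Fin (d + 1)))⟫ :=
        mul_pos (inv_pos.2 hn) (by linarith)
      simpa using this) u (norm_eq_of_mem_sphere u) (Real.cos ε) hc hc1
  refine le_trans (mul_le_mul' le_rfl (measure_mono ?_)) (main.trans ?_)
  · rintro _ ⟨t, ht, _, ⟨y, hy, rfl⟩, rfl⟩
    have hy' : Real.cos ε ≤ ⟪(u : EuclideanSpace ℝ (Fin (d + 1))), (y : EuclideanSpace ℝ (Fin (d + 1)))⟫ := hy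
    have hn : ‖t • (y : EuclideanSpace ℝ (Fin (d + 1)))‖ = t := by
      rw [norm_smul, norm_eq_of_mem_sphere, mul_one, Real.norm_of_nonneg ht.1.le]
    refine ⟨?_, ?_⟩
    · beta_reduce; rw [hn]; exact ht.2
    · beta_reduce
      rw [hn, inner_smul_right, mul_comm]
      exact mul_le_mul_of_nonneg_left hy' ht.1.le
  · rw [← measure_sdiff_null (measure_singleton (0 : EuclideanSpace ℝ (Fin (d + 1))))]
    apply measure_mono
    rintro y ⟨⟨h1, z, hz, h2⟩, h0⟩
    obtain ⟨x, hx, rfl⟩ := (hY z).1 hz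
    have hn : 0 < ‖y‖ := norm_pos_iff.2 h0
    refine ⟨‖y‖, ⟨hn, h1⟩, ‖y‖⁻¹ • y, ⟨⟨‖y‖⁻¹ • y, by simp [norm_smul, hn.ne']⟩, ?_, rfl⟩, ?_⟩
    · refine ⟨x, hx, ?_⟩
      simp only [inner_smul_right]
      rw [inv_mul_eq_div, le_div_iff₀ hn]
      exact h2
    · exact smul_inv_smul₀ hn.ne' y
end

section
/- Among r-ball bodies in ℝ^d of given inradius, the r-lense has maximal volume; equivalently, among r-ball bodies of given volume, the r-lense has the smallest inradius: if K is an r-ball body with inradius ρ ≤ r, then Vol_d(K) ≤ Vol_d(L_{r,ρ,d}). -/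
open Metric Set MeasureTheory Pointwise RealInnerProductSpace

variable {d : ℕ}

/-- The `r`-ball body generated by `X`: the intersection of all closed balls of
radius `r` centered at points of `X`. -/
def ballBody (r : ℝ) (X : Set (EuclideanSpace ℝ (Fin d))) :
    Set (EuclideanSpace ℝ (Fin d)) :=
  ⋂ x ∈ X, closedBall x r

/-- The `r`-ball convex hull of `X`: the intersection of all closed balls of
radius `r` containing `X`. -/
def ballHull (r : ℝ) (X : Set (EuclideanSpace ℝ (Fin d))) :
    Set (EuclideanSpace ℝ (Fin d)) :=
  ⋂ y ∈ {y : EuclideanSpace ℝ (Fin d) | X ⊆ closedBall y r}, closedBall y r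


/-- weighted planar measure -/
noncomputable def lensM (k : ℕ) : Measure (ℝ × ℝ) :=
  (volume : Measure (ℝ × ℝ)).withDensity (fun p => ENNReal.ofReal (p.2 ^ k))

lemma lensM_apply (k : ℕ) (S : Set (ℝ × ℝ)) (hS : MeasurableSet S) :
    lensM k S = ∫⁻ p, S.indicator (fun p => ENNReal.ofReal (p.2 ^ k)) p := by
  rw [lensM, withDensity_apply _ hS, lintegral_indicator hS]

lemma lensM_scale (k : ℕ) (κ : ℝ) (hκ : 0 < κ) : ∃ q : ENNReal, q ≠ 0 ∧ q ≠ ⊤ ∧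
    ∀ S : Set (ℝ × ℝ), MeasurableSet S → lensM k ((fun p => κ • p) ⁻¹' S) = q * lensM k S := by
  refine ⟨ENNReal.ofReal ((κ ^ k)⁻¹) * ENNReal.ofReal (|(κ ^ 2)⁻¹|), ?_, ?_, ?_⟩
  · have : (0:ℝ) < (κ^k)⁻¹ := by positivity
    have h2 : (0:ℝ) < |(κ^2)⁻¹| := by positivity
    simp only [ne_eq, mul_eq_zero, ENNReal.ofReal_eq_zero, not_or, not_le]
    exact ⟨this, h2⟩
  · exact ENNReal.mul_ne_top ENNReal.ofReal_ne_top ENNReal.ofReal_ne_top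
  · intro S hS
    have hm : Measurable (fun p : ℝ × ℝ => κ • p) := by fun_prop
    have hg : Measurable (fun p : ℝ × ℝ => ENNReal.ofReal (p.2 ^ k)) := by fun_prop
    rw [lensM_apply k _ (hm hS), lensM_apply k S hS, mul_assoc]
    have h1 := Measure.map_addHaar_smul (volume : Measure (ℝ × ℝ)) hκ.ne'
    have h2 : ∫⁻ p, S.indicator (fun p => ENNReal.ofReal (p.2 ^ k)) p ∂(Measure.map (κ • ·) (volume : Measure (ℝ × ℝ)))
       = ENNReal.ofReal (|(κ ^ 2)⁻¹|) * ∫⁻ p, S.indicator (fun p => ENNReal.ofReal (p.2 ^ k)) p := by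
      rw [h1, lintegral_smul_measure]; simp
    rw [← h2, lintegral_map (hg.indicator hS) hm, ← lintegral_const_mul]
    · congr 1; ext p
      by_cases hp : κ • p ∈ S
      · rw [indicator_of_mem (show p ∈ (fun p => κ • p) ⁻¹' S from hp), indicator_of_mem hp,
          ← ENNReal.ofReal_mul (by positivity)]
        congr 1
        simp [mul_pow]
        field_simp
      · rw [indicator_of_notMem (show p ∉ (fun p => κ • p) ⁻¹' S from hp), indicator_of_notMem hp]; simp
    · exact (hg.indicator hS).comp hm

/-- quarter lens -/
def qlens (R r : ℝ) : Set (ℝ × ℝ) := {p | 0 < p.2 ∧ 0 ≤ p.1 ∧ (p.1 + R) ^ 2 + p.2 ^ 2 ≤ r ^ 2}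

lemma qlens_meas (R r : ℝ) : MeasurableSet (qlens R r) := by
  have m1 : MeasurableSet {p : ℝ × ℝ | 0 < p.2} := measurableSet_lt (by fun_prop) (by fun_prop)
  have m2 : MeasurableSet {p : ℝ × ℝ | 0 ≤ p.1} := measurableSet_le (by fun_prop) (by fun_prop)
  have m3 : MeasurableSet {p : ℝ × ℝ | (p.1 + R) ^ 2 + p.2 ^ 2 ≤ r ^ 2} :=
    measurableSet_le (by fun_prop) (by fun_prop)
  exact m1.inter (m2.inter m3)

lemma lens_fibre (k : ℕ) (R r : ℝ) (hR : 0 ≤ R) (hr : R < r) (W : Set (ℝ × ℝ))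
    (hW : MeasurableSet W)
    (h0 : ∀ p ∈ W, 0 < p.2 ∧ 0 ≤ p.1)
    (h1 : ∀ p ∈ W, ∀ l : ℝ, 0 < l → l • p ∈ W)
    (h2 : ∀ p ∈ W, ∀ s : ℝ, 0 ≤ s → (p.1 + s, p.2) ∈ W) :
    lensM k (qlens R r ∩ W) * lensM k (qlens 0 1) ≤
      lensM k (qlens 0 1 ∩ W) * lensM k (qlens R r) := by
  rcases W.eq_empty_or_nonempty with rfl | ⟨p0, hp0⟩
  · simp
  set B : Set ℝ := (fun p : ℝ × ℝ => p.1 / p.2) '' W with hB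
  have hBb : BddBelow B := ⟨0, by
    rintro _ ⟨p, hp, rfl⟩
    have := h0 p hp
    exact div_nonneg this.2 this.1.le⟩
  set b := sInf B with hb
  have hb0 : 0 ≤ b := by
    apply Real.sInf_nonneg
    rintro _ ⟨p, hp, rfl⟩
    have := h0 p hp
    exact div_nonneg this.2 this.1.le
  have hin : ∀ p ∈ W, b * p.2 ≤ p.1 := by
    intro p hp
    have := csInf_le hBb ⟨p, hp, rfl⟩
    rwa [le_div_iff₀ (h0 p hp).1] at this
  have hout : ∀ p : ℝ × ℝ, 0 < p.2 → 0 ≤ p.1 → p ∉ W → p.1 ≤ b * p.2 := by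
    intro q hq2 hq1 hq
    rw [← div_le_iff₀ hq2]
    apply le_csInf (show B.Nonempty from ⟨_, p0, hp0, rfl⟩)
    rintro _ ⟨p, hp, rfl⟩
    by_contra hlt
    push Not at hlt
    have hp2 := (h0 p hp).1
    change p.1 / p.2 < q.1 / q.2 at hlt
    rw [div_lt_div_iff₀ hp2 hq2] at hlt
    apply hq
    have := h2 _ (h1 p hp (q.2 / p.2) (by positivity)) (q.1 - q.2 / p.2 * p.1) (by
      have : q.2 / p.2 * p.1 = p.1 * q.2 / p.2 := by ring
      rw [this, sub_nonneg, div_le_iff₀ hp2]; exact hlt.le)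
    convert this using 1
    ext
    · simp
    · simp; field_simp
  obtain ⟨κ, η, hκ, hη, e1, e2⟩ : ∃ κ η : ℝ, 0 < κ ∧ 0 ≤ η ∧ η ^ 2 * (1 + b ^ 2) = b ^ 2 * κ ^ 2 ∧
      κ ^ 2 + 2 * R * η + R ^ 2 = r ^ 2 := by
    set β := b / √(1 + b ^ 2) with hβ
    have hsq : √(1 + b ^ 2) ^ 2 = 1 + b ^ 2 := Real.sq_sqrt (by positivity)
    have hβ0 : 0 ≤ β := by positivity
    have hd : 0 < r ^ 2 - R ^ 2 := by nlinarith
    have hs : √((β * R) ^ 2 + (r ^ 2 - R ^ 2)) ^ 2 = (β * R) ^ 2 + (r ^ 2 - R ^ 2) :=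
      Real.sq_sqrt (by positivity)
    have hk : 0 < √((β * R) ^ 2 + (r ^ 2 - R ^ 2)) - β * R := by
      rw [sub_pos]
      apply Real.lt_sqrt_of_sq_lt; linarith
    refine ⟨_, β * (√((β * R) ^ 2 + (r ^ 2 - R ^ 2)) - β * R), hk, by positivity, ?_, by nlinarith⟩
    rw [mul_pow, hβ, div_pow, hsq]
    field_simp
  have i1 : qlens R r ∩ W ⊆ qlens 0 κ ∩ W := by
    rintro p ⟨⟨a1, a2, a3⟩, hp⟩
    refine ⟨⟨a1, a2, ?_⟩, hp⟩
    have hh := hin p hp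
    by_contra hc
    push Not at hc
    have hbp : (b * p.2) ^ 2 ≤ p.1 ^ 2 := by gcongr
    have : η ^ 2 ≤ p.1 ^ 2 := by
      have : η ^ 2 * (1 + b ^ 2) ≤ p.1 ^ 2 * (1 + b ^ 2) := by nlinarith [sq_nonneg b]
      exact le_of_mul_le_mul_right this (by positivity)
    have := (sq_le_sq₀ hη a2).1 this
    nlinarith
  have i2 : qlens 0 κ \ W ⊆ qlens R r \ W := by
    rintro p ⟨⟨a1, a2, a3⟩, hp⟩
    refine ⟨⟨a1, a2, ?_⟩, hp⟩
    have hh := hout p a1 a2 hp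
    have hbp : p.1 ^ 2 ≤ (b * p.2) ^ 2 := by gcongr
    have : p.1 ^ 2 ≤ η ^ 2 := by
      have : p.1 ^ 2 * (1 + b ^ 2) ≤ η ^ 2 * (1 + b ^ 2) := by nlinarith [sq_nonneg b]
      exact le_of_mul_le_mul_right this (by positivity)
    have := (sq_le_sq₀ a2 hη).1 this
    nlinarith
  have key : lensM k (qlens R r ∩ W) * lensM k (qlens 0 κ) ≤
      lensM k (qlens 0 κ ∩ W) * lensM k (qlens R r) := by
    rw [← measure_inter_add_sdiff (qlens 0 κ) hW, ← measure_inter_add_sdiff (qlens R r) hW, mul_add, mul_add,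
      mul_comm (lensM k (qlens 0 κ ∩ W)) (lensM k (qlens R r ∩ W))]
    gcongr
  obtain ⟨q, hq0, hqt, hq⟩ := lensM_scale k κ hκ
  have j1 : (fun p : ℝ × ℝ => κ • p) ⁻¹' (qlens 0 κ) = qlens 0 1 := by
    ext p
    simp only [qlens, mem_preimage, mem_ofPred_eq, Prod.smul_fst, Prod.smul_snd, smul_eq_mul]
    have : (κ * p.1 + 0) ^ 2 + (κ * p.2) ^ 2 = ((p.1 + 0) ^ 2 + p.2 ^ 2) * κ ^ 2 := by ring
    rw [this, mul_pos_iff_of_pos_left hκ, mul_nonneg_iff_of_pos_left hκ, mul_le_iff_le_one_left (by positivity)]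
    simp
  have j2 : (fun p : ℝ × ℝ => κ • p) ⁻¹' W = W := by
    ext p
    refine ⟨fun h => ?_, fun h => h1 p h κ hκ⟩
    have := h1 _ h κ⁻¹ (by positivity)
    simpa [smul_smul, hκ.ne'] using this
  have k1 := hq _ (qlens_meas 0 κ)
  have k2 := hq _ ((qlens_meas 0 κ).inter hW)
  rw [preimage_inter, j1, j2] at k2
  rw [j1] at k1
  rw [k1, k2]
  calc _ = q * (lensM k (qlens R r ∩ W) * lensM k (qlens 0 κ)) := by ring
    _ ≤ q * (lensM k (qlens 0 κ ∩ W) * lensM k (qlens R r)) := by gcongr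
    _ = _ := by ring

section polar
variable {E : Type*} [NormedAddCommGroup E] [InnerProductSpace ℝ E] [FiniteDimensional ℝ E]
  [MeasurableSpace E] [BorelSpace E] [Nontrivial E]

lemma lens_polar (F : E → ENNReal) (hF : Measurable F) :
    ∫⁻ y, F y = ∫⁻ v : sphere (0 : E) 1, ∫⁻ t in Ioi (0 : ℝ),
      ENNReal.ofReal (t ^ (Module.finrank ℝ E - 1)) * F (t • (v : E)) ∂volume
        ∂((volume : Measure E).toSphere) := by
  have hmp := (volume : Measure E).measurePreserving_homeomorphUnitSphereProd
  have hG : Measurable (fun q : sphere (0 : E) 1 × Ioi (0 : ℝ) => F ((q.2 : ℝ) • (q.1 : E))) := by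
    fun_prop
  calc ∫⁻ y, F y = ∫⁻ y in ({0}ᶜ : Set E), F y := by
        rw [restrict_compl_singleton]
    _ = ∫⁻ y : ({0}ᶜ : Set E), F y ∂((volume : Measure E).comap Subtype.val) := by
        rw [lintegral_subtype_comap (measurableSet_singleton _).compl]
    _ = ∫⁻ y : ({0}ᶜ : Set E), (fun q : sphere (0 : E) 1 × Ioi (0 : ℝ) => F ((q.2 : ℝ) • (q.1 : E)))
          (homeomorphUnitSphereProd E y) ∂((volume : Measure E).comap Subtype.val) := by
        congr 1; ext y
        have : ‖(y : E)‖ ≠ 0 := norm_ne_zero_iff.2 y.2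
        simp [smul_smul, this]
    _ = _ := by
        rw [hmp.lintegral_comp hG, lintegral_prod _ hG.aemeasurable]
        congr 1; ext v
        rw [Measure.volumeIoiPow, lintegral_withDensity_eq_lintegral_mul _ (by fun_prop) (by fun_prop)]
        exact lintegral_subtype_comap measurableSet_Ioi
          (fun t : ℝ => ENNReal.ofReal (t ^ (Module.finrank ℝ E - 1)) * F (t • (v : E)))

lemma lens_fibration (S : Set (ℝ × E)) (hS : MeasurableSet S) :
    volume S = ∫⁻ v : sphere (0 : E) 1,
      lensM (Module.finrank ℝ E - 1) {p | 0 < p.2 ∧ (p.1, p.2 • (v : E)) ∈ S}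
        ∂((volume : Measure E).toSphere) := by
  set k := Module.finrank ℝ E - 1
  have hpos : MeasurableSet {p : ℝ × ℝ | 0 < p.2} := measurableSet_lt (by fun_prop) (by fun_prop)
  have hfib : ∀ v : E, MeasurableSet {p : ℝ × ℝ | 0 < p.2 ∧ (p.1, p.2 • v) ∈ S} := by
    intro v
    refine hpos.inter ?_
    have : Measurable (fun p : ℝ × ℝ => (p.1, p.2 • v)) := by fun_prop
    exact this hS
  have hind : Measurable (S.indicator (1 : ℝ × E → ENNReal)) := measurable_one.indicator hS
  rw [Measure.volume_eq_prod, ← lintegral_indicator_one hS, lintegral_prod _ hind.aemeasurable]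
  have e1 : ∀ h : ℝ, ∫⁻ y : E, S.indicator 1 (h, y) = ∫⁻ v : sphere (0 : E) 1,
      ∫⁻ t in Ioi (0 : ℝ), ENNReal.ofReal (t ^ k) * S.indicator (1 : ℝ × E → ENNReal) (h, t • (v : E)) ∂volume
        ∂((volume : Measure E).toSphere) := by
    intro h
    exact lens_polar (fun y => S.indicator (1 : ℝ × E → ENNReal) (h, y)) (by fun_prop)
  simp_rw [e1]
  rw [lintegral_lintegral_swap]
  · congr 1; ext v
    rw [lensM_apply _ _ (hfib v), Measure.volume_eq_prod, lintegral_prod]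
    · congr 1; ext h
      rw [← lintegral_indicator measurableSet_Ioi]
      congr 1; ext t
      by_cases ht : 0 < t <;> by_cases hs : (h, t • (v : E)) ∈ S <;> simp [indicator, ht, hs]
    · apply Measurable.aemeasurable
      exact Measurable.indicator (by fun_prop) (hfib v)
  · apply Measurable.aemeasurable
    have : Measurable (fun q : (ℝ × sphere (0 : E) 1) × ℝ => ENNReal.ofReal (q.2 ^ k) *
        S.indicator (1 : ℝ × E → ENNReal) (q.1.1, q.2 • (q.1.2 : E))) := by
      apply Measurable.mul (by fun_prop)
      apply hind.comp
      fun_prop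
    exact this.lintegral_prod_right'

lemma lens_key_prod (R r : ℝ) (hR : 0 ≤ R) (hr : R < r) (W : Set (ℝ × E))
    (hW : MeasurableSet W)
    (h0 : ∀ p ∈ W, 0 ≤ p.1)
    (h1 : ∀ p ∈ W, ∀ l : ℝ, 0 < l → l • p ∈ W)
    (h2 : ∀ p ∈ W, ∀ s : ℝ, 0 ≤ s → (p.1 + s, p.2) ∈ W) (L : ℝ → ℝ → Set (ℝ × E))
    (hL : L = fun R r => {p | 0 ≤ p.1 ∧ (p.1 + R) ^ 2 + ‖p.2‖ ^ 2 ≤ r ^ 2}) :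
    volume (L R r ∩ W) * volume (L 0 1) ≤ volume (L 0 1 ∩ W) * volume (L R r) := by
  have hLm : ∀ R r, MeasurableSet (L R r) := by
    intro R r
    rw [hL]
    have m2 : MeasurableSet {p : ℝ × E | 0 ≤ p.1} := measurableSet_le (by fun_prop) (by fun_prop)
    have m3 : MeasurableSet {p : ℝ × E | (p.1 + R) ^ 2 + ‖p.2‖ ^ 2 ≤ r ^ 2} :=
      measurableSet_le (by fun_prop) (by fun_prop)
    exact m2.inter m3
  set k := Module.finrank ℝ E - 1 with hk
  set σ := (volume : Measure E).toSphere
  have hq : ∀ R r, ∀ v : sphere (0 : E) 1, {p : ℝ × ℝ | 0 < p.2 ∧ (p.1, p.2 • (v : E)) ∈ L R r} = qlens R r := by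
    intro R r v
    ext p
    have : ‖(v : E)‖ = 1 := by simp
    simp [hL, qlens, norm_smul, this]
  have hqW : ∀ R r, ∀ v : sphere (0 : E) 1, {p : ℝ × ℝ | 0 < p.2 ∧ (p.1, p.2 • (v : E)) ∈ L R r ∩ W} =
      qlens R r ∩ {p : ℝ × ℝ | 0 < p.2 ∧ (p.1, p.2 • (v : E)) ∈ W} := by
    intro R r v
    rw [← hq R r v]
    ext p
    simp only [mem_ofPred_eq, mem_inter_iff]
    tauto
  have v1 : ∀ R r, volume (L R r) = lensM k (qlens R r) * σ univ := by
    intro R r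
    rw [lens_fibration _ (hLm R r)]
    simp_rw [hq]
    rw [lintegral_const]
  have v2 : ∀ R r, volume (L R r ∩ W) = ∫⁻ v : sphere (0 : E) 1, lensM k (qlens R r ∩ {p : ℝ × ℝ | 0 < p.2 ∧ (p.1, p.2 • (v : E)) ∈ W}) ∂σ := by
    intro R r
    rw [lens_fibration _ ((hLm R r).inter hW)]
    simp_rw [hqW]
    rfl
  have hfin : ∀ R r, lensM k (qlens R r) ≠ ⊤ := by
    intro R r
    have : volume (L R r) ≠ ⊤ := by
      rw [Measure.volume_eq_prod]
      refine ne_top_of_le_ne_top ?_ (measure_mono (t := Icc (-R - |r|) (-R + |r|) ×ˢ closedBall (0 : E) |r|) ?_)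
      · rw [Measure.prod_prod]
        exact ENNReal.mul_ne_top (by simp) measure_closedBall_lt_top.ne
      · intro p hp
        simp only [hL, mem_ofPred_eq] at hp
        have hp := hp.2
        have a1 : |p.1 + R| ≤ |r| := sq_le_sq.1 (by nlinarith [sq_nonneg ‖p.2‖])
        have a2 : |‖p.2‖| ≤ |r| := sq_le_sq.1 (by nlinarith [sq_nonneg (p.1 + R)])
        rw [abs_le] at a1
        rw [abs_norm] at a2
        exact ⟨⟨by linarith, by linarith⟩, by simpa using a2⟩
    rw [v1] at this
    intro h
    rw [h, ENNReal.top_mul] at this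
    · exact this rfl
    · rw [Ne, Measure.measure_univ_eq_zero]; exact (volume : Measure E).toSphere_ne_zero
  rw [v1, v1, v2, v2, ← mul_assoc, ← mul_assoc]
  gcongr ?_ * _
  rw [← lintegral_mul_const' _ _ (hfin _ _), ← lintegral_mul_const' _ _ (hfin _ _)]
  apply lintegral_mono
  intro v
  have hm : MeasurableSet {p : ℝ × ℝ | 0 < p.2 ∧ (p.1, p.2 • (v : E)) ∈ W} := by
    apply MeasurableSet.inter (s₁ := {p : ℝ × ℝ | 0 < p.2})
    · exact measurableSet_lt (by fun_prop) (by fun_prop)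
    · have : Measurable (fun p : ℝ × ℝ => (p.1, p.2 • (v : E))) := by fun_prop
      exact this hW
  apply lens_fibre k R r hR hr _ hm
  · intro p hp
    exact ⟨hp.1, h0 _ hp.2⟩
  · intro p hp l hl
    refine ⟨mul_pos hl hp.1, ?_⟩
    have := h1 _ hp.2 l hl
    simpa [smul_smul] using this
  · intro p hp s hs
    exact ⟨hp.1, h2 _ hp.2 s hs⟩

end polar

section transfer
variable {V : Type*} [NormedAddCommGroup V] [InnerProductSpace ℝ V] [FiniteDimensional ℝ V]
  [MeasurableSpace V] [BorelSpace V]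
variable {E : Type*} [NormedAddCommGroup E] [InnerProductSpace ℝ E] [FiniteDimensional ℝ E]
  [MeasurableSpace E] [BorelSpace E]

lemma lens_iso (hd : Module.finrank ℝ V = Module.finrank ℝ E + 1) (x : V) :
    ∃ Ψ : ℝ × E → V, MeasurePreserving Ψ ∧
      (∀ p, ‖Ψ p - x‖ ^ 2 = (p.1 + ‖x‖) ^ 2 + ‖p.2‖ ^ 2) ∧
      (∀ p, ‖Ψ p‖ ^ 2 = p.1 ^ 2 + ‖p.2‖ ^ 2) ∧
      (∀ p, inner ℝ (Ψ p) x = - (‖x‖ * p.1)) ∧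
      (∀ (l : ℝ) p, Ψ (l • p) = l • Ψ p) ∧
      (∀ p s, ‖x‖ • Ψ (p.1 + s, p.2) = ‖x‖ • Ψ p - s • x) := by
  have hfr : Module.finrank ℝ (WithLp 2 (ℝ × E)) = Module.finrank ℝ V := by
    rw [hd, (WithLp.linearEquiv 2 ℝ (ℝ × E)).finrank_eq, Module.finrank_prod]
    simp [add_comm]
  let T0 : WithLp 2 (ℝ × E) ≃ₗᵢ[ℝ] V :=
    (stdOrthonormalBasis ℝ (WithLp 2 (ℝ × E))).equiv (stdOrthonormalBasis ℝ V) (finCongr hfr)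
  have hn2 : ∀ p : ℝ × E, ‖(WithLp.toLp 2 p : WithLp 2 (ℝ × E))‖ ^ 2 = p.1 ^ 2 + ‖p.2‖ ^ 2 := by
    intro p
    rw [WithLp.prod_norm_sq_eq_of_L2]; simp
  have hnorm : ‖T0 (WithLp.toLp 2 (-‖x‖, (0 : E)))‖ = ‖x‖ := by
    rw [T0.norm_map, ← sq_eq_sq₀ (norm_nonneg _) (norm_nonneg _), hn2]; simp
  set e0 := T0 (WithLp.toLp 2 (-‖x‖, (0 : E)))
  let T : WithLp 2 (ℝ × E) ≃ₗᵢ[ℝ] V := T0.trans (Submodule.reflection (Submodule.span ℝ {e0 - x})ᗮ)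
  have hT : T (WithLp.toLp 2 (-‖x‖, (0 : E))) = x := Submodule.reflection_sub hnorm
  refine ⟨fun p => T (WithLp.toLp 2 p), ?_, ?_, ?_, ?_, ?_, ?_⟩
  · exact T.measurePreserving.comp (WithLp.volume_preserving_toLp ℝ E)
  · intro p
    conv_lhs => rw [← hT]
    rw [← map_sub, T.norm_map, ← WithLp.toLp_sub, hn2]
    simp
  · intro p
    rw [T.norm_map, hn2]
  · intro p
    conv_lhs => rw [← hT]
    rw [T.inner_map_map, WithLp.prod_inner_apply]
    simp
  · intro l p
    change T (WithLp.toLp 2 (l • p)) = l • T (WithLp.toLp 2 p)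
    rw [WithLp.toLp_smul, map_smul]
  · intro p s
    change ‖x‖ • T (WithLp.toLp 2 (p.1 + s, p.2)) = ‖x‖ • T (WithLp.toLp 2 p) - s • x
    have hT' : s • x = T (s • (WithLp.toLp 2 (-‖x‖, (0 : E)))) := by rw [map_smul, hT]
    rw [hT', ← map_smul, ← map_smul, ← map_sub, ← WithLp.toLp_smul, ← WithLp.toLp_smul, ← WithLp.toLp_smul, ← WithLp.toLp_sub]
    congr 2
    ext
    · simp; ring
    · simp

lemma lens_consts (n : ℕ) (hd : Module.finrank ℝ V = n + 1) (hn : n ≠ 0)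
    (R r : ℝ) (hR : 0 < R) (hr : R < r) : ∃ A B : ENNReal, A ≠ ⊤ ∧ A ≠ 0 ∧
    ∀ x : V, ‖x‖ = R →
      (∀ W : Set V, MeasurableSet W → (∀ p ∈ W, inner ℝ p x ≤ 0) →
        (∀ p ∈ W, ∀ l : ℝ, 0 < l → l • p ∈ W) → (∀ p ∈ W, ∀ s : ℝ, 0 ≤ s → p - s • x ∈ W) →
        volume (closedBall x r ∩ W) * A ≤ volume (closedBall (0 : V) 1 ∩ W) * B) ∧
      volume (closedBall (0 : V) 1) ≤ 2 * A ∧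
      2 * B ≤ volume (closedBall x r ∩ closedBall (-x) r) := by
  let E := EuclideanSpace ℝ (Fin n)
  have hd' : Module.finrank ℝ V = Module.finrank ℝ E + 1 := by simpa [E] using hd
  have : NeZero n := ⟨hn⟩
  have : Nontrivial E := by
    apply Module.nontrivial_of_finrank_pos (R := ℝ)
    simp [E]; omega
  obtain ⟨L, hL⟩ : ∃ L : ℝ → ℝ → Set (ℝ × E), L =
    fun R r => {p | 0 ≤ p.1 ∧ (p.1 + R) ^ 2 + ‖p.2‖ ^ 2 ≤ r ^ 2} := ⟨_, rfl⟩
  have hH : ∀ x : V, MeasurableSet {p : V | inner ℝ p x ≤ 0} := by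
    intro x
    exact measurableSet_le (by fun_prop) (by fun_prop)
  have hpb : ∀ (a s : ℝ), 0 ≤ s → (0 ≤ a) → (a ≤ s ↔ a ^ 2 ≤ s ^ 2) := by
    intro a s h1 h2
    rw [sq_le_sq₀ h2 h1]
  have hB : ∀ x : V, ‖x‖ = R → volume (L R r) = volume (closedBall x r ∩ {p : V | inner ℝ p x ≤ 0}) ∧
      volume (L 0 1) = volume (closedBall (0 : V) 1 ∩ {p : V | inner ℝ p x ≤ 0}) := by
    intro x hx
    obtain ⟨Ψ, mp, p1, p2, p3, p4, p5⟩ := lens_iso (E := E) hd' x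
    rw [← mp.measure_preimage (measurableSet_closedBall.inter (hH x)).nullMeasurableSet,
      ← mp.measure_preimage (measurableSet_closedBall.inter (hH x)).nullMeasurableSet]
    constructor
    · congr 1; ext p
      simp only [hL, mem_ofPred_eq, mem_preimage, mem_inter_iff, mem_closedBall, dist_eq_norm, p3]
      rw [hpb _ r (by linarith) (norm_nonneg _), p1, hx]
      simp [hR]; tauto
    · congr 1; ext p
      simp only [hL, mem_ofPred_eq, mem_preimage, mem_inter_iff, mem_closedBall, dist_eq_norm, p3, sub_zero]
      rw [hpb _ 1 (by linarith) (norm_nonneg _), p2, hx]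
      simp [hR]; tauto
  have hball : ∀ x : V, ‖x‖ = R → volume (closedBall (0 : V) 1) ≤ 2 * volume (L 0 1) := by
    intro x hx
    have hneg : volume (Neg.neg ⁻¹' (closedBall (0 : V) 1 ∩ {p : V | inner ℝ p x ≤ 0})) =
      volume (closedBall (0 : V) 1 ∩ {p : V | inner ℝ p x ≤ 0}) :=
      (Measure.measurePreserving_neg volume).measure_preimage
        (measurableSet_closedBall.inter (hH x)).nullMeasurableSet
    rw [two_mul]
    nth_rw 2 [(hB x hx).2]
    rw [← hneg, (hB x hx).2]
    refine (measure_mono ?_).trans (measure_union_le _ _)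
    intro p hp
    have hp' : ‖p‖ ≤ 1 := by simpa using hp
    rcases le_total (inner ℝ p x) 0 with h | h
    · left; exact ⟨hp, h⟩
    · right; simp [h, hp']
  have hex : ∃ x : V, ‖x‖ = R := by
    have : Nontrivial V := by
      apply Module.nontrivial_of_finrank_pos (R := ℝ)
      omega
    exact exists_norm_eq V hR.le
  obtain ⟨x0, hx0⟩ := hex
  refine ⟨volume (L 0 1), volume (L R r), ?_, ?_, ?_⟩
  · rw [(hB x0 hx0).2]
    exact measure_ne_top_of_subset inter_subset_left measure_closedBall_lt_top.ne
  · intro h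
    have := hball x0 hx0
    rw [h] at this
    have h2 := measure_closedBall_pos (volume : Measure V) 0 one_pos
    simp at this
    exact h2.ne' this
  · intro x hx
    refine ⟨?_, hball x hx, ?_⟩
    · intro W hW w0 w1 w2
      obtain ⟨Ψ, mp, p1, p2, p3, p4, p5⟩ := lens_iso (E := E) hd' x
      have key := lens_key_prod R r hR.le hr (Ψ ⁻¹' W) (mp.measurable hW) ?_ ?_ ?_ L hL
      · rw [← mp.measure_preimage (measurableSet_closedBall.inter hW).nullMeasurableSet,
          ← mp.measure_preimage (measurableSet_closedBall.inter hW).nullMeasurableSet]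
        have q0 : ∀ p, Ψ p ∈ W → 0 ≤ p.1 := by
          intro p hp
          have := w0 _ hp
          rw [p3, hx] at this
          by_contra h
          push Not at h
          nlinarith
        convert key using 3
        · ext p
          simp only [hL, mem_ofPred_eq, mem_preimage, mem_inter_iff, mem_closedBall, dist_eq_norm]
          rw [hpb _ r (by linarith) (norm_nonneg _), p1, hx]
          have := q0 p
          tauto
        · ext p
          simp only [hL, mem_ofPred_eq, mem_preimage, mem_inter_iff, mem_closedBall, dist_eq_norm, sub_zero]
          rw [hpb _ 1 (by linarith) (norm_nonneg _), p2]
          have := q0 p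
          simp only [add_zero]
          tauto
      · intro p hp
        have := w0 _ hp
        rw [p3, hx] at this
        by_contra h
        push Not at h
        nlinarith
      · intro p hp l hl
        change Ψ (l • p) ∈ W
        rw [p4]
        exact w1 _ hp l hl
      · intro p hp s hs
        have h5 := p5 p s
        rw [hx] at h5
        have : Ψ (p.1 + s, p.2) = Ψ p - (s / R) • x := by
          apply smul_right_injective V hR.ne'
          change R • _ = R • _
          rw [h5, smul_sub, smul_smul]
          congr 2
          field_simp
        change Ψ (p.1 + s, p.2) ∈ W
        rw [this]
        exact w2 _ hp _ (by positivity)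
    · set S := closedBall x r ∩ closedBall (-x) r with hS
      have hSm : MeasurableSet S := measurableSet_closedBall.inter measurableSet_closedBall
      have hsub : closedBall x r ∩ {p : V | inner ℝ p x ≤ 0} = S ∩ {p : V | inner ℝ p x ≤ 0} := by
        ext p
        simp only [hS, mem_inter_iff, mem_closedBall, dist_eq_norm, mem_ofPred_eq]
        constructor
        · rintro ⟨a, b⟩
          refine ⟨⟨a, ?_⟩, b⟩
          refine le_trans ?_ a
          rw [hpb _ _ (norm_nonneg _) (norm_nonneg _), sub_neg_eq_add, norm_add_sq_real, norm_sub_sq_real]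
          linarith
        · rintro ⟨⟨a, b⟩, c⟩
          exact ⟨a, c⟩
      rw [(hB x hx).1, hsub, ← measure_inter_add_sdiff S (hH x), two_mul]
      refine add_le_add le_rfl ?_
      have hHm : MeasurableSet {p : V | inner ℝ p x = 0} := measurableSet_eq_fun (by fun_prop) (by fun_prop)
      have hnull : volume {p : V | inner ℝ p x = 0} = 0 := by
        have h := Measure.addHaar_submodule (volume : Measure V) (Submodule.span ℝ {x})ᗮ (by
          intro h
          have : x ∈ (Submodule.span ℝ {x})ᗮ := by rw [h]; trivial
          rw [Submodule.mem_orthogonal_singleton_iff_inner_right, real_inner_self_eq_norm_sq, hx] at this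
          nlinarith)
        convert h using 2
        ext p
        simp [Submodule.mem_orthogonal_singleton_iff_inner_left]
      have hneg : volume (Neg.neg ⁻¹' (S \ {p : V | inner ℝ p x ≤ 0})) = volume (S \ {p : V | inner ℝ p x ≤ 0}) :=
        (Measure.measurePreserving_neg volume).measure_preimage (hSm.diff (hH x)).nullMeasurableSet
      rw [← hneg]
      have := measure_union_le (μ := volume) (Neg.neg ⁻¹' (S \ {p : V | inner ℝ p x ≤ 0})) {p : V | inner ℝ p x = 0}
      rw [hnull, add_zero] at this
      refine le_trans (measure_mono ?_) this
      rintro p ⟨⟨hp1, hp2⟩, hp3⟩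
      simp only [mem_closedBall, dist_eq_norm, mem_ofPred_eq] at hp1 hp2 hp3
      rcases hp3.lt_or_eq with h | h
      · left
        refine ⟨⟨?_, ?_⟩, ?_⟩
        · simp only [mem_closedBall, dist_eq_norm]
          have e : -p - x = -(p - -x) := by abel
          rw [e, norm_neg]; exact hp2
        · simp only [mem_closedBall, dist_eq_norm]
          have e : -p - -x = -(p - x) := by abel
          rw [e, norm_neg]; exact hp1
        · simpa using h
      · right; exact h

end transfer

lemma lens_hull_compact {V : Type*} [NormedAddCommGroup V] [InnerProductSpace ℝ V]
    [FiniteDimensional ℝ V] (s : Set V) (hs : IsCompact s) : IsCompact (convexHull ℝ s) := by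
  have key : convexHull ℝ s = ⋃ k ∈ Finset.range (Module.finrank ℝ V + 2),
      (fun q : (Fin k → ℝ) × (Fin k → V) => ∑ i, q.1 i • q.2 i) ''
        (stdSimplex ℝ (Fin k) ×ˢ (univ.pi fun _ => s)) := by
    apply Subset.antisymm
    · intro x hx
      obtain ⟨ι, _, z, w, hz, hind, hw, hw1, rfl⟩ := eq_pos_convex_span_of_mem_convexHull hx
      have hcard := hind.card_le_finrank_succ
      have hfr : Module.finrank ℝ (vectorSpan ℝ (range z)) ≤ Module.finrank ℝ V :=
        Submodule.finrank_le _
      simp only [mem_iUnion]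
      refine ⟨Fintype.card ι, Finset.mem_range.2 (by omega), ?_⟩
      let e := (Fintype.equivFin ι).symm
      refine ⟨(fun i => w (e i), fun i => z (e i)), ⟨⟨fun i => (hw _).le, ?_⟩, ?_⟩, ?_⟩
      · rw [← hw1]; exact e.sum_comp w
      · intro i _; exact hz ⟨_, rfl⟩
      · exact e.sum_comp (fun i => w i • z i)
    · intro x hx
      simp only [mem_iUnion] at hx
      obtain ⟨k, -, q, ⟨⟨h1, h2⟩, h3⟩, rfl⟩ := hx
      exact (convex_convexHull ℝ s).sum_mem (fun i _ => h1 i) h2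
        (fun i _ => subset_convexHull ℝ s (h3 i trivial))
  rw [key]
  refine Finset.isCompact_biUnion _ fun k _ => ?_
  refine IsCompact.image ?_ (by fun_prop)
  exact (isCompact_stdSimplex ℝ (Fin k)).prod (isCompact_univ_pi fun _ => hs)

section final
variable {V : Type*} [NormedAddCommGroup V] [InnerProductSpace ℝ V] [FiniteDimensional ℝ V]
  [MeasurableSpace V] [BorelSpace V]

lemma lens_finset (n : ℕ) (hd : Module.finrank ℝ V = n + 1) (hn : n ≠ 0)
    (R r : ℝ) (hR : 0 < R) (hr : R < r) (t : Finset V) (ht : ∀ x ∈ t, ‖x‖ = R)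
    (h0 : (0 : V) ∈ convexHull ℝ (t : Set V)) (c : V) (hc : ‖c‖ = R) :
    volume (⋂ x ∈ t, closedBall x r) ≤ volume (closedBall c r ∩ closedBall (-c) r) := by
  classical
  obtain ⟨A, B, hAt, hA0, hAB⟩ := lens_consts (V := V) n hd hn R r hR hr
  obtain ⟨-, hA, hB⟩ := hAB c hc
  set W : V → Set V := fun x => ⋂ y ∈ t.erase x, {u | inner ℝ u x < inner ℝ u y} with hW
  have memW : ∀ x u, u ∈ W x ↔ ∀ y ∈ t, y ≠ x → inner ℝ u x < inner ℝ u y := by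
    intro x u
    simp only [hW, mem_iInter, Finset.mem_erase, mem_ofPred_eq]
    exact ⟨fun h y hy hne => h y ⟨hne, hy⟩, fun h y hy => h y hy.2 hy.1⟩
  have Wm : ∀ x, MeasurableSet (W x) := by
    intro x
    refine Finset.measurableSet_biInter _ fun y _ => ?_
    exact measurableSet_lt (by fun_prop) (by fun_prop)
  have tne : t.Nonempty := by
    by_contra h
    rw [Finset.not_nonempty_iff_eq_empty] at h
    simp [h] at h0
  set N : Set V := ⋃ x ∈ t, ⋃ y ∈ t.erase x, {u | inner ℝ u (x - y) = 0} with hN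
  have hN0 : volume N = 0 := by
    refine (measure_biUnion_null_iff t.countable_toSet).2 ?_
    intro x hx
    refine (measure_biUnion_null_iff (t.erase x).countable_toSet).2 ?_
    intro y hy
    have hy := Finset.mem_erase.1 hy
    have hne : x - y ≠ 0 := sub_ne_zero.2 hy.1.symm
    have h := Measure.addHaar_submodule (volume : Measure V) (Submodule.span ℝ {x - y})ᗮ (by
      intro h
      have : x - y ∈ (Submodule.span ℝ {x - y})ᗮ := by rw [h]; trivial
      rw [Submodule.mem_orthogonal_singleton_iff_inner_right, inner_self_eq_zero] at this
      exact hne this)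
    convert h using 2
    ext p
    simp [Submodule.mem_orthogonal_singleton_iff_inner_left]
  have hcov : (⋂ x ∈ t, closedBall x r) ⊆ (⋃ x ∈ t, closedBall x r ∩ W x) ∪ N := by
    intro u hu
    by_cases huN : u ∈ N
    · right; exact huN
    left
    obtain ⟨x, hx, hmin⟩ := t.exists_min_image (fun x => inner ℝ u x) tne
    simp only [mem_iUnion, exists_prop]
    refine ⟨x, hx, ?_, ?_⟩
    · exact mem_iInter₂.1 hu x hx
    · rw [memW]
      intro y hy hyx
      refine lt_of_le_of_ne (hmin y hy) fun h => huN ?_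
      simp only [hN, mem_iUnion]
      refine ⟨x, hx, y, Finset.mem_erase.2 ⟨hyx, hy⟩, ?_⟩
      simp [inner_sub_right, h]
  have step : ∀ x ∈ t, volume (closedBall x r ∩ W x) * A ≤ volume (closedBall (0 : V) 1 ∩ W x) * B := by
    intro x hx
    refine (hAB x (ht x hx)).1 (W x) (Wm x) ?_ ?_ ?_
    · intro u hu
      rw [memW] at hu
      by_contra hpos
      push Not at hpos
      have : convexHull ℝ (t : Set V) ⊆ {y | 0 < inner ℝ u y} := by
        apply convexHull_min
        · intro y hy
          by_cases hyx : y = x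
          · subst hyx; exact hpos
          · exact hpos.trans (hu y hy hyx)
        · exact convex_halfSpace_gt (innerₛₗ ℝ u).isLinear 0
      have := this h0
      simp at this
    · intro u hu l hl
      rw [memW] at hu ⊢
      intro y hy hyx
      rw [real_inner_smul_left, real_inner_smul_left]
      exact mul_lt_mul_of_pos_left (hu y hy hyx) hl
    · intro u hu s hs
      rw [memW] at hu ⊢
      intro y hy hyx
      have h1 := hu y hy hyx
      have h2 : inner ℝ x y ≤ R ^ 2 := by
        have := real_inner_le_norm x y
        rw [ht x hx, ht y hy] at this
        nlinarith
      rw [inner_sub_left, inner_sub_left, real_inner_smul_left, real_inner_smul_left,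
        real_inner_self_eq_norm_sq, ht x hx]
      nlinarith
  have hsum : ∑ x ∈ t, volume (closedBall (0 : V) 1 ∩ W x) ≤ volume (closedBall (0 : V) 1) := by
    rw [← measure_biUnion_finset]
    · apply measure_mono
      intro u hu
      simp only [mem_iUnion] at hu
      obtain ⟨x, hx, h, -⟩ := hu
      exact h
    · intro x hx y hy hxy
      apply Disjoint.mono inter_subset_right inter_subset_right
      rw [Set.disjoint_left]
      intro u h1 h2
      rw [memW] at h1 h2
      exact lt_asymm (h1 y hy hxy.symm) (h2 x hx hxy)
    · intro x _
      exact measurableSet_closedBall.inter (Wm x)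
  have hK : volume (⋂ x ∈ t, closedBall x r) ≤ ∑ x ∈ t, volume (closedBall x r ∩ W x) := by
    refine (measure_mono hcov).trans ((measure_union_le _ _).trans ?_)
    rw [hN0, add_zero]
    exact measure_biUnion_finset_le _ _
  have fin : volume (⋂ x ∈ t, closedBall x r) * A ≤ (2 * B) * A := by
    calc _ ≤ (∑ x ∈ t, volume (closedBall x r ∩ W x)) * A := by gcongr
      _ = ∑ x ∈ t, volume (closedBall x r ∩ W x) * A := by rw [Finset.sum_mul]
      _ ≤ ∑ x ∈ t, volume (closedBall (0 : V) 1 ∩ W x) * B := Finset.sum_le_sum step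
      _ = (∑ x ∈ t, volume (closedBall (0 : V) 1 ∩ W x)) * B := by rw [Finset.sum_mul]
      _ ≤ (2 * A) * B := by gcongr; exact hsum.trans hA
      _ = _ := by ring
  exact ((ENNReal.mul_le_mul_iff_left hA0 hAt).1 fin).trans hB

lemma lens_circum (Y : Set V) (hY : IsCompact Y) (R : ℝ) (hR : 0 < R) (hb : ∀ y ∈ Y, ‖y‖ ≤ R)
    (hmax : ∀ (o : V) (R' : ℝ), (∀ y ∈ Y, ‖y - o‖ ≤ R') → R ≤ R') :
    (0 : V) ∈ convexHull ℝ (Y ∩ sphere 0 R) := by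
  by_contra h0
  have hcpt : IsCompact (Y ∩ sphere 0 R) := hY.inter_right isClosed_sphere
  obtain ⟨f, δ, hf0, hf⟩ := geometric_hahn_banach_point_closed (convex_convexHull ℝ _)
    (lens_hull_compact _ hcpt).isClosed h0
  rw [map_zero] at hf0
  set w := (InnerProductSpace.toDual ℝ V).symm f with hw
  have hwf : ∀ y, f y = inner ℝ w y := by
    intro y; rw [hw, InnerProductSpace.toDual_symm_apply]
  have hX1 : IsCompact (Y ∩ {y | inner ℝ w y ≤ δ / 2}) :=
    hY.inter_right (isClosed_le (by fun_prop) (by fun_prop))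
  obtain ⟨R1, hR1, hR1b⟩ : ∃ R1 < R, ∀ y ∈ Y, inner ℝ w y ≤ δ / 2 → ‖y‖ ≤ R1 := by
    rcases (Y ∩ {y | inner ℝ w y ≤ δ / 2}).eq_empty_or_nonempty with he | hne
    · refine ⟨R - 1, by linarith, fun y hy hy2 => ?_⟩
      have : y ∈ Y ∩ {y | inner ℝ w y ≤ δ / 2} := ⟨hy, hy2⟩
      rw [he] at this
      exact this.elim
    · obtain ⟨z, hz, hzm⟩ := hX1.exists_isMaxOn hne continuous_norm.continuousOn
      refine ⟨‖z‖, lt_of_le_of_ne (hb z hz.1) fun h => ?_, fun y hy hy2 => hzm ⟨hy, hy2⟩⟩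
      have h1 := hf z (subset_convexHull ℝ _ ⟨hz.1, by simpa using h⟩)
      have h2 : inner ℝ w z ≤ δ / 2 := hz.2
      rw [hwf] at h1
      linarith
  obtain ⟨ε, hε, e1, e2⟩ : ∃ ε : ℝ, 0 < ε ∧ ε * ‖w‖ < R - R1 ∧ ε * ‖w‖ ^ 2 < δ := by
    have t1 : ∀ a b : ℝ, 0 ≤ a → 0 < b → b / (a + 1) * a < b := by
      intro a b ha hb
      rw [div_mul_eq_mul_div, div_lt_iff₀ (by linarith)]
      nlinarith
    have p1 : 0 < R - R1 := by linarith
    refine ⟨min ((R - R1) / (‖w‖ + 1)) (δ / (‖w‖ ^ 2 + 1)), by positivity, ?_, ?_⟩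
    · exact lt_of_le_of_lt (mul_le_mul_of_nonneg_right (min_le_left _ _) (by positivity))
        (t1 _ _ (by positivity) p1)
    · exact lt_of_le_of_lt (mul_le_mul_of_nonneg_right (min_le_right _ _) (by positivity))
        (t1 _ _ (by positivity) hf0)
  have hlt : max (R1 + ε * ‖w‖) (√(R ^ 2 - ε * δ + ε ^ 2 * ‖w‖ ^ 2)) < R := by
    apply max_lt (by linarith)
    rw [Real.sqrt_lt' hR]
    nlinarith
  refine absurd (hmax (ε • w) _ fun y hy => ?_) (not_le.2 hlt)
  by_cases hy2 : inner ℝ w y ≤ δ / 2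
  · apply le_max_of_le_left
    refine (norm_sub_le _ _).trans ?_
    rw [norm_smul, Real.norm_of_nonneg hε.le]
    linarith [hR1b y hy hy2]
  · push Not at hy2
    apply le_max_of_le_right
    apply Real.le_sqrt_of_sq_le
    rw [norm_sub_sq_real, norm_smul, real_inner_smul_right, Real.norm_of_nonneg hε.le, real_inner_comm]
    have := hb y hy
    have : ‖y‖ ^ 2 ≤ R ^ 2 := by gcongr
    nlinarith

end final

/-- Among r-ball bodies of given inradius ρ ≤ r, the r-lense of inradius ρ has
maximal volume. -/
theorem volume_ballBody_le_lense_of_inradius (r ρ : ℝ) (hr : 0 < r) (hρ : 0 < ρ)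
    (hρr : ρ ≤ r) (K X : Set (EuclideanSpace ℝ (Fin d)))
    (hXne : X.Nonempty) (hXcpt : IsCompact X) (hK : K = ballBody r X)
    (hKne : K.Nonempty)
    (hin : IsGreatest {t : ℝ | ∃ c : EuclideanSpace ℝ (Fin d), closedBall c t ⊆ K} ρ)
    (c : EuclideanSpace ℝ (Fin d)) (hc : ‖c‖ = r - ρ) :
    volume K ≤ volume (closedBall c r ∩ closedBall (-c) r) := by
  have hKx : ∀ x ∈ X, K ⊆ closedBall x r := by
    intro x hx u hu
    rw [hK] at hu
    exact mem_iInter₂.1 hu x hx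
  rcases hρr.eq_or_lt with hR0 | hRlt
  · have hc0 : c = 0 := by rw [← norm_eq_zero, hc, hR0, sub_self]
    obtain ⟨x, hx⟩ := hXne
    refine (measure_mono (hKx x hx)).trans ?_
    rw [hc0, neg_zero, inter_self, Measure.addHaar_closedBall_center]
  have hR : 0 < r - ρ := by linarith
  set R := r - ρ with hRdef
  obtain ⟨⟨o, ho⟩, hgr⟩ := hin
  have hXo : ∀ x ∈ X, ‖x - o‖ ≤ R := by
    intro x hx
    by_cases hxo : x = o
    · simp [hxo, hR.le]
    have hpos : 0 < ‖x - o‖ := norm_pos_iff.2 (sub_ne_zero.2 hxo)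
    have h1 : o - (ρ / ‖x - o‖) • (x - o) ∈ closedBall o ρ := by
      simp only [mem_closedBall, dist_eq_norm, sub_sub_cancel_left, norm_neg, norm_smul, norm_div, norm_norm]
      rw [div_mul_cancel₀ _ hpos.ne', Real.norm_of_nonneg hρ.le]
    have h2 := hKx x hx (ho h1)
    rw [mem_closedBall, dist_eq_norm, ← norm_neg] at h2
    have h3 : -(o - (ρ / ‖x - o‖) • (x - o) - x) = (1 + ρ / ‖x - o‖) • (x - o) := by module
    rw [h3, norm_smul, Real.norm_of_nonneg (by positivity)] at h2
    have : (1 + ρ / ‖x - o‖) * ‖x - o‖ = ‖x - o‖ + ρ := by field_simp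
    linarith
  have hcirc := lens_circum ((fun x => x - o) '' X) (hXcpt.image (by fun_prop)) R hR (by
      rintro _ ⟨x, hx, rfl⟩; exact hXo x hx) (by
      intro o' R' h
      have : r - R' ≤ ρ := by
        apply hgr
        refine ⟨o + o', ?_⟩
        rw [hK]
        apply subset_iInter₂
        intro x hx
        apply closedBall_subset_closedBall'
        have := h _ ⟨x, hx, rfl⟩
        rw [dist_comm, dist_eq_norm, ← sub_sub]
        simp only at this
        linarith
      linarith)
  rw [convexHull_eq_union_convexHull_finite_subsets] at hcirc
  simp only [mem_iUnion] at hcirc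
  obtain ⟨t, hts, ht0⟩ := hcirc
  have htn : ∀ x ∈ t, ‖x‖ = R := fun x hx => by simpa using (hts hx).2
  have hvol : volume K ≤ volume (⋂ x ∈ t, closedBall x r) := by
    rw [← measure_preimage_add_right volume o K]
    apply measure_mono
    intro u hu
    apply mem_iInter₂.2
    intro y hy
    obtain ⟨⟨x, hx, rfl⟩, -⟩ := hts hy
    have := hKx x hx hu
    rw [mem_closedBall, dist_eq_norm] at this ⊢
    convert this using 2
    change u - (x - o) = u + o - x
    abel
  refine hvol.trans ?_
  match d, c, hc, t, ht0, htn with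
  | 0, c, hc, t, ht0, htn =>
    have : c = 0 := Subsingleton.elim _ _
    rw [this, norm_zero] at hc
    linarith
  | 1, c, hc, t, ht0, htn =>
    have hpm : ∀ x ∈ t, x = c ∨ x = -c := by
      intro x hx
      have h1 : |x 0| = |c 0| := by
        have := (htn x hx).trans hc.symm
        simpa [EuclideanSpace.norm_eq, Real.sqrt_sq_eq_abs] using this
      rcases abs_eq_abs.1 h1 with h | h
      · left; ext i; fin_cases i; exact h
      · right; ext i; fin_cases i; exact h
    have hc0 : c ≠ 0 := by
      rintro rfl
      rw [norm_zero] at hc; linarith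
    have aux : ∀ a : EuclideanSpace ℝ (Fin 1), a ≠ 0 → ∃ x ∈ t, x ≠ a := by
      intro a ha
      by_contra h
      push Not at h
      have : convexHull ℝ (t : Set (EuclideanSpace ℝ (Fin 1))) ⊆ {a} :=
        convexHull_min (fun x hx => h x hx) (convex_singleton a)
      exact ha (this ht0).symm
    apply measure_mono
    intro u hu
    have hu := mem_iInter₂.1 hu
    constructor
    · obtain ⟨x, hx, hne⟩ := aux (-c) (neg_ne_zero.2 hc0)
      rw [← (hpm x hx).resolve_right hne]
      exact hu x hx
    · obtain ⟨x, hx, hne⟩ := aux c hc0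
      rw [← (hpm x hx).resolve_left hne]
      exact hu x hx
  | n + 2, c, hc, t, ht0, htn =>
    exact lens_finset (n + 1) (by simp) (by omega) R r hR (by linarith) t htn ht0 c hc
end

section
/- Let B be a ball of radius r > 0 in ℝ^d (d > 1), and let C₁,…,C_n be r_i-ball bodies with r_i ≤ r such that B ⊆ C₁ ∪ ⋯ ∪ C_n. Then r ≤ Σ_{i=1}^n r_in(C_i ∩ B), where r_in denotes inradius. -/
open Metric Set MeasureTheory Pointwise RealInnerProductSpace

variable {d : ℕ}

/-- The inradius of a subset of Euclidean space. -/
noncomputable def inrad (K : Set (EuclideanSpace ℝ (Fin d))) : ℝ :=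
  sSup {t : ℝ | 0 ≤ t ∧ ∃ c : EuclideanSpace ℝ (Fin d), closedBall c t ⊆ K}


lemma kt_discrete (a : ℕ → ℝ) (n : ℕ) (hn : a n = 0)
    (hc : ∀ k, 2 * a (k+1) ≤ a k + a (k+2)) (k : ℕ) (hk : k ≤ n) :
    n * a k ≤ (n - k) * a 0 := by
  have hmono : ∀ k m, a (k+m) - a (k+m+1) ≤ a k - a (k+1) := by
    intro k m
    induction m with
    | zero => simp
    | succ m ih =>
      have := hc (k+m)
      have e1 : k + (m+1) = k+m+1 := by ring
      rw [e1]
      have e2 : k + m + 1 + 1 = k+m+2 := by ring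
      rw [e2]
      linarith
  have h1 : ∀ k m, a k - a (k+m) ≤ m * (a k - a (k+1)) := by
    intro k m
    induction m with
    | zero => simp
    | succ m ih =>
      have := hmono k m
      rw [← add_assoc]
      push_cast
      linarith
  have h2 : ∀ k : ℕ, k * (a k - a (k+1)) ≤ a 0 - a k := by
    intro k
    induction k with
    | zero => simp
    | succ k ih =>
      have := hc k
      have h3 : a (k+1) - a (k+1+1) ≤ a k - a (k+1) := by
        rw [show k+1+1 = k+2 by ring]; linarith
      have h4 : ((k:ℝ)+1) * (a (k+1) - a (k+1+1)) ≤ (k+1) * (a k - a (k+1)) :=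
        mul_le_mul_of_nonneg_left h3 (by positivity)
      push_cast
      linarith
  obtain ⟨m, rfl⟩ := Nat.exists_eq_add_of_le hk
  have h3 := h1 k m
  have h4 := h2 k
  rw [hn] at h3
  have h5 : (k:ℝ) * (a k - 0) ≤ k * (m * (a k - a (k+1))) :=
    mul_le_mul_of_nonneg_left h3 (by positivity)
  have h6 : (m:ℝ) * (k * (a k - a (k+1))) ≤ m * (a 0 - a k) :=
    mul_le_mul_of_nonneg_left h4 (by positivity)
  push_cast
  nlinarith

lemma kt_cone {d : ℕ} (hd : 1 < d) (r : ℝ) (hr : 0 < r) (u : EuclideanSpace ℝ (Fin d))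
    (hu : ‖u‖ = 1) (W : Set (EuclideanSpace ℝ (Fin d))) (hW : MeasurableSet W)
    (hup : ∀ y ∈ W, ∀ t : ℝ, 0 ≤ t → y + t • u ∈ W)
    (hpos : ∀ y ∈ W, 0 ≤ ⟪u, y⟫) (t : ℝ) (ht0 : 0 ≤ t) (htr : t ≤ r) :
    r * volume.real {y | y ∈ W ∧ ‖y + t • u‖ ≤ r} ≤
      (r - t) * volume.real (W ∩ closedBall 0 r) := by
  set A : ℝ → Set (EuclideanSpace ℝ (Fin d)) := fun t => {y | y ∈ W ∧ ‖y + t • u‖ ≤ r} with hA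
  have hnsq : ∀ (y : EuclideanSpace ℝ (Fin d)) (t : ℝ),
      ‖y + t • u‖ ^ 2 = ‖y‖ ^ 2 + 2 * t * ⟪u, y⟫ + t ^ 2 := by
    intro y t
    rw [norm_add_sq_real, inner_smul_right, norm_smul, hu, real_inner_comm]
    simp
    ring
  have hAm : ∀ t, MeasurableSet (A t) := by
    intro t
    have : IsClosed {y : EuclideanSpace ℝ (Fin d) | ‖y + t • u‖ ≤ r} :=
      isClosed_le (by fun_prop) continuous_const
    exact hW.inter this.measurableSet
  have hA0 : A 0 = W ∩ closedBall 0 r := by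
    ext y; simp [hA]
  have hsub : ∀ s t, 0 ≤ s → s ≤ t → A t ⊆ A s := by
    rintro s t hs hst y ⟨hy, hy'⟩
    refine ⟨hy, ?_⟩
    refine le_trans ?_ hy'
    apply (sq_le_sq₀ (norm_nonneg _) (norm_nonneg _)).1
    rw [hnsq, hnsq]
    have h1 := hpos y hy
    have h2 : s * ⟪u, y⟫ ≤ t * ⟪u, y⟫ := mul_le_mul_of_nonneg_right hst h1
    nlinarith
  have hfin : ∀ t, volume (A t) ≠ ⊤ := by
    intro t
    refine ne_top_of_le_ne_top (measure_closedBall_lt_top (x := -(t • u)) (r := r)).ne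
      (measure_mono ?_)
    rintro y ⟨_, hy⟩
    simpa [dist_eq_norm] using hy
  have hdiff : ∀ s t, 0 ≤ s → s ≤ t →
      volume.real (A s \ A t) = volume.real (A s) - volume.real (A t) := by
    intro s t hs hst
    exact measureReal_sdiff (hsub s t hs hst) (hAm t) (hfin s)
  have hconv : ∀ s h, 0 ≤ s → 0 ≤ h → 2 * volume.real (A (s+h)) ≤
      volume.real (A s) + volume.real (A (s+2*h)) := by
    intro s h hs hh
    have e1 := hdiff s (s+h) hs (by linarith)
    have e2 := hdiff (s+h) (s+2*h) (by linarith) (by linarith)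
    have : volume.real (A (s+h) \ A (s+2*h)) ≤ volume.real (A s \ A (s+h)) := by
      have e3 : volume.real ((fun y => y + h • u) ⁻¹' (A s \ A (s+h)))
          = volume.real (A s \ A (s+h)) := by
        simp only [Measure.real, measure_preimage_add_right]
      rw [← e3]
      apply measureReal_mono
      · rintro y ⟨⟨hy1, hy2⟩, hy3⟩
        refine ⟨⟨hup y hy1 h hh, ?_⟩, ?_⟩
        · rw [add_smul] at hy2
          rwa [add_assoc, add_comm (h • u)]
        · rintro ⟨-, h5⟩
          apply hy3
          refine ⟨hy1, ?_⟩
          convert h5 using 2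
          module
      · rw [measure_preimage_add_right]
        exact ne_top_of_le_ne_top (hfin s) (measure_mono sdiff_subset)
    linarith
  have hAr : volume.real (A r) = 0 := by
    have hsub0 : A r ⊆ {0} := by
      rintro y ⟨hy1, hy2⟩
      have h1 := hnsq y r
      have h2 := hpos y hy1
      have h3 : ‖y + r • u‖ ^ 2 ≤ r ^ 2 := by gcongr
      have h4 : ‖y‖ ^ 2 ≤ 0 := by nlinarith [mul_nonneg hr.le h2]
      have : ‖y‖ = 0 := by nlinarith [norm_nonneg y]
      simpa using this
    have : Nonempty (Fin d) := ⟨⟨0, by omega⟩⟩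
    have h0 : volume ({0} : Set (EuclideanSpace ℝ (Fin d))) = 0 := measure_singleton 0
    simp [Measure.real, measure_mono_null hsub0 h0]
  rw [← hA0]
  change r * volume.real (A t) ≤ (r - t) * volume.real (A 0)
  have key : ∀ n : ℕ, (r * volume.real (A t) - (r - t) * volume.real (A 0)) * ((n:ℝ)+1) ≤
      r * volume.real (A 0) := by
    intro n
    set N : ℝ := (n:ℝ) + 1 with hN
    have hNp : 0 < N := by positivity
    set h := r / N with hh
    have hhp : 0 < h := by positivity
    have hhN : h * N = r := by rw [hh]; field_simp
    have hk := kt_discrete (fun k => volume.real (A (k * h))) (n+1)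
      (by
        have : ((n+1 : ℕ):ℝ) * h = r := by push_cast; rw [mul_comm]; exact hhN
        rw [this]; exact hAr)
      (by
        intro k
        have := hconv (k*h) h (by positivity) hhp.le
        convert this using 4 <;> push_cast <;> ring_nf)
      ⌊t / h⌋₊ (by
        have h1 : t / h ≤ ((n+1 : ℕ) : ℝ) := by
          rw [div_le_iff₀ hhp]; push_cast; rw [mul_comm]; linarith
        exact_mod_cast (Nat.floor_le (by positivity)).trans h1)
    set k := ⌊t / h⌋₊
    have hk1 : (k:ℝ) * h ≤ t := by
      rw [← le_div_iff₀ hhp]; exact Nat.floor_le (by positivity)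
    have hk2 : t < (k+1) * h := by
      rw [← div_lt_iff₀ hhp]; exact Nat.lt_floor_add_one _
    have hm : volume.real (A t) ≤ volume.real (A (k*h)) :=
      measureReal_mono (hsub _ _ (by positivity) hk1) (hfin _)
    simp only [Nat.cast_zero, zero_mul] at hk
    push_cast at hk
    rw [← hN] at hk
    have ha0 : 0 ≤ volume.real (A 0) := measureReal_nonneg
    have h1 : N * volume.real (A t) ≤ (N - k) * volume.real (A 0) :=
      (mul_le_mul_of_nonneg_left hm hNp.le).trans hk
    have h2 : r * (N * volume.real (A t)) ≤ r * ((N - k) * volume.real (A 0)) :=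
      mul_le_mul_of_nonneg_left h1 hr.le
    have h3 : t * N ≤ (k+1) * r := by
      rw [← hhN]; nlinarith
    have h4 := mul_le_mul_of_nonneg_right h3 ha0
    nlinarith
  by_contra hcon
  push Not at hcon
  have hpos' : 0 < r * volume.real (A t) - (r - t) * volume.real (A 0) := by linarith
  obtain ⟨n, hn⟩ := exists_nat_gt (r * volume.real (A 0) /
    (r * volume.real (A t) - (r - t) * volume.real (A 0)))
  rw [div_lt_iff₀ hpos'] at hn
  have := key n
  nlinarith

/-- finitely many vectors of equal norm which positively span. -/
lemma kt_fin {d : ℕ} (hd : 1 < d) (r : ℝ) (hr : 0 < r) (m : ℕ)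
    (p : Fin m → EuclideanSpace ℝ (Fin d)) (s : ℝ) (hs : 0 < s) (hsr : s ≤ r)
    (hp : ∀ j, ‖p j‖ = s) (hspan : ∀ y, ∃ j, 0 ≤ ⟪p j, y⟫) :
    r * volume.real {y : EuclideanSpace ℝ (Fin d) | ∀ j, ‖y + p j‖ ≤ r} ≤
      (r - s) * volume.real (closedBall (0 : EuclideanSpace ℝ (Fin d)) r) := by
  set W : Fin m → Set (EuclideanSpace ℝ (Fin d)) := fun j =>
    {y | ∀ k, ⟪p k, y⟫ ≤ ⟪p j, y⟫ ∧ (k < j → ⟪p k, y⟫ < ⟪p j, y⟫)} with hWdef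
  have hWm : ∀ j, MeasurableSet (W j) := by
    intro j
    simp only [hWdef, Set.ofPred_forall, Set.ofPred_and]
    refine MeasurableSet.iInter fun k => MeasurableSet.inter ?_ ?_
    · exact (isClosed_le (by fun_prop) (by fun_prop)).measurableSet
    · by_cases hkj : k < j
      · exact MeasurableSet.iInter fun _ =>
          (isOpen_lt (by fun_prop) (by fun_prop)).measurableSet
      · simp [hkj]
  have hcov : ∀ y, ∃ j, y ∈ W j := by
    intro y
    obtain ⟨j0, _⟩ := hspan y
    have : Nonempty (Fin m) := ⟨j0⟩
    obtain ⟨j1, hj1⟩ := Finite.exists_max (fun j => ⟪p j, y⟫)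
    obtain ⟨j, hj, hmin⟩ := (Set.toFinite {j | ∀ k, ⟪p k, y⟫ ≤ ⟪p j, y⟫}).exists_minimal ⟨j1, hj1⟩
    refine ⟨j, fun k => ⟨hj k, fun hkj => ?_⟩⟩
    by_contra hcon
    push Not at hcon
    have := hmin (y := k) (fun l => (hj l).trans hcon) hkj.le
    exact absurd hkj (not_lt.mpr this)
  have hdisj : Pairwise (fun i j => Disjoint (W i) (W j)) := by
    intro i j hij
    rw [Set.disjoint_left]
    intro y hi hj
    rcases lt_or_gt_of_ne hij with h | h
    · have := (hj i).2 h
      have := (hi j).1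
      linarith
    · have := (hi j).2 h
      have := (hj i).1
      linarith
  have hcone : ∀ j, r * volume.real {y | y ∈ W j ∧ ‖y + p j‖ ≤ r} ≤
      (r - s) * volume.real (W j ∩ closedBall 0 r) := by
    intro j
    have := kt_cone hd r hr (s⁻¹ • p j) (by rw [norm_smul, hp]; simp [abs_of_pos hs, hs.ne'])
      (W j) (hWm j) ?_ ?_ s hs.le hsr
    · simpa only [smul_smul, mul_inv_cancel₀ hs.ne', one_smul] using this
    · intro y hy t ht k
      rw [smul_smul]
      simp only [inner_add_right, inner_smul_right]
      have h1 : ⟪p k, p j⟫ ≤ ⟪p j, p j⟫ := by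
        refine (real_inner_le_norm _ _).trans ?_
        rw [real_inner_self_eq_norm_sq, hp, hp, sq]
      have h2 : t * s⁻¹ * ⟪p k, p j⟫ ≤ t * s⁻¹ * ⟪p j, p j⟫ :=
        mul_le_mul_of_nonneg_left h1 (by positivity)
      exact ⟨add_le_add (hy k).1 h2, fun h => add_lt_add_of_lt_of_le ((hy k).2 h) h2⟩
    · intro y hy
      obtain ⟨k, hk⟩ := hspan y
      rw [real_inner_smul_left]
      have := (hy k).1
      have : 0 ≤ ⟪p j, y⟫ := hk.trans this
      positivity
  set K := {y : EuclideanSpace ℝ (Fin d) | ∀ j, ‖y + p j‖ ≤ r} with hK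
  have hBfin : volume (closedBall (0 : EuclideanSpace ℝ (Fin d)) r) ≠ ⊤ :=
    measure_closedBall_lt_top.ne
  have h1 : volume.real K ≤ ∑ j, volume.real {y | y ∈ W j ∧ ‖y + p j‖ ≤ r} := by
    refine (measureReal_mono (s₂ := ⋃ j, {y | y ∈ W j ∧ ‖y + p j‖ ≤ r}) ?_ ?_).trans
      (measureReal_iUnion_fintype_le _)
    · intro y hy
      obtain ⟨j, hj⟩ := hcov y
      exact mem_iUnion.2 ⟨j, hj, hy j⟩
    · refine ((measure_iUnion_fintype_le _ _).trans_lt ?_).ne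
      refine ENNReal.sum_lt_top.2 fun j _ => ?_
      refine lt_of_le_of_lt (measure_mono ?_) (measure_closedBall_lt_top (x := -(p j)) (r := r))
      rintro y ⟨_, hy⟩
      simpa [dist_eq_norm] using hy
  have h2 : ∑ j, volume.real (W j ∩ closedBall 0 r) =
      volume.real (closedBall (0 : EuclideanSpace ℝ (Fin d)) r) := by
    rw [← measureReal_iUnion_fintype]
    · congr 1
      ext y
      simp only [mem_iUnion, mem_inter_iff]
      exact ⟨fun ⟨_, h⟩ => h.2, fun h => (hcov y).imp fun j hj => ⟨hj, h⟩⟩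
    · intro i j hij
      exact (hdisj hij).mono inter_subset_left inter_subset_left
    · intro j
      exact (hWm j).inter isClosed_closedBall.measurableSet
  calc r * volume.real K ≤ r * ∑ j, volume.real {y | y ∈ W j ∧ ‖y + p j‖ ≤ r} := by gcongr
    _ = ∑ j, r * volume.real {y | y ∈ W j ∧ ‖y + p j‖ ≤ r} := Finset.mul_sum _ _ _
    _ ≤ ∑ j, (r - s) * volume.real (W j ∩ closedBall 0 r) := Finset.sum_le_sum fun j _ => hcone j
    _ = _ := by rw [← Finset.mul_sum, h2]

/-- circumcenter of a finite set -/
lemma kt_circ {d : ℕ} (hd : 1 < d) (Y : Finset (EuclideanSpace ℝ (Fin d))) (hY : Y.Nonempty) :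
    ∃ (c : EuclideanSpace ℝ (Fin d)) (s : ℝ), (∀ x ∈ Y, dist c x ≤ s) ∧
      (∀ c', ∃ x ∈ Y, s ≤ dist c' x) ∧
      (∀ y, ∃ x ∈ Y, dist c x = s ∧ 0 ≤ ⟪c - x, y⟫) := by
  set f : EuclideanSpace ℝ (Fin d) → ℝ := fun c => Y.sup' hY (fun x => dist c x) with hf
  have hfc : Continuous f := by
    apply Continuous.finset_sup'_apply
    intro x _
    fun_prop
  obtain ⟨x0, hx0⟩ := hY
  have hlim : Filter.Tendsto f (Filter.cocompact _) Filter.atTop := by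
    refine Filter.tendsto_atTop_mono (fun c => ?_) (tendsto_dist_right_cocompact_atTop x0)
    exact Finset.le_sup' (fun x => dist c x) hx0
  obtain ⟨c, hc⟩ := hfc.exists_forall_le hlim
  have hle : ∀ x ∈ Y, dist c x ≤ f c := fun x hx => Finset.le_sup' (fun x => dist c x) hx
  have hmin : ∀ c', ∃ x ∈ Y, f c ≤ dist c' x := by
    intro c'
    have := hc c'
    exact (Finset.le_sup'_iff _).1 this
  refine ⟨c, f c, hle, hmin, ?_⟩
  intro y
  by_contra hcon
  push Not at hcon
  have hev : ∀ x ∈ Y, ∀ᶠ t : ℝ in nhdsWithin 0 (Ioi 0), dist (c + t • y) x < f c := by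
    intro x hx
    rcases (hle x hx).lt_or_eq with hlt | heq
    · have hcont : Continuous fun t : ℝ => dist (c + t • y) x := by fun_prop
      have h0 : dist (c + (0:ℝ) • y) x < f c := by simpa using hlt
      exact (hcont.continuousAt.eventually_lt continuousAt_const h0).filter_mono
        nhdsWithin_le_nhds
    · have hin : ⟪c - x, y⟫ < 0 := hcon x hx heq
      have hcont : Continuous fun t : ℝ => 2 * ⟪c - x, y⟫ + t * ‖y‖ ^ 2 := by fun_prop
      have h0 : 2 * ⟪c - x, y⟫ + (0:ℝ) * ‖y‖ ^ 2 < 0 := by linarith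
      have h1 := (hcont.continuousAt.eventually_lt continuousAt_const h0).filter_mono
        (nhdsWithin_le_nhds (s := Ioi (0:ℝ)))
      filter_upwards [h1, self_mem_nhdsWithin] with t ht htpos
      have htpos' : 0 < t := htpos
      rw [← heq, dist_eq_norm, dist_eq_norm]
      apply (sq_lt_sq₀ (norm_nonneg _) (norm_nonneg _)).1
      rw [show c + t • y - x = (c - x) + t • y by abel, norm_add_sq_real, inner_smul_right,
        norm_smul, mul_pow, Real.norm_eq_abs, sq_abs]
      nlinarith [mul_neg_of_pos_of_neg htpos' ht]
  have hev' := (Filter.eventually_all_finset Y).2 hev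
  obtain ⟨t, ht⟩ := hev'.exists
  obtain ⟨x, hx, h⟩ := hmin (c + t • y)
  exact absurd (ht x hx) (not_lt.mpr h)

lemma kt_body {d : ℕ} (hd : 1 < d) (r : ℝ) (hr : 0 < r) (Y : Set (EuclideanSpace ℝ (Fin d)))
    (hY : Y.Nonempty) (ρ : ℝ) (hρ0 : 0 ≤ ρ)
    (hρ : ∀ c t, 0 ≤ t → closedBall c t ⊆ (⋂ x ∈ Y, closedBall x r) → t ≤ ρ) :
    r * volume.real (⋂ x ∈ Y, closedBall x r) ≤
      ρ * volume.real (closedBall (0 : EuclideanSpace ℝ (Fin d)) r) := by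
  set K := ⋂ x ∈ Y, closedBall x r with hK
  set V := volume.real (closedBall (0 : EuclideanSpace ℝ (Fin d)) r) with hV
  have hV0 : 0 ≤ V := measureReal_nonneg
  rcases K.eq_empty_or_nonempty with hKe | ⟨q, hq⟩
  · rw [hKe]; simp; positivity
  have hqY : ∀ x ∈ Y, dist q x ≤ r := fun x hx => by
    have := mem_iInter₂.1 hq x hx
    exact this
  have hYb : Y ⊆ closedBall q r := fun x hx => by
    rw [mem_closedBall, dist_comm]; exact hqY x hx
  have htb : TotallyBounded Y := (isCompact_closedBall q r).totallyBounded.subset hYb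
  have key : ∀ ε > 0, r * volume.real K ≤ (ρ + ε) * V := by
    intro ε hε
    obtain ⟨F, hFY, hFfin, hFcov⟩ := Metric.finite_approx_of_totallyBounded htb ε hε
    have hFne : F.Nonempty := by
      obtain ⟨x, hx⟩ := hY
      obtain ⟨z, hz, _⟩ := mem_iUnion₂.1 (hFcov hx)
      exact ⟨z, hz⟩
    obtain ⟨c, s, hcs, hmin, hcon⟩ := kt_circ hd hFfin.toFinset (by simpa using hFne)
    simp only [Set.Finite.mem_toFinset] at hcs hmin hcon
    have hs0 : 0 ≤ s := by
      obtain ⟨x, hx⟩ := hFne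
      exact dist_nonneg.trans (hcs x hx)
    have hsr : s ≤ r := by
      obtain ⟨x, hx, h⟩ := hmin q
      exact h.trans (hqY x (hFY hx))
    have hin : r - s ≤ ρ + ε := by
      by_cases hneg : r - s - ε < 0
      · linarith
      · push Not at hneg
        have := hρ c (r - s - ε) hneg ?_
        · linarith
        · intro z hz
          refine mem_iInter₂.2 fun x hx => ?_
          obtain ⟨w, hw, hxw⟩ := mem_iUnion₂.1 (hFcov hx)
          have h1 := hcs w hw
          rw [mem_ball] at hxw
          rw [mem_closedBall] at hz ⊢
          have h2 := dist_triangle z c x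
          have h3 := dist_triangle c w x
          rw [dist_comm w x] at h3
          linarith
    have hvol : r * volume.real K ≤ (r - s) * V := by
      rcases hs0.eq_or_lt with h0 | hspos
      · rw [← h0, sub_zero]
        obtain ⟨x, hx⟩ := hY
        have : volume.real K ≤ volume.real (closedBall x r) :=
          measureReal_mono (biInter_subset_of_mem hx) measure_closedBall_lt_top.ne
        have h2 : volume.real (closedBall x r) = V := by
          simp only [hV, Measure.real, Measure.addHaar_closedBall_center]
        rw [h2] at this
        gcongr
      · set T := hFfin.toFinset.filter (fun x => dist c x = s) with hT
        have hTm : ∀ x, x ∈ T ↔ x ∈ F ∧ dist c x = s := by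
          intro x; simp [hT]
        set e := T.equivFin with he
        have hfin := kt_fin hd r hr T.card (fun j => c - (e.symm j : EuclideanSpace ℝ (Fin d)))
          s hspos hsr
          (fun j => by
            rw [← dist_eq_norm]; exact ((hTm _).1 (e.symm j).2).2)
          (fun y => by
            obtain ⟨x, hx, hxs, hxy⟩ := hcon y
            refine ⟨e ⟨x, (hTm x).2 ⟨hx, hxs⟩⟩, ?_⟩
            simpa using hxy)
        refine le_trans ?_ hfin
        refine mul_le_mul_of_nonneg_left ?_ hr.le
        set S := {y : EuclideanSpace ℝ (Fin d) | ∀ j, ‖y + (c - (e.symm j : EuclideanSpace ℝ (Fin d)))‖ ≤ r} with hS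
        have e3 : volume.real ((fun y => y + (-c)) ⁻¹' S) = volume.real S := by
          simp only [Measure.real, measure_preimage_add_right]
        rw [← e3]
        apply measureReal_mono
        · intro z hz j
          have h1 := mem_iInter₂.1 hz _ (hFY ((hTm _).1 (e.symm j).2).1)
          rw [mem_closedBall, dist_eq_norm] at h1
          have h2 : z + -c + (c - (e.symm j : EuclideanSpace ℝ (Fin d))) =
              z - (e.symm j : EuclideanSpace ℝ (Fin d)) := by abel
          rw [← h2] at h1
          exact h1
        · rw [measure_preimage_add_right]
          obtain ⟨x, hx, hxs, -⟩ := hcon 0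
          refine ne_top_of_le_ne_top (measure_closedBall_lt_top (x := -(c - x)) (r := r)).ne
            (measure_mono ?_)
          intro y hy
          have := hy (e ⟨x, (hTm x).2 ⟨hx, hxs⟩⟩)
          rw [Equiv.symm_apply_apply] at this
          rw [mem_closedBall, dist_eq_norm, sub_neg_eq_add]
          exact this
    exact hvol.trans (mul_le_mul_of_nonneg_right hin hV0)
  by_contra hc
  push Not at hc
  have h1 := key ((r * volume.real K - ρ * V) / (2 * (V + 1)))
    (div_pos (by linarith) (by positivity))
  have h2 : (r * volume.real K - ρ * V) / (2 * (V + 1)) * V ≤ (r * volume.real K - ρ * V) / 2 := by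
    rw [div_mul_eq_mul_div, div_le_div_iff₀ (by positivity) (by positivity)]
    nlinarith
  linarith

lemma kt_closedBall_eq {d : ℕ} (x : EuclideanSpace ℝ (Fin d)) (r₁ r : ℝ) (h1 : 0 < r₁)
    (h : r₁ ≤ r) :
    closedBall x r₁ = ⋂ v ∈ closedBall x (r - r₁), closedBall v r := by
  ext y
  simp only [mem_iInter₂]
  constructor
  · intro hy v hv
    rw [mem_closedBall] at *
    have := dist_triangle y x v
    rw [dist_comm x v] at this
    linarith
  · intro hy
    rw [mem_closedBall]
    by_cases hxy : y = x
    · rw [hxy, dist_self]; exact h1.le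
    have hn : 0 < ‖y - x‖ := norm_pos_iff.2 (sub_ne_zero.2 hxy)
    have h2 := hy (x - ((r - r₁) / ‖y - x‖) • (y - x)) (by
      rw [mem_closedBall, dist_eq_norm, sub_sub_cancel_left, norm_neg, norm_smul, Real.norm_eq_abs,
        abs_of_nonneg (div_nonneg (by linarith) hn.le)]
      rw [div_mul_cancel₀ _ hn.ne'])
    rw [mem_closedBall, dist_eq_norm] at h2
    have h3 : y - (x - ((r - r₁) / ‖y - x‖) • (y - x)) =
        (1 + (r - r₁) / ‖y - x‖) • (y - x) := by module
    rw [h3, norm_smul, Real.norm_eq_abs, abs_of_nonneg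
      (add_nonneg zero_le_one (div_nonneg (by linarith) hn.le)), add_mul, one_mul,
      div_mul_cancel₀ _ hn.ne'] at h2
    rw [dist_eq_norm]
    linarith

/-- Kadets-type theorem: if a ball of radius r is covered by rᵢ-ball bodies with
rᵢ ≤ r, then the sum of the inradii of the pieces Cᵢ ∩ B is at least r. -/
theorem kadets_type (r : ℝ) (hr : 0 < r) (hd : 1 < d)
    (b : EuclideanSpace ℝ (Fin d)) (n : ℕ)
    (rr : Fin n → ℝ) (hrr : ∀ i, 0 < rr i ∧ rr i ≤ r)
    (C : Fin n → Set (EuclideanSpace ℝ (Fin d)))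
    (X : Fin n → Set (EuclideanSpace ℝ (Fin d)))
    (hX : ∀ i, (X i).Nonempty) (hC : ∀ i, C i = ballBody (rr i) (X i))
    (hCne : ∀ i, (C i).Nonempty)
    (hcover : closedBall b r ⊆ ⋃ i, C i) :
    r ≤ ∑ i, inrad (C i ∩ closedBall b r) := by
  have : Nonempty (Fin d) := ⟨⟨0, by omega⟩⟩
  have : Nontrivial (EuclideanSpace ℝ (Fin d)) := inferInstance
  set V := volume.real (closedBall (0 : EuclideanSpace ℝ (Fin d)) r) with hV
  have hVb : volume.real (closedBall b r) = V := by
    simp only [hV, Measure.real, Measure.addHaar_closedBall_center]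
  have hVpos : 0 < V := by
    rw [hV, Measure.real]
    exact ENNReal.toReal_pos (measure_closedBall_pos _ _ hr).ne' measure_closedBall_lt_top.ne
  have hpiece : ∀ i, r * volume.real (C i ∩ closedBall b r) ≤ inrad (C i ∩ closedBall b r) * V := by
    intro i
    obtain ⟨hr1, hr2⟩ := hrr i
    set Y : Set (EuclideanSpace ℝ (Fin d)) := insert b (⋃ x ∈ X i, closedBall x (r - rr i)) with hY
    have hE : C i ∩ closedBall b r = ⋂ x ∈ Y, closedBall x r := by
      rw [hY, biInter_insert, inter_comm, hC i, ballBody, biInter_iUnion]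
      congr 1
      refine iInter_congr fun x => ?_
      rw [biInter_iUnion]
      refine iInter_congr fun hx => ?_
      exact kt_closedBall_eq x _ _ hr1 hr2
    have hbdd : ∀ (c : EuclideanSpace ℝ (Fin d)) (t : ℝ), 0 ≤ t →
        closedBall c t ⊆ C i ∩ closedBall b r → t ≤ r := by
      intro c t ht hsub
      have h1 := diam_mono (hsub.trans inter_subset_right) isBounded_closedBall
      rw [diam_closedBall_eq c ht, diam_closedBall_eq b hr.le] at h1
      linarith
    rw [hE]
    refine kt_body hd r hr Y ⟨b, mem_insert _ _⟩ _ ?_ ?_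
    · exact Real.sSup_nonneg fun t ht => ht.1
    · intro c t ht hsub
      rw [← hE] at hsub ⊢
      exact le_csSup ⟨r, fun t' ⟨h0, c', hc'⟩ => hbdd c' t' h0 hc'⟩ ⟨ht, c, hsub⟩
  have hsum : V ≤ ∑ i, volume.real (C i ∩ closedBall b r) := by
    rw [← hVb]
    refine (measureReal_mono (s₂ := ⋃ i, (C i ∩ closedBall b r)) ?_ ?_).trans
      (measureReal_iUnion_fintype_le _)
    · rw [← iUnion_inter]
      exact subset_inter hcover subset_rfl
    · exact ne_top_of_le_ne_top (measure_closedBall_lt_top (x := b) (r := r)).ne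
        (measure_mono (iUnion_subset fun i => inter_subset_right))
  have h1 : r * V ≤ (∑ i, inrad (C i ∩ closedBall b r)) * V := by
    calc r * V ≤ r * ∑ i, volume.real (C i ∩ closedBall b r) := by gcongr
      _ = ∑ i, r * volume.real (C i ∩ closedBall b r) := Finset.mul_sum _ _ _
      _ ≤ ∑ i, inrad (C i ∩ closedBall b r) * V := Finset.sum_le_sum fun i _ => hpiece i
      _ = _ := (Finset.sum_mul _ _ _).symm
  exact le_of_mul_le_mul_right h1 hVpos
end

section
/- Let r > r₀ > 0 and 0 < k < d, and let P ⊂ ℝ^d be a finite set with circumradius r₀. Then the k-th intrinsic volume of P^r satisfies V_k(P^r) ≤ V_k(L_{r, r − √((d+1)/(2d))·r₀, d}). -/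
open Metric Set MeasureTheory Pointwise RealInnerProductSpace

variable {d : ℕ}

/-- Volume of the m-dimensional unit ball. -/
noncomputable def unitBallVol (m : ℕ) : ℝ :=
  (volume (closedBall (0 : EuclideanSpace ℝ (Fin m)) 1)).toReal

/-- `V` is a system of intrinsic volumes on `ℝ^d`, i.e. it satisfies the Steiner
formula for all convex bodies. -/
def IsIntrinsicVolumes (d : ℕ)
    (V : ℕ → Set (EuclideanSpace ℝ (Fin d)) → ℝ) : Prop :=
  ∀ A : Set (EuclideanSpace ℝ (Fin d)), Convex ℝ A → IsCompact A → A.Nonempty →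
    (∀ ε : ℝ, 0 < ε →
      (volume (A + ε • closedBall (0 : EuclideanSpace ℝ (Fin d)) 1)).toReal =
        ∑ i ∈ Finset.range (d + 1), unitBallVol (d - i) * V i A * ε ^ (d - i)) ∧
    V 0 A = 1

def CC (A : Set (EuclideanSpace ℝ (Fin d))) : Prop := Convex ℝ A ∧ IsCompact A ∧ A.Nonempty

lemma CC.add {A C : Set (EuclideanSpace ℝ (Fin d))} (hA : CC A) (hC : CC C) : CC (A + C) :=
  ⟨hA.1.add hC.1, hA.2.1.add hC.2.1, hA.2.2.add hC.2.2⟩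

lemma CC_segment (u : EuclideanSpace ℝ (Fin d)) : CC (segment ℝ 0 u) := by
  refine ⟨convex_segment _ _, ?_, ⟨0, left_mem_segment _ _ _⟩⟩
  rw [segment_eq_image]
  exact isCompact_Icc.image (by fun_prop)

lemma mem_seg {u x : EuclideanSpace ℝ (Fin d)} :
    x ∈ segment ℝ 0 u ↔ ∃ s : ℝ, 0 ≤ s ∧ s ≤ 1 ∧ x = s • u := by
  rw [segment_eq_image]
  constructor
  · rintro ⟨s, hs, rfl⟩; exact ⟨s, hs.1, hs.2, by simp⟩
  · rintro ⟨s, h0, h1, rfl⟩; exact ⟨s, ⟨h0, h1⟩, by simp⟩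

lemma subset_add_seg (A : Set (EuclideanSpace ℝ (Fin d))) (u : EuclideanSpace ℝ (Fin d)) :
    A ⊆ A + segment ℝ 0 u := by
  intro a ha
  exact ⟨a, ha, 0, left_mem_segment _ _ _, by simp⟩

structure Good (F : Set (EuclideanSpace ℝ (Fin d)) → ℝ) : Prop where
  nonneg : ∀ A, CC A → 0 ≤ F A
  mono : ∀ A C, CC A → CC C → A ⊆ C → F A ≤ F C
  aff : ∀ A u (n : ℕ), CC A →
    F (A + segment ℝ 0 ((n : ℝ) • u)) = F A + n * (F (A + segment ℝ 0 u) - F A)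

lemma Good.diff {F : Set (EuclideanSpace ℝ (Fin d)) → ℝ} (hF : Good F)
    (u : EuclideanSpace ℝ (Fin d)) :
    Good (fun A => F (A + segment ℝ 0 u) - F A) := by
  refine ⟨?_, ?_, ?_⟩
  · intro A hA
    have := hF.mono A _ hA (hA.add (CC_segment u)) (subset_add_seg A u)
    simpa using this
  · intro A C hA hC hAC
    by_contra! h
    obtain ⟨n, hn⟩ := exists_nat_gt ((F C - F A) /
      ((F (A + segment ℝ 0 u) - F A) - (F (C + segment ℝ 0 u) - F C)))
    rw [div_lt_iff₀ (by linarith)] at hn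
    have h1 := hF.mono _ _ (hA.add (CC_segment ((n : ℝ) • u)))
      (hC.add (CC_segment ((n : ℝ) • u))) (Set.add_subset_add_right hAC)
    rw [hF.aff A u n hA, hF.aff C u n hC] at h1
    linarith
  · intro A v n hA
    have h1 := hF.aff A v n hA
    have h2 := hF.aff (A + segment ℝ 0 u) v n (hA.add (CC_segment u))
    have e : ∀ w : EuclideanSpace ℝ (Fin d), A + segment ℝ 0 w + segment ℝ 0 u
      = A + segment ℝ 0 u + segment ℝ 0 w := fun w => add_right_comm _ _ _
    simp only [e, h1, h2]
    ring

def zono : List (EuclideanSpace ℝ (Fin d)) → ℝ → Set (EuclideanSpace ℝ (Fin d))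
  | [], _ => {0}
  | u :: us, t => zono us t + segment ℝ 0 (t • u)

lemma CC_zono (us : List (EuclideanSpace ℝ (Fin d))) (t : ℝ) : CC (zono us t) := by
  induction us with
  | nil => exact ⟨convex_singleton _, isCompact_singleton, Set.singleton_nonempty _⟩
  | cons u us ih => exact ih.add (CC_segment _)

lemma Good.poly (us : List (EuclideanSpace ℝ (Fin d))) :
    ∀ F : Set (EuclideanSpace ℝ (Fin d)) → ℝ, Good F →
    ∃ q : Set (EuclideanSpace ℝ (Fin d)) → Polynomial ℝ,
      (∀ A, CC A → ∀ n : ℕ, F (A + zono us n) = (q A).eval (n : ℝ)) ∧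
      (∀ A, CC A → ∀ j, 0 ≤ (q A).coeff j) ∧
      (∀ A C, CC A → CC C → A ⊆ C → ∀ j, (q A).coeff j ≤ (q C).coeff j) := by
  induction us with
  | nil =>
    intro F hF
    refine ⟨fun A => Polynomial.C (F A), ?_, ?_, ?_⟩
    · intro A hA n
      simp [zono]
    · intro A hA j
      rw [Polynomial.coeff_C]; split_ifs; exacts [hF.nonneg A hA, le_rfl]
    · intro A C hA hC h j
      rw [Polynomial.coeff_C, Polynomial.coeff_C]; split_ifs
      exacts [hF.mono A C hA hC h, le_rfl]
  | cons u us ih =>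
    intro F hF
    obtain ⟨q, q1, q2, q3⟩ := ih F hF
    obtain ⟨p, p1, p2, p3⟩ := ih _ (hF.diff u)
    refine ⟨fun A => q A + p A * Polynomial.X, ?_, ?_, ?_⟩
    · intro A hA n
      have := hF.aff (A + zono us n) u n (hA.add (CC_zono us n))
      rw [zono, ← add_assoc, this, p1 A hA n, q1 A hA n]
      simp; ring
    · intro A hA j
      cases j with
      | zero => simpa using q2 A hA 0
      | succ j => simpa using add_nonneg (q2 A hA (j+1)) (p2 A hA j)
    · intro A C hA hC h j
      cases j with
      | zero => simpa using q3 A C hA hC h 0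
      | succ j => simpa using add_le_add (q3 A C hA hC h (j+1)) (p3 A C hA hC h j)

lemma seg_add_seg {s t : ℝ} (hs : 0 ≤ s) (ht : 0 ≤ t) (u : EuclideanSpace ℝ (Fin d)) :
    segment ℝ 0 (s • u) + segment ℝ 0 (t • u) = segment ℝ 0 ((s + t) • u) := by
  ext x
  rw [Set.mem_add]
  constructor
  · rintro ⟨y, hy, z, hz, rfl⟩
    rw [mem_seg] at hy hz ⊢
    obtain ⟨a, a0, a1, rfl⟩ := hy
    obtain ⟨b, b0, b1, rfl⟩ := hz
    rcases (add_nonneg hs ht).eq_or_lt with h | h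
    · have : s = 0 := by linarith
      have : t = 0 := by linarith
      subst_vars; exact ⟨0, by simp⟩
    · refine ⟨(a * s + b * t) / (s + t), by positivity, ?_, ?_⟩
      · rw [div_le_one h]; nlinarith
      · simp only [smul_smul, ← add_smul]; congr 1; field_simp
  · intro hx
    rw [mem_seg] at hx
    obtain ⟨a, a0, a1, rfl⟩ := hx
    exact ⟨a • s • u, mem_seg.2 ⟨a, a0, a1, rfl⟩, a • t • u, mem_seg.2 ⟨a, a0, a1, rfl⟩, by
      simp only [smul_smul, ← add_smul]; congr 1; ring⟩

/-- the increment in volume -/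
lemma vol_step (A : Set (EuclideanSpace ℝ (Fin d))) (hA : CC A)
    (u : EuclideanSpace ℝ (Fin d)) (t : ℝ) (ht : 0 ≤ t) :
    volume.real (A + segment ℝ 0 ((t + 1) • u)) - volume.real (A + segment ℝ 0 (t • u)) =
      volume.real (A + segment ℝ 0 u) - volume.real A := by
  have c1 := hA.add (CC_segment ((t + 1) • u))
  have c2 := hA.add (CC_segment (t • u))
  have c3 := hA.add (CC_segment u)
  have s1 : A + segment ℝ 0 (t • u) ⊆ A + segment ℝ 0 ((t + 1) • u) := by
    rw [← seg_add_seg ht zero_le_one, ← add_assoc]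
    exact subset_add_seg _ _
  rw [← measureReal_sdiff s1 c2.2.1.measurableSet c1.2.1.measure_lt_top.ne,
    ← measureReal_sdiff (subset_add_seg A u) hA.2.1.measurableSet c3.2.1.measure_lt_top.ne]
  have key : (A + segment ℝ 0 ((t + 1) • u)) \ (A + segment ℝ 0 (t • u)) =
      (t • u) +ᵥ ((A + segment ℝ 0 u) \ A) := by
    ext x
    rw [Set.mem_vadd_set_iff_neg_vadd_mem]
    simp only [Set.mem_sdiff, vadd_eq_add]
    constructor
    · rintro ⟨⟨a, ha, y, hy, rfl⟩, h2⟩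
      rw [mem_seg] at hy
      obtain ⟨s, s0, s1, rfl⟩ := hy
      have hlt : t < s * (t + 1) := by
        by_contra! hle
        apply h2
        refine ⟨a, ha, _, ?_, rfl⟩
        rcases ht.eq_or_lt with h | h
        · subst h
          have : s = 0 := by linarith
          subst this; simp
        · refine mem_seg.2 ⟨s * (t + 1) / t, by positivity, by rwa [div_le_one h], ?_⟩
          simp only [smul_smul]; congr 1; field_simp
      constructor
      · refine ⟨a, ha, (s * (t + 1) - t) • u, mem_seg.2 ⟨_, by linarith, by nlinarith, rfl⟩, ?_⟩
        module
      · intro h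
        apply h2
        exact ⟨_, h, t • u, right_mem_segment _ _ _, by module⟩
    · rintro ⟨⟨a, ha, y, hy, hay⟩, h2⟩
      rw [mem_seg] at hy
      obtain ⟨s, s0, s1, rfl⟩ := hy
      have hx : x = a + (s + t) • u := by
        have : x = t • u + (a + s • u) := by simp only at hay; rw [hay]; module
        rw [this]; module
      subst hx
      constructor
      · refine ⟨a, ha, _, mem_seg.2 ⟨(s + t) / (t + 1), by positivity, ?_, ?_⟩, rfl⟩
        · rw [div_le_one (by positivity)]; linarith
        · simp only [smul_smul]; congr 1; field_simp
      · rintro ⟨b, hb, y, hy, hby⟩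
        rw [mem_seg] at hy
        obtain ⟨σ, σ0, σ1, rfl⟩ := hy
        apply h2
        have e : -(t • u) + (a + (s + t) • u) = a + s • u := by module
        rw [e]
        have hb' : b = a + (s + t - σ * t) • u := by
          have : b = (a + (s + t) • u) - σ • t • u := by
            rw [← hby]; simp
          rw [this]; module
        rcases s0.eq_or_lt with h | h
        · subst h; simpa using ha
        have hpos : 0 < s + t - σ * t := by nlinarith
        have hα : 0 ≤ (t - σ * t) / (s + t - σ * t) := div_nonneg (by nlinarith) hpos.le
        have hβ : 0 ≤ s / (s + t - σ * t) := by positivity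
        have hαβ : (t - σ * t) / (s + t - σ * t) + s / (s + t - σ * t) = 1 := by
          rw [← add_div, show t - σ * t + s = s + t - σ * t by ring, div_self hpos.ne']
        have := hA.1 ha hb hα hβ hαβ
        convert this using 1
        rw [hb', smul_add, ← add_assoc, ← add_smul, smul_smul]
        congr 1
        · rw [hαβ, one_smul]
        · rw [div_mul_cancel₀ _ hpos.ne']
  rw [key, measureReal_def, measureReal_def, measure_vadd]

lemma good_vol : Good (fun A : Set (EuclideanSpace ℝ (Fin d)) => volume.real A) := by
  refine ⟨fun _ _ => measureReal_nonneg, ?_, ?_⟩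
  · intro A C hA hC h
    exact measureReal_mono h hC.2.1.measure_lt_top.ne
  · intro A u n hA
    induction n with
    | zero => simp
    | succ n ih =>
      have := vol_step A hA u n (by positivity)
      push_cast at *
      linarith

/-- support function of the zonotope -/
noncomputable def zh (us : List (EuclideanSpace ℝ (Fin d))) (x : EuclideanSpace ℝ (Fin d)) : ℝ :=
  (us.map (fun u => max ⟪x, u⟫ 0)).sum

lemma zono_le (us : List (EuclideanSpace ℝ (Fin d))) (t : ℝ) (ht : 0 ≤ t)
    (x : EuclideanSpace ℝ (Fin d)) : ∀ z ∈ zono us t, ⟪x, z⟫ ≤ t * zh us x := by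
  induction us with
  | nil => intro z hz; simp only [zono, Set.mem_singleton_iff] at hz; subst hz; simp [zh]
  | cons u us ih =>
    rintro z ⟨y, hy, w, hw, rfl⟩
    rw [mem_seg] at hw
    obtain ⟨s, s0, s1, rfl⟩ := hw
    have h1 := ih y hy
    have h2 : zh (u :: us) x = max ⟪x, u⟫ 0 + zh us x := by simp [zh]
    simp only [inner_add_right, inner_smul_right, h2]
    have h3 : s * (t * ⟪x, u⟫) ≤ t * max ⟪x, u⟫ 0 := by
      have a := le_max_left ⟪x, u⟫ (0 : ℝ)
      have b := le_max_right ⟪x, u⟫ (0 : ℝ)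
      calc s * (t * ⟪x, u⟫) ≤ s * (t * max ⟪x, u⟫ 0) := by gcongr
        _ ≤ 1 * (t * max ⟪x, u⟫ 0) := by gcongr
        _ = _ := one_mul _
    linarith

lemma zono_att (us : List (EuclideanSpace ℝ (Fin d))) (t : ℝ) (ht : 0 ≤ t)
    (x : EuclideanSpace ℝ (Fin d)) : ∃ z ∈ zono us t, ⟪x, z⟫ = t * zh us x := by
  induction us with
  | nil => exact ⟨0, by simp [zono], by simp [zh]⟩
  | cons u us ih =>
    obtain ⟨z, hz, hzx⟩ := ih
    have h2 : zh (u :: us) x = max ⟪x, u⟫ 0 + zh us x := by simp [zh]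
    rcases le_total ⟪x, u⟫ (0 : ℝ) with h | h
    · refine ⟨z, ⟨z, hz, 0, left_mem_segment _ _ _, by simp⟩, ?_⟩
      rw [h2, max_eq_right h, hzx]; ring
    · refine ⟨z + t • u, ⟨z, hz, t • u, right_mem_segment _ _ _, rfl⟩, ?_⟩
      rw [h2, max_eq_left h, inner_add_right, hzx, inner_smul_right]; ring

lemma zono_upper (us : List (EuclideanSpace ℝ (Fin d))) (t M : ℝ) (ht : 0 ≤ t)
    (hM : 0 ≤ M) (h : ∀ x, zh us x ≤ M * ‖x‖) : zono us t ⊆ closedBall 0 (t * M) := by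
  intro z hz
  rw [mem_closedBall_zero_iff]
  have h1 := zono_le us t ht z z hz
  rw [real_inner_self_eq_norm_sq] at h1
  have h2 := mul_le_mul_of_nonneg_left (h z) ht
  rcases (norm_nonneg z).eq_or_lt with h0 | h0
  · rw [← h0]; positivity
  · nlinarith

lemma zono_lower (us : List (EuclideanSpace ℝ (Fin d))) (t m : ℝ) (ht : 0 ≤ t)
    (h : ∀ x, m * ‖x‖ ≤ zh us x) : closedBall 0 (t * m) ⊆ zono us t := by
  intro y hy
  rw [mem_closedBall_zero_iff] at hy
  by_contra hn
  have hc := CC_zono us t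
  obtain ⟨f, u, h1, h2⟩ := geometric_hahn_banach_closed_point hc.1 hc.2.1.isClosed hn
  set x := (InnerProductSpace.toDual ℝ (EuclideanSpace ℝ (Fin d))).symm f with hx
  have hf : ∀ z, f z = ⟪x, z⟫ := by
    intro z; rw [hx, InnerProductSpace.toDual_symm_apply]
  obtain ⟨z, hz, hzx⟩ := zono_att us t ht x
  have h3 := h1 z hz
  rw [hf] at h3 h2
  have h4 := real_inner_le_norm x y
  have h5 := mul_le_mul_of_nonneg_left (h x) ht
  have h6 := mul_le_mul_of_nonneg_left hy (norm_nonneg x)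
  nlinarith

lemma zh_append (us vs : List (EuclideanSpace ℝ (Fin d))) (x : EuclideanSpace ℝ (Fin d)) :
    zh (us ++ vs) x = zh us x + zh vs x := by simp [zh]

lemma zh_smul (us : List (EuclideanSpace ℝ (Fin d))) (a : ℝ) (ha : 0 ≤ a)
    (x : EuclideanSpace ℝ (Fin d)) :
    zh (us.map (fun u => a • u)) x = a * zh us x := by
  induction us with
  | nil => simp [zh]
  | cons u us ih =>
    simp only [zh, List.map_cons, List.sum_cons] at ih ⊢
    rw [ih, inner_smul_right, mul_add, mul_max_of_nonneg _ _ ha, mul_zero]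

lemma zh_smul_right (us : List (EuclideanSpace ℝ (Fin d))) (a : ℝ) (ha : 0 ≤ a)
    (x : EuclideanSpace ℝ (Fin d)) :
    zh us (a • x) = a * zh us x := by
  induction us with
  | nil => simp [zh]
  | cons u us ih =>
    simp only [zh, List.map_cons, List.sum_cons] at ih ⊢
    rw [ih, real_inner_smul_left, mul_add, mul_max_of_nonneg _ _ ha, mul_zero]

/-- averaged support function -/
noncomputable def avgPhi (x : EuclideanSpace ℝ (Fin d)) : ℝ :=
  ⨍ u in closedBall (0 : EuclideanSpace ℝ (Fin d)) 1, max ⟪x, u⟫ 0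

lemma avgPhi_eq_of_norm_eq (x y : EuclideanSpace ℝ (Fin d)) (h : ‖x‖ = ‖y‖) :
    avgPhi x = avgPhi y := by
  let R := (Submodule.reflection (ℝ ∙ (x - y))ᗮ)
  have hR : R x = y := Submodule.reflection_sub h
  have hmp := R.measurePreserving
  unfold avgPhi
  rw [setAverage_eq, setAverage_eq]
  congr 1
  have hpre : R ⁻¹' (closedBall (0 : EuclideanSpace ℝ (Fin d)) 1) = closedBall 0 1 := by
    ext u; simp
  rw [← hmp.setIntegral_preimage_emb R.toHomeomorph.measurableEmbedding
    (fun u => max ⟪y, u⟫ 0) (closedBall 0 1), hpre]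
  refine integral_congr_ae (Filter.Eventually.of_forall fun u => ?_)
  simp only
  rw [← hR, R.inner_map_map]

lemma avgPhi_smul (x : EuclideanSpace ℝ (Fin d)) (a : ℝ) (ha : 0 ≤ a) :
    avgPhi (a • x) = a * avgPhi x := by
  unfold avgPhi
  rw [setAverage_eq, setAverage_eq, smul_eq_mul, smul_eq_mul, mul_left_comm]
  congr 1
  refine Eq.trans ?_ (integral_const_mul a _)
  refine integral_congr_ae (Filter.Eventually.of_forall fun u => ?_)
  simp only
  rw [real_inner_smul_left, mul_max_of_nonneg _ _ ha, mul_zero]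

lemma avgPhi_pos (x : EuclideanSpace ℝ (Fin d)) (hx : ‖x‖ = 1) : 0 < avgPhi x := by
  unfold avgPhi
  rw [setAverage_eq, smul_eq_mul]
  have hv : 0 < volume.real (closedBall (0 : EuclideanSpace ℝ (Fin d)) 1) := by
    rw [measureReal_def]
    exact ENNReal.toReal_pos (measure_closedBall_pos _ _ one_pos).ne'
      (isCompact_closedBall _ _).measure_lt_top.ne
  refine mul_pos (inv_pos.2 hv) ?_
  have hcont : Continuous (fun u : EuclideanSpace ℝ (Fin d) => max ⟪x, u⟫ 0) := by fun_prop
  rw [setIntegral_pos_iff_support_of_nonneg_ae (f := fun u => max ⟪x, u⟫ 0)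
    (Filter.Eventually.of_forall fun u => le_max_right _ _)
    (hcont.continuousOn.integrableOn_compact (isCompact_closedBall _ _))]
  have hopen : IsOpen ({u : EuclideanSpace ℝ (Fin d) | 0 < ⟪x, u⟫} ∩ ball 0 1) :=
    (isOpen_lt continuous_const (by fun_prop)).inter isOpen_ball
  refine lt_of_lt_of_le (hopen.measure_pos volume ⟨(1/2 : ℝ) • x, ?_, ?_⟩) (measure_mono ?_)
  · simp only [Set.mem_ofPred_eq, inner_smul_right, real_inner_self_eq_norm_sq, hx]; norm_num
  · rw [mem_ball_zero_iff, norm_smul, hx]; norm_num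
  · rintro u ⟨h1, h2⟩
    refine ⟨?_, ball_subset_closedBall h2⟩
    simp only [Function.mem_support]
    rw [max_eq_left (le_of_lt h1)]
    exact ne_of_gt h1

lemma approx_avg (δ : ℝ) (hδ : 0 < δ) :
    ∃ us : List (EuclideanSpace ℝ (Fin d)), ∀ x, ‖x‖ ≤ 1 → |zh us x - avgPhi x| < δ := by
  let K := closedBall (0 : EuclideanSpace ℝ (Fin d)) 1
  have : CompactSpace K := isCompact_iff_compactSpace.1 (isCompact_closedBall _ _)
  let f : C(EuclideanSpace ℝ (Fin d), C(K, ℝ)) :=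
    ContinuousMap.curry ⟨fun p : EuclideanSpace ℝ (Fin d) × K => max ⟪(p.2 : EuclideanSpace ℝ (Fin d)), p.1⟫ 0,
      by fun_prop⟩
  have hf : ∀ u (x : K), f u x = max ⟪(x : EuclideanSpace ℝ (Fin d)), u⟫ 0 := fun u x => rfl
  let S : Set C(K, ℝ) := {g | ∃ us : List (EuclideanSpace ℝ (Fin d)), ∀ x : K, g x = zh us x}
  have hS : Convex ℝ S := by
    rintro g ⟨us, hg⟩ g' ⟨vs, hg'⟩ a b ha hb _
    refine ⟨us.map (fun u => a • u) ++ vs.map (fun u => b • u), fun x => ?_⟩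
    rw [zh_append, zh_smul _ _ ha, zh_smul _ _ hb, ← hg, ← hg']
    simp
  have hInteg : IntegrableOn f K volume :=
    f.continuous.continuousOn.integrableOn_compact (isCompact_closedBall _ _)
  have hmem := hS.set_average_mem_closure (μ := volume) (t := K) (f := f)
    (measure_closedBall_pos _ _ one_pos).ne' (isCompact_closedBall _ _).measure_lt_top.ne
    (Filter.Eventually.of_forall fun u => ⟨[u], fun x => by simp [zh, hf]⟩) hInteg
  rw [Metric.mem_closure_iff] at hmem
  obtain ⟨g, ⟨us, hg⟩, hd⟩ := hmem δ hδ
  refine ⟨us, fun x hx => ?_⟩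
  have hxK : x ∈ K := mem_closedBall_zero_iff.2 hx
  have h1 := (ContinuousMap.dist_apply_le_dist (f := ⨍ u in K, f u) (g := g) ⟨x, hxK⟩).trans_lt hd
  have h2 : (⨍ u in K, f u) ⟨x, hxK⟩ = avgPhi x := by
    unfold avgPhi
    rw [setAverage_eq, setAverage_eq, ContinuousMap.smul_apply]
    congr 1
    rw [ContinuousMap.integral_apply hInteg]
    rfl
  rw [h2, hg, Real.dist_eq, abs_sub_comm] at h1
  exact h1

lemma zono_approx (hd : 0 < d) (δ : ℝ) (hδ : 0 < δ) :
    ∃ us : List (EuclideanSpace ℝ (Fin d)), ∀ x,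
      (1 - δ) * ‖x‖ ≤ zh us x ∧ zh us x ≤ (1 + δ) * ‖x‖ := by
  let e : EuclideanSpace ℝ (Fin d) := EuclideanSpace.single ⟨0, hd⟩ 1
  have he : ‖e‖ = 1 := by simp [e]
  have hc := avgPhi_pos e he
  set c := avgPhi e with hcdef
  obtain ⟨us, hus⟩ := approx_avg (d := d) (δ * c) (by positivity)
  refine ⟨us.map (fun u => c⁻¹ • u), fun x => ?_⟩
  rw [zh_smul _ _ (by positivity)]
  have hn : |zh us x - c * ‖x‖| ≤ δ * c * ‖x‖ := by
    rcases eq_or_ne x 0 with rfl | hx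
    · have := zh_smul_right us 0 le_rfl 0
      simp at this
      simp [this]
    have hx' : 0 < ‖x‖ := norm_pos_iff.2 hx
    have h1 := hus (‖x‖⁻¹ • x) (by rw [norm_smul, norm_inv, norm_norm, inv_mul_cancel₀ hx'.ne'])
    rw [avgPhi_eq_of_norm_eq (‖x‖⁻¹ • x) e
      (by rw [norm_smul, norm_inv, norm_norm, inv_mul_cancel₀ hx'.ne', he]),
      zh_smul_right _ _ (by positivity), ← hcdef] at h1
    have h2 : zh us x - c * ‖x‖ = ‖x‖ * (‖x‖⁻¹ * zh us x - c) := by field_simp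
    rw [h2, abs_mul, abs_of_pos hx', mul_comm]
    gcongr
  rw [abs_le] at hn
  constructor
  · rw [inv_mul_eq_div, le_div_iff₀ hc]; linarith
  · rw [inv_mul_eq_div, div_le_iff₀ hc]; linarith


lemma coeff_interp (d : ℕ) (f : Polynomial ℝ) (hf : f.natDegree ≤ d) (j : ℕ) :
    f.coeff j = ∑ i ∈ Finset.range (d + 1), f.eval ((i + 1 : ℕ) : ℝ) *
      (Lagrange.basis (Finset.range (d + 1)) (fun i : ℕ => ((i + 1 : ℕ) : ℝ)) i).coeff j := by
  have hinj : Set.InjOn (fun i : ℕ => ((i + 1 : ℕ) : ℝ)) (Finset.range (d + 1)) := by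
    intro a _ b _ h
    simpa using h
  have hdeg : f.degree < (Finset.range (d + 1)).card := by
    rw [Finset.card_range]
    exact lt_of_le_of_lt Polynomial.degree_le_natDegree (by exact_mod_cast Nat.lt_succ_of_le hf)
  conv_lhs => rw [Lagrange.eq_interpolate hinj hdeg]
  rw [Lagrange.interpolate_apply, Polynomial.finsetSum_coeff]
  simp only [Polynomial.coeff_C_mul]

lemma unitBallVol_pos (m : ℕ) : 0 < unitBallVol m :=
  ENNReal.toReal_pos (measure_closedBall_pos _ _ one_pos).ne'
      (isCompact_closedBall _ _).measure_lt_top.ne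

/-- The Steiner polynomial. -/
noncomputable def steinerPoly (V : ℕ → Set (EuclideanSpace ℝ (Fin d)) → ℝ)
    (A : Set (EuclideanSpace ℝ (Fin d))) : Polynomial ℝ :=
  ∑ i ∈ Finset.range (d + 1), Polynomial.C (unitBallVol (d - i) * V i A) * Polynomial.X ^ (d - i)

lemma steinerPoly_eval {V : ℕ → Set (EuclideanSpace ℝ (Fin d)) → ℝ} (hV : IsIntrinsicVolumes d V)
    {A : Set (EuclideanSpace ℝ (Fin d))} (hA : CC A) (ε : ℝ) (hε : 0 < ε) :
    (steinerPoly V A).eval ε = volume.real (A + closedBall 0 ε) := by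
  have h := (hV A hA.1 hA.2.1 hA.2.2).1 ε hε
  rw [smul_unitClosedBall_of_nonneg hε.le] at h
  rw [measureReal_def, h, steinerPoly, Polynomial.eval_finsetSum]
  simp

lemma steinerPoly_coeff (V : ℕ → Set (EuclideanSpace ℝ (Fin d)) → ℝ)
    (A : Set (EuclideanSpace ℝ (Fin d))) (k : ℕ) (hk : k ≤ d) :
    (steinerPoly V A).coeff (d - k) = unitBallVol (d - k) * V k A := by
  rw [steinerPoly, Polynomial.finsetSum_coeff, Finset.sum_eq_single k]
  · rw [Polynomial.coeff_C_mul_X_pow, if_pos rfl]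
  · intro b hb hbk
    rw [Polynomial.coeff_C_mul_X_pow, if_neg]
    have := Finset.mem_range.1 hb
    omega
  · intro h; exact absurd (Finset.mem_range.2 (by omega)) h

lemma steinerPoly_natDegree (V : ℕ → Set (EuclideanSpace ℝ (Fin d)) → ℝ)
    (A : Set (EuclideanSpace ℝ (Fin d))) : (steinerPoly V A).natDegree ≤ d := by
  refine Polynomial.natDegree_sum_le_of_forall_le _ _ fun i _ => ?_
  exact (Polynomial.natDegree_C_mul_X_pow_le _ _).trans (Nat.sub_le _ _)

lemma natDegree_le_of_growth (d : ℕ) (q : Polynomial ℝ) (h0 : ∀ j, 0 ≤ q.coeff j) (K : ℝ)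
    (h : ∀ n : ℕ, 1 ≤ n → q.eval (n : ℝ) ≤ K * (n : ℝ) ^ d) : q.natDegree ≤ d := by
  by_contra! hlt
  set j := q.natDegree with hj
  have hq : q ≠ 0 := by rintro rfl; simp at hj; omega
  have hpos : 0 < q.coeff j := lt_of_le_of_ne (h0 j) (by
    rw [hj]; exact (Polynomial.leadingCoeff_ne_zero.2 hq).symm)
  obtain ⟨n, hn⟩ := exists_nat_gt (max (K / q.coeff j) 1)
  have hn1 : (1 : ℝ) < n := (le_max_right _ _).trans_lt hn
  have hn2 : K / q.coeff j < n := (le_max_left _ _).trans_lt hn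
  rw [div_lt_iff₀ hpos] at hn2
  have h1 := h n (by exact_mod_cast hn1.le)
  have h2 : q.coeff j * (n : ℝ) ^ j ≤ q.eval (n : ℝ) := by
    rw [Polynomial.eval_eq_sum_range]
    exact Finset.single_le_sum (f := fun i => q.coeff i * (n : ℝ) ^ i)
      (fun i _ => mul_nonneg (h0 i) (by positivity)) (Finset.mem_range.2 (Nat.lt_succ_self _))
  have h3 : (n : ℝ) ^ (d + 1) ≤ (n : ℝ) ^ j := pow_le_pow_right₀ hn1.le hlt
  have h4 : q.coeff j * (n : ℝ) ^ (d + 1) ≤ K * (n : ℝ) ^ d :=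
    (mul_le_mul_of_nonneg_left h3 hpos.le).trans (h2.trans h1)
  have h5 : 0 < (n : ℝ) ^ d := by positivity
  rw [pow_succ] at h4
  nlinarith

lemma growth (A : Set (EuclideanSpace ℝ (Fin d))) (hA : CC A)
    (us : List (EuclideanSpace ℝ (Fin d))) (M : ℝ) (hM : 0 ≤ M) (h : ∀ x, zh us x ≤ M * ‖x‖) :
    ∃ K : ℝ, ∀ n : ℕ, 1 ≤ n → volume.real (A + zono us n) ≤ K * (n : ℝ) ^ d := by
  obtain ⟨R, hR⟩ := hA.2.1.isBounded.subset_closedBall (0 : EuclideanSpace ℝ (Fin d))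
  have hR0 : 0 ≤ R := by
    obtain ⟨a, ha⟩ := hA.2.2
    exact (norm_nonneg a).trans (mem_closedBall_zero_iff.1 (hR ha))
  refine ⟨(R + M) ^ d * volume.real (closedBall (0 : EuclideanSpace ℝ (Fin d)) 1), fun n hn => ?_⟩
  have hn' : (1 : ℝ) ≤ n := by exact_mod_cast hn
  have hsub : A + zono us n ⊆ closedBall 0 (n * (R + M)) := by
    rintro x ⟨a, ha, z, hz, rfl⟩
    have h1 := mem_closedBall_zero_iff.1 (hR ha)
    have h2 := mem_closedBall_zero_iff.1 (zono_upper us n M (by positivity) hM h hz)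
    rw [mem_closedBall_zero_iff]
    refine (norm_add_le _ _).trans ?_
    nlinarith
  refine (measureReal_mono hsub (isCompact_closedBall _ _).measure_lt_top.ne).trans ?_
  rw [measureReal_def, Measure.addHaar_closedBall' _ _ (by positivity), ENNReal.toReal_mul,
    ENNReal.toReal_ofReal (by positivity), finrank_euclideanSpace_fin, measureReal_def]
  rw [mul_pow]
  apply le_of_eq; ring

theorem V_mono (hd : 0 < d) {V : ℕ → Set (EuclideanSpace ℝ (Fin d)) → ℝ}
    (hV : IsIntrinsicVolumes d V) {A C : Set (EuclideanSpace ℝ (Fin d))} (hA : CC A) (hC : CC C)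
    (hAC : A ⊆ C) (k : ℕ) (hk : k ≤ d) : V k A ≤ V k C := by
  have hδ : ∀ m : ℕ, 0 < 1 / ((m : ℝ) + 2) := fun m => by positivity
  choose us hus using fun m : ℕ => zono_approx hd (1 / ((m : ℝ) + 2)) (hδ m)
  choose q q1 q2 q3 using fun m : ℕ => Good.poly (us m) _ (good_vol (d := d))
  have hdeg : ∀ m, ∀ D, CC D → (q m D).natDegree ≤ d := by
    intro m D hD
    obtain ⟨K, hK⟩ := growth D hD (us m) (1 + 1 / ((m : ℝ) + 2)) (by positivity)
      (fun x => (hus m x).2)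
    refine natDegree_le_of_growth d _ (q2 m D hD) K fun n hn => ?_
    rw [← q1 m D hD n]; exact hK n hn
  have hδlim : Filter.Tendsto (fun m : ℕ => 1 / ((m : ℝ) + 2)) Filter.atTop (nhds 0) := by
    have := (tendsto_one_div_add_atTop_nhds_zero_nat (𝕜 := ℝ)).comp (Filter.tendsto_add_atTop_nat 1)
    refine this.congr fun m => ?_
    simp only [Function.comp]; push_cast; ring_nf
  have hlim : ∀ D, CC D → ∀ n : ℕ, 0 < n → Filter.Tendsto (fun m => (q m D).eval (n : ℝ))
      Filter.atTop (nhds ((steinerPoly V D).eval (n : ℝ))) := by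
    intro D hD n hn
    have hn' : (0 : ℝ) < n := by exact_mod_cast hn
    have hl : Filter.Tendsto (fun m : ℕ => (steinerPoly V D).eval ((n : ℝ) * (1 - 1 / ((m : ℝ) + 2))))
        Filter.atTop (nhds ((steinerPoly V D).eval (n : ℝ))) := by
      have : Filter.Tendsto (fun m : ℕ => (n : ℝ) * (1 - 1 / ((m : ℝ) + 2))) Filter.atTop
        (nhds ((n : ℝ) * (1 - 0))) := (hδlim.const_sub 1).const_mul _
      rw [sub_zero, mul_one] at this
      exact ((steinerPoly V D).continuous.tendsto _).comp this
    have hu : Filter.Tendsto (fun m : ℕ => (steinerPoly V D).eval ((n : ℝ) * (1 + 1 / ((m : ℝ) + 2))))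
        Filter.atTop (nhds ((steinerPoly V D).eval (n : ℝ))) := by
      have : Filter.Tendsto (fun m : ℕ => (n : ℝ) * (1 + 1 / ((m : ℝ) + 2))) Filter.atTop
        (nhds ((n : ℝ) * (1 + 0))) := (hδlim.const_add 1).const_mul _
      rw [add_zero, mul_one] at this
      exact ((steinerPoly V D).continuous.tendsto _).comp this
    refine tendsto_of_tendsto_of_tendsto_of_le_of_le hl hu ?_ ?_
    · intro m
      have hlt : 1 / ((m : ℝ) + 2) < 1 := by
        rw [div_lt_one (by positivity)]; linarith [(Nat.cast_nonneg m : (0 : ℝ) ≤ m)]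
      simp only
      rw [steinerPoly_eval hV hD _ (mul_pos hn' (by linarith)), ← q1 m D hD n]
      exact measureReal_mono
        (Set.add_subset_add_left (zono_lower (us m) n _ hn'.le fun x => (hus m x).1))
        (hD.add (CC_zono _ _)).2.1.measure_lt_top.ne
    · intro m
      simp only
      rw [steinerPoly_eval hV hD _ (mul_pos hn' (by positivity)), ← q1 m D hD n]
      exact measureReal_mono
        (Set.add_subset_add_left (zono_upper (us m) n _ hn'.le (by positivity) fun x => (hus m x).2))
        (hD.2.1.add (isCompact_closedBall _ _)).measure_lt_top.ne
  have hcoef : ∀ D, CC D → Filter.Tendsto (fun m => (q m D).coeff (d - k))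
      Filter.atTop (nhds ((steinerPoly V D).coeff (d - k))) := by
    intro D hD
    rw [coeff_interp d _ (steinerPoly_natDegree V D)]
    simp_rw [fun m => coeff_interp d _ (hdeg m D hD) (d - k)]
    exact tendsto_finsetSum _ fun i _ => (hlim D hD (i + 1) (Nat.succ_pos _)).mul_const _
  have := le_of_tendsto_of_tendsto' (hcoef A hA) (hcoef C hC) (fun m => q3 m A C hA hC hAC (d - k))
  rw [steinerPoly_coeff V A k hk, steinerPoly_coeff V C k hk] at this
  exact le_of_mul_le_mul_left this (unitBallVol_pos _)

lemma V_congr {V : ℕ → Set (EuclideanSpace ℝ (Fin d)) → ℝ}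
    (hV : IsIntrinsicVolumes d V) {A C : Set (EuclideanSpace ℝ (Fin d))} (hA : CC A) (hC : CC C)
    (h : ∀ ε : ℝ, 0 < ε → volume.real (A + closedBall 0 ε) = volume.real (C + closedBall 0 ε))
    (k : ℕ) (hk : k ≤ d) : V k A = V k C := by
  have : (steinerPoly V A).coeff (d - k) = (steinerPoly V C).coeff (d - k) := by
    rw [coeff_interp d _ (steinerPoly_natDegree V A), coeff_interp d _ (steinerPoly_natDegree V C)]
    refine Finset.sum_congr rfl fun i _ => ?_
    rw [steinerPoly_eval hV hA _ (by positivity), steinerPoly_eval hV hC _ (by positivity),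
      h _ (by positivity)]
  rw [steinerPoly_coeff V A k hk, steinerPoly_coeff V C k hk] at this
  exact mul_left_cancel₀ (unitBallVol_pos _).ne' this

/-- Jung's theorem. -/
lemma jung (hd : 0 < d) (P : Set (EuclideanSpace ℝ (Fin d))) (hP : P.Finite) (r₀ : ℝ) (hr₀ : 0 < r₀)
    (hcr : IsLeast {ρ : ℝ | ∃ cc : EuclideanSpace ℝ (Fin d), P ⊆ closedBall cc ρ} r₀) :
    ∃ p ∈ P, ∃ q ∈ P, 2 * (Real.sqrt ((d + 1) / (2 * d)) * r₀) ≤ ‖p - q‖ := by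
  obtain ⟨⟨c, hc⟩, hmin⟩ := hcr
  have hmem : c ∈ convexHull ℝ {p ∈ P | ‖p - c‖ = r₀} := by
    by_contra hn
    have hfin : {p ∈ P | ‖p - c‖ = r₀}.Finite := hP.subset (Set.sep_subset _ _)
    obtain ⟨f, u, h1, h2⟩ := geometric_hahn_banach_point_closed (convex_convexHull ℝ _)
      (hfin.isCompact_convexHull ℝ).isClosed hn
    set v := (InnerProductSpace.toDual ℝ (EuclideanSpace ℝ (Fin d))).symm f with hv
    have hf : ∀ z, f z = ⟪v, z⟫ := by
      intro z; rw [hv, InnerProductSpace.toDual_symm_apply]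
    have hev : ∀ p ∈ P, ∀ᶠ t : ℝ in nhdsWithin 0 (Set.Ioi 0), ‖p - (c + t • v)‖ < r₀ := by
      intro p hp
      have hle : ‖p - c‖ ≤ r₀ := by simpa [dist_eq_norm] using hc hp
      rcases hle.eq_or_lt with he | hlt
      · have hi : 0 < ⟪v, p - c⟫ := by
          have := h2 p (subset_convexHull ℝ _ ⟨hp, he⟩)
          rw [hf] at this h1
          rw [inner_sub_right]; linarith
        have hcont : Filter.Tendsto (fun t : ℝ => t * ‖v‖ ^ 2) (nhdsWithin 0 (Set.Ioi 0))
            (nhds (0 * ‖v‖ ^ 2)) :=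
          ((continuous_id.mul continuous_const).tendsto (0 : ℝ)).mono_left nhdsWithin_le_nhds
        rw [zero_mul] at hcont
        filter_upwards [hcont.eventually (gt_mem_nhds hi), self_mem_nhdsWithin] with t ht ht0
        have ht0 : 0 < t := ht0
        have e : ‖p - (c + t • v)‖ ^ 2 = ‖p - c‖ ^ 2 - 2 * (t * ⟪v, p - c⟫) + t ^ 2 * ‖v‖ ^ 2 := by
          rw [← sub_sub, norm_sub_sq_real, inner_smul_right, norm_smul, mul_pow,
            real_inner_comm, Real.norm_eq_abs, sq_abs]
        refine lt_of_pow_lt_pow_left₀ 2 hr₀.le ?_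
        rw [e, he]
        nlinarith [mul_pos ht0 hi, mul_lt_mul_of_pos_left ht ht0]
      · have hcont : Continuous (fun t : ℝ => ‖p - (c + t • v)‖) := by fun_prop
        have := (hcont.tendsto 0).mono_left (nhdsWithin_le_nhds (s := Set.Ioi 0))
        simp only [zero_smul, add_zero] at this
        exact this.eventually (gt_mem_nhds hlt)
    obtain ⟨t, ht⟩ := ((Filter.eventually_all_finite hP).2 hev).exists
    obtain ⟨ρ, hρ, hρ'⟩ : ∃ ρ < r₀, ∀ p ∈ P, ‖p - (c + t • v)‖ ≤ ρ := by
      rcases P.eq_empty_or_nonempty with rfl | hne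
      · exact ⟨r₀ - 1, by linarith, by simp⟩
      · obtain ⟨p, hp, hmax⟩ := hP.exists_maximalFor (fun p => ‖p - (c + t • v)‖) P hne
        exact ⟨_, ht p hp, fun x hx => by
          by_contra! hlt
          exact absurd (hmax hx hlt.le) (not_le.2 hlt)⟩
    have := hmin ⟨c + t • v, fun p hp => by
      rw [mem_closedBall, dist_eq_norm]; exact hρ' p hp⟩
    linarith
  obtain ⟨ι, _, z, w, hz, hind, hw, hw1, hwz⟩ := eq_pos_convex_span_of_mem_convexHull hmem
  have hcard : (Fintype.card ι : ℝ) ≤ d + 1 := by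
    have h1 := hind.card_le_finrank_succ
    have h2 := Submodule.finrank_le (vectorSpan ℝ (Set.range z))
    rw [finrank_euclideanSpace_fin] at h2
    exact_mod_cast h1.trans (by omega)
  have hz1 : ∀ i, z i ∈ P := fun i => (hz ⟨i, rfl⟩).1
  have hz2 : ∀ i, ‖z i - c‖ = r₀ := fun i => (hz ⟨i, rfl⟩).2
  by_contra! hcon
  set D := 2 * (Real.sqrt ((d + 1) / (2 * d)) * r₀) with hD
  have hd' : (0 : ℝ) < d := by exact_mod_cast hd
  have hDsq : D ^ 2 = 2 * (d + 1) / d * r₀ ^ 2 := by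
    rw [hD, mul_pow, mul_pow, Real.sq_sqrt (by positivity)]; field_simp
  have hDpos : 0 < D := by positivity
  have hsum0 : ∑ i, w i • (z i - c) = 0 := by
    simp only [smul_sub, Finset.sum_sub_distrib, hwz, ← Finset.sum_smul, hw1, one_smul, sub_self]
  have key : ∀ j, ∑ i, w i * ‖z i - z j‖ ^ 2 = 2 * r₀ ^ 2 := by
    intro j
    have e : ∀ i, w i * ‖z i - z j‖ ^ 2 = w i * (2 * r₀ ^ 2) - 2 * ⟪w i • (z i - c), z j - c⟫ := by
      intro i
      rw [show z i - z j = (z i - c) - (z j - c) by abel, norm_sub_sq_real, hz2, hz2,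
        real_inner_smul_left]
      ring
    rw [Finset.sum_congr rfl fun i _ => e i, Finset.sum_sub_distrib, ← Finset.sum_mul, hw1,
      ← Finset.mul_sum, ← sum_inner, hsum0, inner_zero_left]
    ring
  have hj : ∀ j, 2 * r₀ ^ 2 ≤ (1 - w j) * D ^ 2 := by
    classical
    intro j
    rw [← key j, ← Finset.sum_erase_add _ _ (Finset.mem_univ j), ← hw1,
      ← Finset.sum_erase_add Finset.univ w (Finset.mem_univ j)]
    simp only [sub_self, norm_zero, add_sub_cancel_right]
    rw [Finset.sum_mul]
    simp only [ne_eq, OfNat.ofNat_ne_zero, not_false_eq_true, zero_pow, mul_zero, add_zero]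
    refine Finset.sum_le_sum fun i _ => mul_le_mul_of_nonneg_left ?_ (hw i).le
    exact pow_le_pow_left₀ (norm_nonneg _) (hcon _ (hz1 i) _ (hz1 j)).le 2

  have hstrict : ∃ j, 2 * r₀ ^ 2 < (1 - w j) * D ^ 2 := by
    classical
    by_contra! hall
    have hne : Nonempty ι := by
      by_contra hemp
      rw [not_nonempty_iff] at hemp
      simp at hw1
    obtain ⟨j⟩ := hne
    have h1 := hall j
    rw [← key j, ← Finset.sum_erase_add _ _ (Finset.mem_univ j), ← hw1,
      ← Finset.sum_erase_add Finset.univ w (Finset.mem_univ j)] at h1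
    simp only [sub_self, norm_zero, add_sub_cancel_right] at h1
    rw [Finset.sum_mul] at h1
    simp only [ne_eq, OfNat.ofNat_ne_zero, not_false_eq_true, zero_pow, mul_zero, add_zero] at h1
    by_cases hem : (Finset.univ.erase j).Nonempty
    · refine absurd h1 (not_le.2 (Finset.sum_lt_sum_of_nonempty hem fun i _ =>
        mul_lt_mul_of_pos_left ?_ (hw i)))
      exact pow_lt_pow_left₀ (hcon _ (hz1 i) _ (hz1 j)) (norm_nonneg _) two_ne_zero
    · have hk := key j
      rw [← Finset.sum_erase_add _ _ (Finset.mem_univ j), Finset.not_nonempty_iff_eq_empty.1 hem] at hk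
      simp at hk
      exact hr₀.ne' hk
  obtain ⟨j0, hj0⟩ := hstrict
  have hsum : ∑ j : ι, 2 * r₀ ^ 2 < ∑ j, (1 - w j) * D ^ 2 :=
    Finset.sum_lt_sum (fun j _ => hj j) ⟨j0, Finset.mem_univ _, hj0⟩
  rw [← Finset.sum_mul Finset.univ (fun j => 1 - w j), Finset.sum_sub_distrib, hw1] at hsum
  simp only [Finset.sum_const, Finset.card_univ, nsmul_eq_mul, mul_one] at hsum
  rw [hDsq] at hsum
  set N : ℝ := (Fintype.card ι : ℝ)
  have h3 : (N - 1) * (2 * (d + 1) / d * r₀ ^ 2) = (N - 1) * (d + 1) * (2 * r₀ ^ 2) / d := by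
    field_simp
  rw [h3, lt_div_iff₀ hd'] at hsum
  have h4 : 0 < 2 * r₀ ^ 2 := by positivity
  have h5 : N * d < (N - 1) * (d + 1) := by
    refine lt_of_mul_lt_mul_right ?_ h4.le
    linarith
  nlinarith

lemma CC_ballBody (r : ℝ) (P : Set (EuclideanSpace ℝ (Fin d))) (hP : P.Nonempty)
    (hne : (ballBody r P).Nonempty) : CC (ballBody r P) := by
  obtain ⟨p, hp⟩ := hP
  refine ⟨convex_iInter₂ fun x _ => convex_closedBall x r, ?_, hne⟩
  exact (isCompact_closedBall p r).of_isClosed_subset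
    (isClosed_biInter fun x _ => isClosed_closedBall) (Set.biInter_subset_of_mem hp)

/-- Intrinsic volume bound: V_k(P^r) ≤ V_k(L_{r, r − √((d+1)/(2d))·r₀, d}). -/
theorem intrinsicVolume_ballBody_le (r r₀ : ℝ) (hr : r₀ < r) (hr₀ : 0 < r₀)
    (k : ℕ) (hk : 0 < k) (hkd : k < d)
    (P : Set (EuclideanSpace ℝ (Fin d))) (hPfin : P.Finite) (hcard : 1 < P.ncard)
    (hcr : IsLeast {ρ : ℝ | ∃ cc : EuclideanSpace ℝ (Fin d), P ⊆ closedBall cc ρ} r₀)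
    (V : ℕ → Set (EuclideanSpace ℝ (Fin d)) → ℝ) (hV : IsIntrinsicVolumes d V)
    (c : EuclideanSpace ℝ (Fin d))
    (hc : ‖c‖ = r - (r - Real.sqrt ((d + 1) / (2 * d)) * r₀)) :
    V k (ballBody r P) ≤ V k (closedBall c r ∩ closedBall (-c) r) := by
  classical
  have hd : 0 < d := by omega
  obtain ⟨p, hp, q, hq, hpq⟩ := jung hd P hPfin r₀ hr₀ hcr
  have hc' : ‖c‖ = Real.sqrt ((d + 1) / (2 * d)) * r₀ := by rw [hc]; ring
  rw [← hc'] at hpq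
  have hd' : (1 : ℝ) ≤ d := by exact_mod_cast hd
  have hcr0 : ‖c‖ ≤ r := by
    have : Real.sqrt ((d + 1) / (2 * d)) ≤ 1 := by
      rw [Real.sqrt_le_iff, one_pow, div_le_one (by positivity)]; constructor <;> linarith
    rw [hc']; nlinarith
  have hcpos : 0 < ‖c‖ := by rw [hc']; positivity
  set L := closedBall c r ∩ closedBall (-c) r with hL
  have hLC : CC L := ⟨(convex_closedBall _ _).inter (convex_closedBall _ _),
    (isCompact_closedBall _ _).inter (isCompact_closedBall _ _), ⟨0, by simpa using hcr0,
      by simpa using hcr0⟩⟩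
  have hBC : CC (ballBody r P) := by
    refine CC_ballBody r P ⟨p, hp⟩ ?_
    obtain ⟨⟨cc, hcc⟩, _⟩ := hcr
    refine ⟨cc, Set.mem_iInter₂.2 fun x hx => ?_⟩
    rw [mem_closedBall, dist_comm]
    exact (hcc hx).trans hr.le
  set m : EuclideanSpace ℝ (Fin d) := (1 / 2 : ℝ) • (p + q) with hm
  set w : EuclideanSpace ℝ (Fin d) := (1 / 2 : ℝ) • (p - q) with hw
  have hwn : ‖c‖ ≤ ‖w‖ := by
    rw [hw, norm_smul, Real.norm_eq_abs, abs_of_pos (by norm_num)]; linarith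
  have hwpos : 0 < ‖w‖ := hcpos.trans_le hwn
  set s : ℝ := ‖c‖ / ‖w‖ with hs
  have hs0 : 0 ≤ s := by positivity
  have hs1 : s ≤ 1 := by rw [hs, div_le_one hwpos]; exact hwn
  have hnorm : ‖c‖ = ‖s • w‖ := by
    rw [norm_smul, Real.norm_eq_abs, abs_of_nonneg hs0, hs]; field_simp
  let R := (Submodule.reflection (ℝ ∙ (c - s • w))ᗮ)
  have hR : R c = s • w := Submodule.reflection_sub hnorm
  have himg : ∀ S : Set (EuclideanSpace ℝ (Fin d)), volume.real (m +ᵥ R '' S) = volume.real S := by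
    intro S
    rw [measureReal_def, measure_vadd, measureReal_def]
    congr 1
    rw [R.image_eq_preimage_symm]
    exact R.symm.measurePreserving.measure_preimage_emb R.symm.toHomeomorph.measurableEmbedding S
  have hL'C : CC (m +ᵥ R '' L) := by
    refine ⟨(hLC.1.is_linear_image R.toLinearEquiv.toLinearMap.isLinear).vadd m, ?_, ?_⟩
    · exact (hLC.2.1.image R.continuous).vadd m
    · exact (hLC.2.2.image R).vadd_set
  have hVeq : V k (m +ᵥ R '' L) = V k L := by
    refine V_congr hV hL'C hLC (fun ε hε => ?_) k hkd.le
    rw [← himg (L + closedBall 0 ε)]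
    congr 1
    rw [Set.image_add, R.image_closedBall, map_zero, vadd_add_assoc]
  rw [← hVeq]
  refine V_mono hd hV hBC hL'C ?_ k hkd.le
  intro x hx
  have hx1 : ‖x - p‖ ≤ r := by
    have := Set.mem_iInter₂.1 hx p hp
    rwa [mem_closedBall, dist_eq_norm] at this
  have hx2 : ‖x - q‖ ≤ r := by
    have := Set.mem_iInter₂.1 hx q hq
    rwa [mem_closedBall, dist_eq_norm] at this
  refine ⟨x - m, ⟨R.symm (x - m), ⟨?_, ?_⟩, by simp⟩, by simp⟩
  · rw [mem_closedBall, dist_eq_norm, ← R.norm_map, map_sub, hR, R.apply_symm_apply]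
    have e : x - m - s • w = ((1 + s) / 2) • (x - p) + ((1 - s) / 2) • (x - q) := by
      rw [hm, hw]; module
    rw [e]
    refine (norm_add_le _ _).trans ?_
    rw [norm_smul, norm_smul, Real.norm_of_nonneg (by linarith), Real.norm_of_nonneg (by linarith)]
    nlinarith
  · rw [mem_closedBall, dist_eq_norm, ← R.norm_map, map_sub, map_neg, hR, R.apply_symm_apply]
    have e : x - m - -(s • w) = ((1 - s) / 2) • (x - p) + ((1 + s) / 2) • (x - q) := by
      rw [hm, hw]; module
    rw [e]
    refine (norm_add_le _ _).trans ?_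
    rw [norm_smul, norm_smul, Real.norm_of_nonneg (by linarith), Real.norm_of_nonneg (by linarith)]
    nlinarith
end

section
/- Let r > r₀ > 0, d > 1, and let P ⊂ ℝ^d be a finite set of at least two points with circumradius r₀. Then Vol_d(S_{r,r₀,d}) ≤ Vol_d(conv_r P), where S_{r,r₀,d} is the r-spindle of circumradius r₀. -/
open Metric Set MeasureTheory Pointwise RealInnerProductSpace

variable {d : ℕ}

/-- The measure `s ^ n ds` on the positive half-line, as a measure on `ℝ`. -/
noncomputable def kap (n : ℕ) : Measure ℝ :=
  Measure.map Subtype.val (Measure.volumeIoiPow n)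

lemma kap_eq (n : ℕ) : kap n = volume.withDensity
    (fun s : ℝ => (Ioi (0:ℝ)).indicator (fun s => ENNReal.ofReal (s ^ n)) s) := by
  ext X hX
  rw [kap, Measure.map_apply measurable_subtype_coe hX, Measure.volumeIoiPow,
    withDensity_apply _ (measurable_subtype_coe hX),
    setLIntegral_subtype measurableSet_Ioi _ fun a : ℝ ↦ ENNReal.ofReal (a ^ n),
    withDensity_apply _ hX, lintegral_indicator measurableSet_Ioi,
    Measure.restrict_restrict measurableSet_Ioi, Subtype.image_preimage_coe]

instance (n : ℕ) : SFinite (kap n) := by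
  unfold kap; infer_instance

lemma kap_scale (n : ℕ) {t : ℝ} (ht : 0 < t) :
    ∃ K : ENNReal, Measure.map (fun s => t * s) (kap n) = K • kap n := by
  refine ⟨ENNReal.ofReal ((t⁻¹) ^ n) * ENNReal.ofReal |t⁻¹|, ?_⟩
  set f : ℝ → ENNReal := fun s => (Ioi (0:ℝ)).indicator (fun s => ENNReal.ofReal (s ^ n)) s with hf
  have hfm : Measurable f := by
    apply Measurable.indicator _ measurableSet_Ioi
    fun_prop
  have hfs : ∀ s, f s = ENNReal.ofReal ((t⁻¹) ^ n) * f (t * s) := by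
    intro s
    by_cases hs : 0 < s
    · have : 0 < t * s := mul_pos ht hs
      simp only [hf, indicator, mem_Ioi, hs, this, if_true]
      rw [← ENNReal.ofReal_mul (by positivity)]
      congr 1
      rw [← mul_pow]; congr 1; field_simp
    · have : ¬ 0 < t * s := by
        intro h; exact hs (pos_of_mul_pos_right h ht.le)
      simp [hf, indicator, hs, this]
  ext X hX
  have hm : Measurable (fun s : ℝ => t * s) := measurable_const_mul t
  rw [Measure.map_apply hm hX, Measure.smul_apply, kap_eq, withDensity_apply _ (hm hX),
    withDensity_apply _ hX, ← lintegral_indicator (hm hX), ← lintegral_indicator hX]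
  have h1 : ∀ s, ((fun s => t * s) ⁻¹' X).indicator f s
      = ENNReal.ofReal ((t⁻¹) ^ n) * (X.indicator f) (t * s) := by
    intro s
    by_cases hs : t * s ∈ X
    · simp only [indicator, mem_preimage, hs, if_true]; exact hfs s
    · simp [indicator, hs]
  change ∫⁻ s, ((fun s => t * s) ⁻¹' X).indicator f s = _ • ∫⁻ s, X.indicator f s
  simp_rw [h1]
  rw [lintegral_const_mul _ (show Measurable (fun s => X.indicator f (t * s)) from (hfm.indicator hX).comp hm),
    ← lintegral_map (f := X.indicator f) (hfm.indicator hX) hm, Real.map_volume_mul_left ht.ne',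
    lintegral_smul_measure, smul_eq_mul, smul_eq_mul, mul_assoc]

/-- the planar measure `s ^ n ds da`. -/
noncomputable def nu (n : ℕ) : Measure (ℝ × ℝ) := (kap n).prod volume

instance (n : ℕ) : SFinite (nu n) := by
  unfold nu; infer_instance

lemma nu_scale (n : ℕ) {t : ℝ} (ht : 0 < t) :
    ∃ K : ENNReal, ∀ X : Set (ℝ × ℝ), MeasurableSet X →
      nu n ((fun z : ℝ × ℝ => (t * z.1, t * z.2)) ⁻¹' X) = K * nu n X := by
  obtain ⟨K, hK⟩ := kap_scale n ht
  refine ⟨K * ENNReal.ofReal |t⁻¹|, fun X hX => ?_⟩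
  have hm : Measurable (fun s : ℝ => t * s) := measurable_const_mul t
  have := Measure.map_prod_map (kap n) (volume : Measure ℝ) hm hm
  rw [hK, Real.map_volume_mul_left ht.ne'] at this
  have h2 : (fun z : ℝ × ℝ => (t * z.1, t * z.2)) = Prod.map (fun s => t * s) (fun s => t * s) := rfl
  rw [h2, ← Measure.map_apply (hm.prodMap hm) hX, nu, ← this, Measure.prod_smul_left,
    Measure.prod_smul_right]
  simp [mul_assoc]

lemma nu_pos (n : ℕ) : ∀ᵐ z ∂(nu n), 0 < z.1 := by
  have h : ∀ᵐ s ∂(kap n), 0 < s := by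
    rw [kap, ae_map_iff measurable_subtype_coe.aemeasurable measurableSet_Ioi]
    exact Filter.Eventually.of_forall fun s => s.2
  exact Measure.quasiMeasurePreserving_fst.ae h

section disint
universe u
variable {E : Type u} [NormedAddCommGroup E] [InnerProductSpace ℝ E] [FiniteDimensional ℝ E]
  [MeasurableSpace E] [BorelSpace E]

lemma haar_polar (F : Type*) [NormedAddCommGroup F] [InnerProductSpace ℝ F]
    [FiniteDimensional ℝ F] [Nontrivial F] [MeasurableSpace F] [BorelSpace F] (μ : Measure F)
    [μ.IsAddHaarMeasure] :
    μ = Measure.map (fun p : sphere (0:F) 1 × ℝ => p.2 • (p.1 : F))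
      (μ.toSphere.prod (kap (Module.finrank ℝ F - 1))) := by
  have hm := μ.measurePreserving_homeomorphUnitSphereProd
  have h1 : Measure.map (Subtype.val : ({0}ᶜ : Set F) → F) (μ.comap (↑)) = μ := by
    rw [(MeasurableEmbedding.subtype_coe (measurableSet_singleton _).compl).map_comap,
      Subtype.range_coe, restrict_compl_singleton]
  have h2 := (hm.symm (homeomorphUnitSphereProd F).toMeasurableEquiv).map_eq
  have h3 : (μ.toSphere.prod (kap (Module.finrank ℝ F - 1))) =
      Measure.map (Prod.map id Subtype.val)
      (μ.toSphere.prod (Measure.volumeIoiPow (Module.finrank ℝ F - 1))) := by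
    rw [← Measure.map_prod_map _ _ measurable_id measurable_subtype_coe, Measure.map_id, kap]
  rw [h3, Measure.map_map (by fun_prop) (by fun_prop)]
  nth_rw 1 [← h1, ← h2]
  rw [Measure.map_map (by fun_prop) (by fun_prop)]
  rfl

lemma disint (μ : Measure E) [μ.IsAddHaarMeasure] (u : E) (hu : ‖u‖ = 1)
    (hd : 1 < Module.finrank ℝ E) :
    ∃ (Ω : Type u) (_ : MeasurableSpace Ω) (σ : Measure Ω) (ξ : Ω → E) (n : ℕ),
      (∀ ω, ‖ξ ω‖ = 1 ∧ ⟪u, ξ ω⟫ = 0) ∧ ∀ X : Set E, MeasurableSet X →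
        (∀ ω, MeasurableSet {z : ℝ × ℝ | z.1 • ξ ω + z.2 • u ∈ X}) ∧
        Measurable (fun ω => nu n {z | z.1 • ξ ω + z.2 • u ∈ X}) ∧
        μ X = ∫⁻ ω, nu n {z | z.1 • ξ ω + z.2 • u ∈ X} ∂σ := by
  let F : Submodule ℝ E := (ℝ ∙ u)ᗮ
  have hu0 : u ≠ 0 := by rintro rfl; simp at hu
  have huu : ⟪u, u⟫ = 1 := by rw [real_inner_self_eq_norm_sq, hu]; norm_num
  have hF : ∀ y : F, ⟪u, (y : E)⟫ = 0 := fun y =>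
    (Submodule.mem_orthogonal_singleton_iff_inner_right).1 y.2
  have hfr : 0 < Module.finrank ℝ F := by
    have := Submodule.finrank_add_finrank_orthogonal (ℝ ∙ u)
    rw [finrank_span_singleton hu0] at this
    change 0 < Module.finrank ℝ ((ℝ ∙ u)ᗮ : Submodule ℝ E)
    omega
  have : Nontrivial F := Module.finrank_pos_iff.1 hfr
  let L0 : (F × ℝ) →ₗ[ℝ] E := F.subtype.coprod (LinearMap.toSpanSingleton ℝ E u)
  have hL0 : ∀ p, L0 p = (p.1 : E) + p.2 • u := fun p => by simp [L0]
  have hbij : Function.Bijective L0 := by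
    constructor
    · rw [← LinearMap.ker_eq_bot, LinearMap.ker_eq_bot']
      rintro ⟨y, a⟩ h
      rw [hL0] at h
      have h1 : ⟪u, (y : E) + a • u⟫ = 0 := by
        have h' : (y : E) + a • u = 0 := h
        rw [h']; simp
      rw [inner_add_right, hF, inner_smul_right, huu] at h1
      have ha : a = 0 := by linarith
      subst ha
      have : (y : E) = 0 := by simpa using h
      ext <;> simp [this]
    · intro z
      refine ⟨(⟨z - ⟪u, z⟫ • u, ?_⟩, ⟪u, z⟫), ?_⟩
      · rw [Submodule.mem_orthogonal_singleton_iff_inner_right, inner_sub_right, inner_smul_right,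
          huu]; ring
      · rw [hL0]; simp
  let L : (F × ℝ) ≃L[ℝ] E := (LinearEquiv.ofBijective L0 hbij).toContinuousLinearEquiv
  have hL : ∀ p, L p = (p.1 : E) + p.2 • u := fun p => hL0 p
  let μF : Measure F := Measure.addHaar
  let n := Module.finrank ℝ F - 1
  let μ' : Measure E := Measure.map L (μF.prod volume)
  have : μ'.IsAddHaarMeasure := L.isAddHaarMeasure_map _
  have hμ : μ = Measure.addHaarScalarFactor μ μ' • μ' := Measure.isAddLeftInvariant_eq_smul μ μ'
  let c := Measure.addHaarScalarFactor μ μ'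
  refine ⟨sphere (0 : F) 1, inferInstance, c • μF.toSphere, fun ω => ((ω : F) : E), n,
    fun ω => ⟨norm_eq_of_mem_sphere ω, hF _⟩, fun X hX => ?_⟩
  have hmeas : Measurable (fun p : sphere (0 : F) 1 × (ℝ × ℝ) =>
      p.2.1 • (((p.1 : F) : E)) + p.2.2 • u) := by fun_prop
  have hX' := hmeas hX
  refine ⟨fun ω => (hmeas.comp (measurable_prodMk_left (x := ω))) hX,
    measurable_measure_prodMk_left hX', ?_⟩
  have hpol : μF.prod (volume : Measure ℝ) = Measure.map
      (Prod.map (fun p : sphere (0:F) 1 × ℝ => p.2 • (p.1 : F)) id)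
      ((μF.toSphere.prod (kap n)).prod volume) := by
    rw [← Measure.map_prod_map _ _ (by fun_prop) measurable_id, Measure.map_id, ← haar_polar F μF]
  have hmain : μ' = Measure.map (fun p : sphere (0 : F) 1 × (ℝ × ℝ) =>
      p.2.1 • (((p.1 : F) : E)) + p.2.2 • u) (μF.toSphere.prod (nu n)) := by
    have hass := (measurePreserving_prodAssoc μF.toSphere (kap n) (volume : Measure ℝ)).map_eq
    simp only [μ']
    rw [hpol, nu, ← hass, Measure.map_map hmeas (MeasurableEquiv.measurable _),
      Measure.map_map (by fun_prop) (by fun_prop)]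
    congr 1
  have hmX : μ X = c • μ' X := by
    conv_lhs => rw [hμ]
    rfl
  rw [hmX, congrArg (fun m : Measure E => m X) hmain, Measure.map_apply hmeas hX,
    Measure.prod_apply hX', lintegral_smul_measure]
  rfl
end disint

/-- planar comparison -/
lemma planar (n : ℕ) (c R : ℝ) (hc : 0 ≤ c) (hR : 0 ≤ R) (A : Set (ℝ × ℝ)) (hA : MeasurableSet A)
    (hApos : ∀ z ∈ A, 0 ≤ z.2)
    (hAs : ∀ z ∈ A, ∀ t : ℝ, 0 < t → (t * z.1, t * z.2) ∈ A)
    (hAd : ∀ z ∈ A, ∀ b : ℝ, 0 ≤ b → (z.1, z.2 + b) ∈ A)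
    (S B : Set (ℝ × ℝ))
    (hS : S = {z | z.1 ^ 2 + z.2 ^ 2 + 2 * c * |z.1| ≤ R ^ 2 ∧ 0 ≤ z.2})
    (hB : B = {z | z.1 ^ 2 + z.2 ^ 2 ≤ 1 ∧ 0 ≤ z.2}) :
    nu n (B ∩ A) * nu n S ≤ nu n (S ∩ A) * nu n B := by
  have hSc : IsClosed S := by
    rw [hS, Set.ofPred_and]
    exact IsClosed.inter (isClosed_le (by fun_prop) (by fun_prop))
      (isClosed_le (by fun_prop) (by fun_prop))
  have hBc : IsClosed B := by
    rw [hB, Set.ofPred_and]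
    exact IsClosed.inter (isClosed_le (by fun_prop) (by fun_prop))
      (isClosed_le (by fun_prop) (by fun_prop))
  suffices h : ∃ T : ENNReal, T * nu n (B ∩ A) ≤ nu n (S ∩ A) ∧ nu n (S \ A) ≤ T * nu n (B \ A) by
    obtain ⟨T, h1, h2⟩ := h
    rw [← measure_inter_add_sdiff S hA, ← measure_inter_add_sdiff B hA, mul_add, mul_add,
      mul_comm (nu n (B ∩ A)) (nu n (S ∩ A))]
    refine add_le_add le_rfl ?_
    calc nu n (B ∩ A) * nu n (S \ A) ≤ nu n (B ∩ A) * (T * nu n (B \ A)) := by gcongr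
      _ = (T * nu n (B ∩ A)) * nu n (B \ A) := by ring
      _ ≤ _ := by gcongr
  let Z : Set ℝ := (fun z : ℝ × ℝ => Real.sqrt (z.1 ^ 2 + z.2 ^ 2)) '' {z | z ∈ S \ A ∧ 0 < z.1}
  by_cases hZ : Z.Nonempty
  swap
  · refine ⟨0, by simp, ?_⟩
    rw [zero_mul, nonpos_iff_eq_zero]
    refine measure_eq_zero_iff_ae_notMem.2 ?_
    filter_upwards [nu_pos n] with z hz hzS
    exact hZ ⟨_, z, ⟨hzS, hz⟩, rfl⟩
  have hZb : BddAbove Z := by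
    refine ⟨R, ?_⟩
    rintro _ ⟨z, ⟨⟨hz, _⟩, _⟩, rfl⟩
    rw [hS] at hz
    have := mul_nonneg hc (abs_nonneg z.1)
    apply Real.sqrt_le_iff.2 ⟨hR, by nlinarith [hz.1]⟩
  set t := sSup Z with ht
  have hup : ∀ z, z ∈ S \ A → 0 < z.1 → z.1 ^ 2 + z.2 ^ 2 ≤ t ^ 2 := by
    intro z hz h0
    have h1 : Real.sqrt (z.1 ^ 2 + z.2 ^ 2) ≤ t := le_csSup hZb ⟨z, ⟨hz, h0⟩, rfl⟩
    exact (Real.sqrt_le_left (le_trans (Real.sqrt_nonneg _) h1)).1 h1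
  have htpos : 0 < t := by
    obtain ⟨_, z, ⟨hz, h0⟩, rfl⟩ := hZ
    have h1 : Real.sqrt (z.1 ^ 2 + z.2 ^ 2) ≤ t := le_csSup hZb ⟨z, ⟨hz, h0⟩, rfl⟩
    exact lt_of_lt_of_le (Real.sqrt_pos.2 (by positivity)) h1
  have hlow0 : ∀ z ∈ A, 0 < z.1 → z.1 ^ 2 + z.2 ^ 2 < t ^ 2 → z ∈ S := by
    intro z hz h0 hlt
    have h1 : Real.sqrt (z.1 ^ 2 + z.2 ^ 2) < t := by
      rw [Real.sqrt_lt' htpos]; exact hlt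
    obtain ⟨_, ⟨w, ⟨⟨hwS, hwA⟩, hw0⟩, rfl⟩, hw⟩ := exists_lt_of_lt_csSup hZ h1
    have hw' : z.1 ^ 2 + z.2 ^ 2 < w.1 ^ 2 + w.2 ^ 2 := (Real.sqrt_lt_sqrt_iff (by positivity)).1 hw
    rw [hS] at hwS ⊢
    obtain ⟨hwS, hw2⟩ := hwS
    have hz2 := hApos z hz
    rw [abs_of_pos hw0] at hwS
    refine ⟨?_, hz2⟩
    rw [abs_of_pos h0]
    -- slope comparison
    have hsl : z.1 * w.2 ≤ w.1 * z.2 := by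
      by_contra hcon
      push Not at hcon
      have h3 := hAs z hz (w.1 / z.1) (div_pos hw0 h0)
      have h4 := hAd _ h3 (w.2 - w.1 / z.1 * z.2) (by
        rw [sub_nonneg, div_mul_eq_mul_div, div_le_iff₀ h0]; linarith)
      apply hwA
      have e : w = (w.1 / z.1 * z.1, w.1 / z.1 * z.2 + (w.2 - w.1 / z.1 * z.2)) := by
        ext
        · simp only; field_simp
        · simp only; ring
      rw [e]; exact h4
    have : z.1 ≤ w.1 := by
      by_contra hcon
      push Not at hcon
      have : z.2 < w.2 := by
        by_contra h; push Not at h; nlinarith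
      nlinarith [mul_pos hw0 (sub_pos.2 this), mul_nonneg (sub_pos.2 hcon).le hw2]
    nlinarith [mul_le_mul_of_nonneg_left this hc]
  have hlow : ∀ z ∈ A, 0 < z.1 → z.1 ^ 2 + z.2 ^ 2 ≤ t ^ 2 → z ∈ S := by
    intro z hz h0 hle
    have htend : Filter.Tendsto (fun l : ℝ => (l * z.1, l * z.2)) (nhdsWithin 1 (Iio 1))
        (nhds z) := by
      have hcont : Continuous (fun l : ℝ => (l * z.1, l * z.2)) := by fun_prop
      have := hcont.tendsto 1
      simp only [one_mul] at this
      exact this.mono_left nhdsWithin_le_nhds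
    refine hSc.mem_of_tendsto htend ?_
    filter_upwards [Ioo_mem_nhdsLT (show (0:ℝ) < 1 by norm_num)] with l hl
    refine hlow0 _ (hAs z hz l hl.1) (mul_pos hl.1 h0) ?_
    simp only
    have h5 : 0 < z.1 ^ 2 + z.2 ^ 2 := by positivity
    have h6 : l ^ 2 < 1 := by nlinarith [hl.1, hl.2]
    nlinarith
  obtain ⟨K, hK⟩ := nu_scale n (inv_pos.2 htpos)
  have hscA : ∀ z : ℝ × ℝ, (t⁻¹ * z.1, t⁻¹ * z.2) ∈ A ↔ z ∈ A := by
    intro z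
    constructor
    · intro h
      have := hAs _ h t htpos
      simpa [mul_inv_cancel_left₀ htpos.ne'] using this
    · intro h; exact hAs z h _ (inv_pos.2 htpos)
  have hscB : ∀ z : ℝ × ℝ, (t⁻¹ * z.1, t⁻¹ * z.2) ∈ B ↔ z.1 ^ 2 + z.2 ^ 2 ≤ t ^ 2 ∧ 0 ≤ z.2 := by
    intro z
    rw [hB]
    simp only [mem_ofPred_eq]
    have e : (t⁻¹ * z.1) ^ 2 + (t⁻¹ * z.2) ^ 2 = (z.1 ^ 2 + z.2 ^ 2) / t ^ 2 := by
      field_simp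
    rw [e, div_le_one (by positivity), mul_nonneg_iff_of_pos_left (inv_pos.2 htpos)]
  refine ⟨K, ?_, ?_⟩
  · rw [← hK _ (hBc.measurableSet.inter hA)]
    apply measure_mono_ae
    filter_upwards [nu_pos n] with z hz hzz
    have hzz' : (t⁻¹ * z.1, t⁻¹ * z.2) ∈ B ∧ (t⁻¹ * z.1, t⁻¹ * z.2) ∈ A := hzz
    rw [hscA, hscB] at hzz'
    exact ⟨hlow z hzz'.2 hz hzz'.1.1, hzz'.2⟩
  · rw [← hK _ (hBc.measurableSet.diff hA)]
    apply measure_mono_ae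
    filter_upwards [nu_pos n] with z hz hzz
    have hzz1 : z ∈ S \ A := hzz
    change (t⁻¹ * z.1, t⁻¹ * z.2) ∈ B ∧ ¬ (t⁻¹ * z.1, t⁻¹ * z.2) ∈ A
    rw [hscA, hscB]
    have hS2 := hzz1.1
    rw [hS] at hS2
    exact ⟨⟨hup z hzz1 hz, hS2.2⟩, hzz1.2⟩

section cone
universe u
variable {E : Type u} [NormedAddCommGroup E] [InnerProductSpace ℝ E]

/-- explicit spindle with unit axis `u` -/
def Sp (c R : ℝ) (u : E) : Set E := {z | ‖z‖ ^ 2 + 2 * c * ‖z - ⟪u, z⟫ • u‖ ≤ R ^ 2}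

/-- closed half space -/
def HS (u : E) : Set E := {z | 0 ≤ ⟪u, z⟫}

lemma Sp_closed (c R : ℝ) (u : E) : IsClosed (Sp c R u) :=
  isClosed_le (by fun_prop) (by fun_prop)

lemma HS_closed (u : E) : IsClosed (HS u) :=
  isClosed_le (by fun_prop) (by fun_prop)

variable [FiniteDimensional ℝ E] [MeasurableSpace E] [BorelSpace E]

lemma cone_ineq_s15 (μ : Measure E) [μ.IsAddHaarMeasure] (u : E) (hu : ‖u‖ = 1)
    (hd : 1 < Module.finrank ℝ E) (c R : ℝ) (hc : 0 ≤ c) (hR : 0 ≤ R) (D : Set E)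
    (hD : MeasurableSet D) (hDpos : ∀ z ∈ D, 0 ≤ ⟪u, z⟫)
    (hDs : ∀ z ∈ D, ∀ t : ℝ, 0 < t → t • z ∈ D)
    (hDa : ∀ z ∈ D, ∀ b : ℝ, 0 ≤ b → z + b • u ∈ D) :
    μ (closedBall 0 1 ∩ D) * μ (Sp c R u ∩ HS u) ≤
      μ (Sp c R u ∩ D) * μ (closedBall 0 1 ∩ HS u) := by
  obtain ⟨Ω, _, σ, ξ, n, hξ, hint⟩ := disint μ u hu hd
  have huu : ⟪u, u⟫ = 1 := by rw [real_inner_self_eq_norm_sq, hu]; norm_num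
  have hin : ∀ ω (z : ℝ × ℝ), ⟪u, z.1 • ξ ω + z.2 • u⟫ = z.2 := by
    intro ω z
    rw [inner_add_right, inner_smul_right, inner_smul_right, (hξ ω).2, huu]; ring
  have hn : ∀ ω (z : ℝ × ℝ), ‖z.1 • ξ ω + z.2 • u‖ ^ 2 = z.1 ^ 2 + z.2 ^ 2 := by
    intro ω z
    rw [norm_add_sq_real, norm_smul, norm_smul, (hξ ω).1, hu, inner_smul_left, inner_smul_right,
      real_inner_comm, (hξ ω).2]
    simp
  have hsp : ∀ ω (z : ℝ × ℝ), z.1 • ξ ω + z.2 • u ∈ Sp c R u ↔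
      z.1 ^ 2 + z.2 ^ 2 + 2 * c * |z.1| ≤ R ^ 2 := by
    intro ω z
    change ‖_‖ ^ 2 + 2 * c * ‖_‖ ≤ _ ↔ _
    rw [hn, hin, add_sub_cancel_right, norm_smul, (hξ ω).1, mul_one, Real.norm_eq_abs]
  have hcb : ∀ ω (z : ℝ × ℝ), z.1 • ξ ω + z.2 • u ∈ closedBall (0:E) 1 ↔
      z.1 ^ 2 + z.2 ^ 2 ≤ 1 := by
    intro ω z
    rw [mem_closedBall_zero_iff, ← hn ω z, sq_le_one_iff₀ (norm_nonneg _)]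
  have hhs : ∀ ω (z : ℝ × ℝ), z.1 • ξ ω + z.2 • u ∈ HS u ↔ 0 ≤ z.2 := by
    intro ω z
    change 0 ≤ ⟪u, _⟫ ↔ _
    rw [hin]
  have mB : MeasurableSet (closedBall (0:E) 1) := isClosed_closedBall.measurableSet
  have mS := (Sp_closed c R u).measurableSet
  have mH := (HS_closed u).measurableSet
  obtain ⟨-, m1, e1⟩ := hint _ (mB.inter hD)
  obtain ⟨-, m2, e2⟩ := hint _ (mS.inter mH)
  obtain ⟨-, m3, e3⟩ := hint _ (mS.inter hD)
  obtain ⟨-, m4, e4⟩ := hint _ (mB.inter mH)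
  obtain ⟨mA, -, -⟩ := hint _ hD
  let S2 : Set (ℝ × ℝ) := {z | z.1 ^ 2 + z.2 ^ 2 + 2 * c * |z.1| ≤ R ^ 2 ∧ 0 ≤ z.2}
  let B2 : Set (ℝ × ℝ) := {z | z.1 ^ 2 + z.2 ^ 2 ≤ 1 ∧ 0 ≤ z.2}
  let A : Ω → Set (ℝ × ℝ) := fun ω => {z | z.1 • ξ ω + z.2 • u ∈ D}
  have hApos : ∀ ω, ∀ z ∈ A ω, 0 ≤ z.2 := by
    intro ω z hz
    rw [← hin ω z]; exact hDpos _ hz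
  have f1 : ∀ ω, {z : ℝ × ℝ | z.1 • ξ ω + z.2 • u ∈ closedBall 0 1 ∩ D} = B2 ∩ A ω := by
    intro ω; ext z
    constructor
    · rintro ⟨h1, h2⟩
      exact ⟨⟨(hcb ω z).1 h1, hApos ω z h2⟩, h2⟩
    · rintro ⟨h1, h2⟩
      exact ⟨(hcb ω z).2 h1.1, h2⟩
  have f3 : ∀ ω, {z : ℝ × ℝ | z.1 • ξ ω + z.2 • u ∈ Sp c R u ∩ D} = S2 ∩ A ω := by
    intro ω; ext z
    constructor
    · rintro ⟨h1, h2⟩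
      exact ⟨⟨(hsp ω z).1 h1, hApos ω z h2⟩, h2⟩
    · rintro ⟨h1, h2⟩
      exact ⟨(hsp ω z).2 h1.1, h2⟩
  have f2 : ∀ ω, {z : ℝ × ℝ | z.1 • ξ ω + z.2 • u ∈ Sp c R u ∩ HS u} = S2 := by
    intro ω; ext z
    exact and_congr (hsp ω z) (hhs ω z)
  have f4 : ∀ ω, {z : ℝ × ℝ | z.1 • ξ ω + z.2 • u ∈ closedBall 0 1 ∩ HS u} = B2 := by
    intro ω; ext z
    exact and_congr (hcb ω z) (hhs ω z)
  simp only [f1] at m1 e1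
  simp only [f2, lintegral_const] at e2
  simp only [f3] at m3 e3
  simp only [f4, lintegral_const] at e4
  rw [e1, e2, e3, e4, ← mul_assoc, ← mul_assoc, ← lintegral_mul_const _ m1,
    ← lintegral_mul_const _ m3]
  refine mul_le_mul_left (lintegral_mono fun ω => ?_) _
  refine planar n c R hc hR (A ω) (mA ω) (hApos ω) ?_ ?_ S2 B2 rfl rfl
  · intro z hz t ht
    have := hDs _ hz t ht
    rw [smul_add, smul_smul, smul_smul] at this
    exact this
  · intro z hz b hb
    have := hDa _ hz b hb
    rw [add_assoc, ← add_smul] at this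
    exact this

end cone

section geom
universe u
variable {E : Type u} [NormedAddCommGroup E] [InnerProductSpace ℝ E]

lemma contact_exists (P : Set E) (hPfin : P.Finite) (hne : P.Nonempty) (r₀ : ℝ) (cc : E)
    (hcc : P ⊆ closedBall cc r₀)
    (hmin : ∀ ρ : ℝ, (∃ c : E, P ⊆ closedBall c ρ) → r₀ ≤ ρ) (y : E) :
    ∃ p ∈ P, ‖p - cc‖ = r₀ ∧ ⟪y, p - cc⟫ ≤ 0 := by
  by_contra hcon
  push Not at hcon
  have hev : ∀ p ∈ P, ∀ᶠ ε : ℝ in nhdsWithin 0 (Ioi 0), ‖p - (cc + ε • y)‖ < r₀ := by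
    intro p hp
    have hle : ‖p - cc‖ ≤ r₀ := by
      have := hcc hp; rwa [mem_closedBall, dist_eq_norm] at this
    have hr0 : 0 ≤ r₀ := le_trans (norm_nonneg _) hle
    rcases hle.lt_or_eq with hlt | heq
    · have hc : Continuous (fun ε : ℝ => ‖p - (cc + ε • y)‖) := by fun_prop
      have h0 := hc.tendsto 0
      simp only [zero_smul, add_zero] at h0
      exact (h0.mono_left nhdsWithin_le_nhds).eventually (Iio_mem_nhds hlt)
    · have hpos := hcon p hp heq
      have hc : Continuous (fun ε : ℝ => ε * ‖y‖ ^ 2) := by fun_prop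
      have h0 := hc.tendsto 0
      simp only [zero_mul] at h0
      have h1 := (h0.mono_left (nhdsWithin_le_nhds (s := Ioi 0))).eventually
        (Iio_mem_nhds (show (0:ℝ) < 2 * ⟪y, p - cc⟫ by linarith))
      filter_upwards [h1, self_mem_nhdsWithin] with ε h2 h3
      have h3' : (0:ℝ) < ε := h3
      have h2' : ε * ‖y‖ ^ 2 < 2 * ⟪y, p - cc⟫ := h2
      refine lt_of_pow_lt_pow_left₀ 2 hr0 ?_
      rw [← sub_sub, norm_sub_sq_real, heq, norm_smul, inner_smul_right, real_inner_comm,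
        Real.norm_eq_abs, mul_pow, sq_abs]
      nlinarith
  have hall := (Filter.eventually_all_finite hPfin).2 hev
  obtain ⟨ε, hε⟩ := hall.exists
  obtain ⟨p, hp, hmax⟩ := Set.exists_max_image P (fun p => ‖p - (cc + ε • y)‖) hPfin hne
  have := hmin _ ⟨cc + ε • y, fun q hq => by
    rw [mem_closedBall, dist_eq_norm]; exact hmax q hq⟩
  exact absurd (hε p hp) (not_lt.2 this)

lemma Sp_symm (c R : ℝ) (u z : E) : -z ∈ Sp c R u ↔ z ∈ Sp c R u := by
  have : -z - ⟪u, -z⟫ • u = -(z - ⟪u, z⟫ • u) := by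
    rw [inner_neg_right, neg_smul]; abel
  change ‖-z‖ ^ 2 + 2 * c * ‖-z - ⟪u, -z⟫ • u‖ ≤ R ^ 2 ↔ _
  rw [this, norm_neg, norm_neg]
  rfl

variable [FiniteDimensional ℝ E] [MeasurableSpace E] [BorelSpace E]

lemma hyper_null_s15 (μ : Measure E) [μ.IsAddHaarMeasure] (w : E) (hw : w ≠ 0) :
    μ {z | ⟪w, z⟫ = 0} = 0 := by
  have h := Measure.addHaar_submodule μ ((ℝ ∙ w)ᗮ) (by
    intro h
    have : w ∈ ((ℝ ∙ w)ᗮ : Submodule ℝ E) := by rw [h]; trivial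
    rw [Submodule.mem_orthogonal_singleton_iff_inner_right] at this
    exact hw (inner_self_eq_zero.1 this))
  refine measure_mono_null (fun z hz => ?_) h
  exact Submodule.mem_orthogonal_singleton_iff_inner_right.2 hz

lemma half_neg (μ : Measure E) [μ.IsAddHaarMeasure] (u : E) (X : Set E)
    (hsym : ∀ z, -z ∈ X ↔ z ∈ X) : μ (X ∩ HS (-u)) = μ (X ∩ HS u) := by
  rw [← Measure.measure_neg μ (X ∩ HS u)]
  congr 1
  ext z
  simp [HS, hsym]

lemma le_two_half (μ : Measure E) [μ.IsAddHaarMeasure] (u : E) (X : Set E)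
    (hsym : ∀ z, -z ∈ X ↔ z ∈ X) : μ X ≤ 2 * μ (X ∩ HS u) := by
  calc μ X ≤ μ ((X ∩ HS u) ∪ (X ∩ HS (-u))) := by
        refine measure_mono fun z hz => ?_
        rcases le_total 0 ⟪u, z⟫ with h | h
        · exact Or.inl ⟨hz, h⟩
        · exact Or.inr ⟨hz, by change 0 ≤ ⟪-u, z⟫; rw [inner_neg_left]; linarith⟩
    _ ≤ μ (X ∩ HS u) + μ (X ∩ HS (-u)) := measure_union_le _ _
    _ = _ := by rw [half_neg μ u X hsym, two_mul]

lemma two_half_le (μ : Measure E) [μ.IsAddHaarMeasure] (u : E) (hu : u ≠ 0) (X : Set E)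
    (hX : MeasurableSet X)
    (hsym : ∀ z, -z ∈ X ↔ z ∈ X) : 2 * μ (X ∩ HS u) ≤ μ X := by
  calc 2 * μ (X ∩ HS u) = μ (X ∩ HS u) + μ (X ∩ HS (-u)) := by
        rw [half_neg μ u X hsym, two_mul]
    _ = μ ((X ∩ HS u) ∪ (X ∩ HS (-u))) := by
        refine (measure_union₀ (hX.inter (HS_closed _).measurableSet).nullMeasurableSet ?_).symm
        refine measure_mono_null ?_ (hyper_null_s15 μ u hu)
        rintro z ⟨⟨_, h1⟩, ⟨_, h2⟩⟩
        have h1' : 0 ≤ ⟪u, z⟫ := h1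
        have h2' : 0 ≤ ⟪-u, z⟫ := h2
        rw [inner_neg_left] at h2'
        exact le_antisymm (by linarith) h1'
    _ ≤ μ X := measure_mono (by
        rintro z (h | h)
        · exact h.1
        · exact h.1)

lemma Sp_rot (c R : ℝ) (u v : E) (huv : ‖v‖ = ‖u‖) :
    (volume : Measure E) (Sp c R v ∩ HS v) = volume (Sp c R u ∩ HS u) := by
  let e : E ≃ₗᵢ[ℝ] E := (ℝ ∙ (v - u))ᗮ.reflection
  have he : e v = u := Submodule.reflection_sub huv
  have hin : ∀ z, ⟪u, e z⟫ = ⟪v, z⟫ := by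
    intro z; rw [← he, e.inner_map_map]
  have hpre : Sp c R v ∩ HS v = e ⁻¹' (Sp c R u ∩ HS u) := by
    ext z
    have h1 : ‖e z - ⟪u, e z⟫ • u‖ = ‖z - ⟪v, z⟫ • v‖ := by
      rw [hin, ← e.norm_map (z - ⟪v, z⟫ • v), map_sub, map_smul, he]
    have h2 : (e z ∈ Sp c R u) ↔ z ∈ Sp c R v := by
      change ‖e z‖ ^ 2 + 2 * c * ‖e z - ⟪u, e z⟫ • u‖ ≤ R ^ 2 ↔ _
      rw [h1, e.norm_map]; rfl
    have h3 : (e z ∈ HS u) ↔ z ∈ HS v := by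
      change 0 ≤ ⟪u, e z⟫ ↔ _
      rw [hin]; rfl
    exact (and_congr h2 h3).symm
  rw [hpre, e.measurePreserving.measure_preimage
    (((Sp_closed c R u).inter (HS_closed u)).measurableSet.nullMeasurableSet)]

end geom

lemma spindle_subset (hd : 1 < d) (r r₀ : ℝ) (hr : r₀ < r) (hr₀ : 0 < r₀) (u : EuclideanSpace ℝ (Fin d))
    (hu : ‖u‖ = 1) :
    ballHull r {r₀ • u, -(r₀ • u)} ⊆ Sp (Real.sqrt (r ^ 2 - r₀ ^ 2)) r₀ u := by
  intro z hz
  set c := Real.sqrt (r ^ 2 - r₀ ^ 2) with hc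
  have hc0 : 0 ≤ c := Real.sqrt_nonneg _
  have hc2 : c ^ 2 = r ^ 2 - r₀ ^ 2 := Real.sq_sqrt (by nlinarith)
  have huu : ⟪u, u⟫ = 1 := by rw [real_inner_self_eq_norm_sq, hu]; norm_num
  have hu0 : u ≠ 0 := by rintro rfl; simp at hu
  set w := z - ⟪u, z⟫ • u with hw
  have huw : ⟪u, w⟫ = 0 := by
    rw [hw, inner_sub_right, inner_smul_right, huu]; ring
  have hzw : z = w + ⟪u, z⟫ • u := by rw [hw]; abel
  have hv : ∃ v : EuclideanSpace ℝ (Fin d), ‖v‖ = 1 ∧ ⟪u, v⟫ = 0 ∧ ⟪z, v⟫ = -‖w‖ := by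
    by_cases hw0 : w = 0
    · have hfr : 0 < Module.finrank ℝ ((ℝ ∙ u)ᗮ : Submodule ℝ (EuclideanSpace ℝ (Fin d))) := by
        have := Submodule.finrank_add_finrank_orthogonal (ℝ ∙ u)
        rw [finrank_span_singleton hu0, finrank_euclideanSpace_fin] at this
        omega
      have : Nontrivial ((ℝ ∙ u)ᗮ : Submodule ℝ (EuclideanSpace ℝ (Fin d))) :=
        Module.finrank_pos_iff.1 hfr
      obtain ⟨v, hv⟩ := exists_norm_eq ((ℝ ∙ u)ᗮ : Submodule ℝ (EuclideanSpace ℝ (Fin d)))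
        zero_le_one
      have huv : ⟪u, (v : EuclideanSpace ℝ (Fin d))⟫ = 0 :=
        Submodule.mem_orthogonal_singleton_iff_inner_right.1 v.2
      refine ⟨v, hv, huv, ?_⟩
      rw [hzw, hw0, zero_add, inner_smul_left, huv]; simp
    · have hwn : ‖w‖ ≠ 0 := norm_ne_zero_iff.2 hw0
      refine ⟨(-‖w‖⁻¹) • w, ?_, ?_, ?_⟩
      · rw [norm_smul, norm_neg, norm_inv, norm_norm, inv_mul_cancel₀ hwn]
      · rw [inner_smul_right, huw, mul_zero]
      · rw [inner_smul_right]
        have hzw2 : ⟪z, w⟫ = ‖w‖ ^ 2 := by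
          have h := congrArg (fun t => ⟪t, w⟫) hzw
          simp only [inner_add_left, inner_smul_left, huw, real_inner_self_eq_norm_sq] at h
          simpa using h
        rw [hzw2]
        field_simp
  obtain ⟨v, hv1, huv, hzv⟩ := hv
  have hr' : 0 ≤ r := by linarith
  have hmem : z ∈ closedBall (c • v) r := by
    unfold ballHull at hz
    refine mem_iInter₂.1 hz (c • v) ?_
    have key : ∀ s : ℝ, s ^ 2 = r₀ ^ 2 → s • u ∈ closedBall (c • v) r := by
      intro s hs
      rw [mem_closedBall, dist_eq_norm]
      refine (sq_le_sq₀ (norm_nonneg _) hr').1 ?_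
      rw [norm_sub_sq_real, norm_smul, norm_smul, inner_smul_left, inner_smul_right, huv, hu, hv1,
        mul_one, mul_one, Real.norm_eq_abs, Real.norm_eq_abs, sq_abs, sq_abs]
      simp only [mul_zero]
      linarith
    rintro p (rfl | rfl)
    · exact key r₀ rfl
    · rw [← neg_smul]; exact key (-r₀) (by ring)
  rw [mem_closedBall, dist_eq_norm] at hmem
  have h2 : ‖z - c • v‖ ^ 2 ≤ r ^ 2 := by gcongr
  rw [norm_sub_sq_real, norm_smul, inner_smul_right, hzv, hv1, mul_one, Real.norm_eq_abs,
    sq_abs] at h2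
  change ‖z‖ ^ 2 + 2 * c * ‖w‖ ≤ r₀ ^ 2
  linarith

lemma mem_hull_of_Sp (r r₀ : ℝ) (hr : r₀ < r) (hr₀ : 0 < r₀) (P : Set (EuclideanSpace ℝ (Fin d)))
    (cc q z : EuclideanSpace ℝ (Fin d))
    (hex : ∀ y : EuclideanSpace ℝ (Fin d), ∃ p ∈ P, ‖p - cc‖ = r₀ ∧ ⟪y, p - cc⟫ ≤ 0)
    (hq : ‖q‖ = r₀) (hqP : q + cc ∈ P)
    (hz : z ∈ Sp (Real.sqrt (r ^ 2 - r₀ ^ 2)) r₀ (r₀⁻¹ • q)) (hzq : 0 ≤ ⟪r₀⁻¹ • q, z⟫) :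
    z + cc ∈ ballHull r P := by
  set c := Real.sqrt (r ^ 2 - r₀ ^ 2) with hc
  have hc0 : 0 ≤ c := Real.sqrt_nonneg _
  have hc2 : c ^ 2 = r ^ 2 - r₀ ^ 2 := Real.sq_sqrt (by nlinarith)
  have hr' : 0 ≤ r := by linarith
  set u := r₀⁻¹ • q with hu
  have hqu : q = r₀ • u := by rw [hu, smul_smul, mul_inv_cancel₀ hr₀.ne', one_smul]
  have hun : ‖u‖ = 1 := by
    rw [hu, norm_smul, hq, norm_inv, Real.norm_eq_abs, abs_of_pos hr₀, inv_mul_cancel₀ hr₀.ne']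
  unfold ballHull
  refine mem_iInter₂.2 fun y hy => ?_
  have hyP : P ⊆ closedBall y r := hy
  set y' := y - cc with hy'
  have hsq : ∀ p ∈ P, ‖p - cc‖ ^ 2 - 2 * ⟪p - cc, y'⟫ + ‖y'‖ ^ 2 ≤ r ^ 2 := by
    intro p hp
    have h1 := hyP hp
    rw [mem_closedBall, dist_eq_norm] at h1
    rw [← norm_sub_sq_real]
    have : p - cc - y' = p - y := by rw [hy']; abel
    rw [this]; gcongr
  have hyc2 : ‖y'‖ ^ 2 ≤ c ^ 2 := by
    obtain ⟨p, hp, hpn, hpi⟩ := hex y'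
    have := hsq p hp
    rw [hpn, real_inner_comm] at this
    linarith
  have hyc : ‖y'‖ ≤ c := (sq_le_sq₀ (norm_nonneg _) hc0).1 hyc2
  have hyq := hsq _ hqP
  rw [add_sub_cancel_right, hq, hqu, inner_smul_left] at hyq
  simp only [conj_trivial] at hyq
  set a := ⟪u, z⟫ with ha
  set w := z - a • u with hw
  have hz' : ‖z‖ ^ 2 + 2 * c * ‖w‖ ≤ r₀ ^ 2 := hz
  have hzr : ‖z‖ ≤ r₀ := by
    refine (sq_le_sq₀ (norm_nonneg _) hr₀.le).1 ?_
    nlinarith [mul_nonneg hc0 (norm_nonneg w)]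
  have har : a ≤ r₀ := by
    have := real_inner_le_norm u z
    rw [hun, one_mul] at this
    linarith
  have hzi : ⟪z, y'⟫ = a * ⟪u, y'⟫ + ⟪w, y'⟫ := by
    rw [hw, inner_sub_left, real_inner_smul_left u y' a]; ring
  have hwy : -⟪w, y'⟫ ≤ ‖w‖ * c := by
    have h1 := abs_real_inner_le_norm w y'
    have h2 := neg_abs_le ⟪w, y'⟫
    have h3 := mul_le_mul_of_nonneg_left hyc (norm_nonneg w)
    linarith
  have hau : ‖y'‖ ^ 2 - 2 * (a * ⟪u, y'⟫) ≤ c ^ 2 := by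
    by_cases hneg : 0 ≤ ⟪u, y'⟫
    · nlinarith [mul_nonneg hzq hneg]
    · push Not at hneg
      nlinarith [mul_nonneg (sub_nonneg.2 har) (neg_pos.2 hneg).le]
  rw [mem_closedBall, dist_eq_norm]
  refine (sq_le_sq₀ (norm_nonneg _) hr').1 ?_
  have : z + cc - y = z - y' := by rw [hy']; abel
  rw [this, norm_sub_sq_real, hzi]
  nlinarith

theorem volume_spindle_le_ballHull (r r₀ : ℝ) (hr : r₀ < r) (hr₀ : 0 < r₀)
    (hd : 1 < d) (P : Set (EuclideanSpace ℝ (Fin d))) (hPfin : P.Finite)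
    (hcard : 1 < P.ncard)
    (hcr : IsLeast {ρ : ℝ | ∃ cc : EuclideanSpace ℝ (Fin d), P ⊆ closedBall cc ρ} r₀)
    (x : EuclideanSpace ℝ (Fin d)) (hx : ‖x‖ = r₀) :
    volume (ballHull r {x, -x}) ≤ volume (ballHull r P) := by
  obtain ⟨⟨cc, hcc⟩, hmin⟩ := hcr
  have hne : P.Nonempty := by
    by_contra h
    rw [not_nonempty_iff_eq_empty] at h
    simp [h] at hcard
  have hex := contact_exists P hPfin hne r₀ cc hcc (fun ρ h => hmin h)
  set c := Real.sqrt (r ^ 2 - r₀ ^ 2) with hc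
  have hc0 : 0 ≤ c := Real.sqrt_nonneg _
  have hfr : 1 < Module.finrank ℝ (EuclideanSpace ℝ (Fin d)) := by
    rw [finrank_euclideanSpace_fin]; exact hd
  have hunit : ∀ q : EuclideanSpace ℝ (Fin d), ‖q‖ = r₀ → ‖r₀⁻¹ • q‖ = 1 := by
    intro q hq
    rw [norm_smul, hq, norm_inv, Real.norm_eq_abs, abs_of_pos hr₀, inv_mul_cancel₀ hr₀.ne']
  set u := r₀⁻¹ • x with hu
  have hxu : x = r₀ • u := by rw [hu, smul_smul, mul_inv_cancel₀ hr₀.ne', one_smul]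
  have hun : ‖u‖ = 1 := hunit x hx
  let Q : Set (EuclideanSpace ℝ (Fin d)) := {q | ‖q‖ = r₀ ∧ q + cc ∈ P}
  have hQfin : Q.Finite := by
    refine (hPfin.image (fun p => p - cc)).subset ?_
    rintro q ⟨_, hq⟩
    exact ⟨q + cc, hq, by simp⟩
  have hexQ : ∀ y : EuclideanSpace ℝ (Fin d), ∃ q ∈ Q, ⟪q, y⟫ ≤ 0 := by
    intro y
    obtain ⟨p, hp, h1, h2⟩ := hex y
    exact ⟨p - cc, ⟨h1, by simpa using hp⟩, by rwa [real_inner_comm]⟩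
  let D : EuclideanSpace ℝ (Fin d) → Set (EuclideanSpace ℝ (Fin d)) :=
    fun q => {z | 0 ≤ ⟪q, z⟫ ∧ ∀ q' ∈ Q, ⟪q', z⟫ ≤ ⟪q, z⟫}
  have hDc : ∀ q, IsClosed (D q) := by
    intro q
    have : D q = {z | 0 ≤ ⟪q, z⟫} ∩ ⋂ q' ∈ Q, {z | ⟪q', z⟫ ≤ ⟪q, z⟫} := by
      ext z; simp [D]
    rw [this]
    exact (isClosed_le (by fun_prop) (by fun_prop)).inter
      (isClosed_biInter fun q' _ => isClosed_le (by fun_prop) (by fun_prop))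
  have hcover : ∀ z, ∃ q ∈ Q, z ∈ D q := by
    intro z
    obtain ⟨q0, hq0, hle⟩ := hexQ (-z)
    rw [inner_neg_right] at hle
    obtain ⟨q, hq, hmax⟩ := Set.exists_max_image Q (fun q => ⟪q, z⟫) hQfin ⟨q0, hq0⟩
    refine ⟨q, hq, ?_, hmax⟩
    have := hmax q0 hq0
    linarith
  have hdisj : ∀ q ∈ Q, ∀ q' ∈ Q, q ≠ q' → volume (D q ∩ D q') = 0 := by
    intro q hq q' hq' hne
    refine measure_mono_null ?_ (hyper_null_s15 volume (q - q') (sub_ne_zero.2 hne))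
    rintro z ⟨h1, h2⟩
    have e := le_antisymm (h1.2 q' hq') (h2.2 q hq)
    change ⟪q - q', z⟫ = 0
    rw [inner_sub_left, e, sub_self]
  set b := volume (closedBall (0 : EuclideanSpace ℝ (Fin d)) 1) with hb
  have hb0 : b ≠ 0 := (measure_closedBall_pos _ _ one_pos).ne'
  have hbt : b ≠ ⊤ := measure_closedBall_lt_top.ne
  set q0 := (volume : Measure (EuclideanSpace ℝ (Fin d))) (Sp c r₀ u ∩ HS u) with hq0
  have hcone : ∀ q ∈ Q, 2 * q0 * volume (closedBall 0 1 ∩ D q) ≤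
      volume (Sp c r₀ (r₀⁻¹ • q) ∩ D q) * b := by
    intro q hq
    have hv := hunit q hq.1
    have hqv : ∀ z, ⟪q, z⟫ = r₀ * ⟪r₀⁻¹ • q, z⟫ := by
      intro z
      rw [inner_smul_left]
      simp [mul_inv_cancel_left₀ hr₀.ne']
    have h1 := cone_ineq_s15 (volume : Measure (EuclideanSpace ℝ (Fin d))) (r₀⁻¹ • q) hv hfr c r₀ hc0
      hr₀.le (D q) (hDc q).measurableSet ?_ ?_ ?_
    · rw [Sp_rot c r₀ u (r₀⁻¹ • q) (by rw [hv, hun])] at h1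
      have h2 := two_half_le (volume : Measure (EuclideanSpace ℝ (Fin d))) (r₀⁻¹ • q)
        (by intro h; rw [h] at hv; simp at hv) (closedBall 0 1) isClosed_closedBall.measurableSet
        (by intro z; simp)
      calc 2 * q0 * volume (closedBall 0 1 ∩ D q)
          = 2 * (volume (closedBall 0 1 ∩ D q) * q0) := by ring
        _ ≤ 2 * (volume (Sp c r₀ (r₀⁻¹ • q) ∩ D q) *
            volume (closedBall 0 1 ∩ HS (r₀⁻¹ • q))) := by gcongr
        _ = volume (Sp c r₀ (r₀⁻¹ • q) ∩ D q) *
            (2 * volume (closedBall 0 1 ∩ HS (r₀⁻¹ • q))) := by ring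
        _ ≤ _ := by gcongr
    · intro z hz
      have := hz.1
      rw [hqv] at this
      exact (mul_nonneg_iff_of_pos_left hr₀).1 this
    · intro z hz t ht
      refine ⟨?_, fun q' hq' => ?_⟩
      · rw [inner_smul_right]; exact mul_nonneg ht.le hz.1
      · rw [inner_smul_right, inner_smul_right]
        exact mul_le_mul_of_nonneg_left (hz.2 q' hq') ht.le
    · intro z hz s hs
      have hk : 0 ≤ s * r₀⁻¹ := by positivity
      have hqq : ⟪q, q⟫ = r₀ ^ 2 := by rw [real_inner_self_eq_norm_sq, hq.1]
      rw [smul_smul]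
      refine ⟨?_, fun q' hq' => ?_⟩
      · rw [inner_add_right, inner_smul_right, hqq]
        have := hz.1
        positivity
      · rw [inner_add_right, inner_add_right, inner_smul_right, inner_smul_right, hqq]
        have h3 := real_inner_le_norm q' q
        rw [hq'.1, hq.1, ← sq] at h3
        exact add_le_add (hz.2 q' hq') (mul_le_mul_of_nonneg_left h3 hk)
  -- lower bound for the hull
  have hV : ∑ q ∈ hQfin.toFinset, volume (Sp c r₀ (r₀⁻¹ • q) ∩ D q) ≤ volume (ballHull r P) := by
    rw [← measure_biUnion_finset₀]
    · rw [← measure_preimage_add_right volume cc (ballHull r P)]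
      refine measure_mono ?_
      intro z hz
      simp only [mem_iUnion, Finite.mem_toFinset] at hz
      obtain ⟨q, hq, hzS, hzD⟩ := hz
      refine mem_hull_of_Sp r r₀ hr hr₀ P cc q z hex hq.1 hq.2 hzS ?_
      rw [inner_smul_left]
      have := hzD.1
      simp only [conj_trivial]
      positivity
    · intro q hq q' hq' hne
      refine measure_mono_null ?_ (hdisj q (by simpa using hq) q' (by simpa using hq') hne)
      exact inter_subset_inter inter_subset_right inter_subset_right
    · intro q _
      exact ((Sp_closed _ _ _).inter (hDc q)).measurableSet.nullMeasurableSet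
  have hB : b ≤ ∑ q ∈ hQfin.toFinset, volume (closedBall 0 1 ∩ D q) := by
    refine le_trans (measure_mono ?_) (measure_biUnion_finset_le _ _)
    intro z hz
    obtain ⟨q, hq, hzq⟩ := hcover z
    simp only [mem_iUnion, Finite.mem_toFinset]
    exact ⟨q, hq, hz, hzq⟩
  have hfin : 2 * q0 * b ≤ volume (ballHull r P) * b := by
    calc 2 * q0 * b ≤ 2 * q0 * ∑ q ∈ hQfin.toFinset, volume (closedBall 0 1 ∩ D q) := by gcongr
      _ = ∑ q ∈ hQfin.toFinset, 2 * q0 * volume (closedBall 0 1 ∩ D q) := Finset.mul_sum _ _ _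
      _ ≤ ∑ q ∈ hQfin.toFinset, volume (Sp c r₀ (r₀⁻¹ • q) ∩ D q) * b :=
          Finset.sum_le_sum fun q hq => hcone q (by simpa using hq)
      _ = (∑ q ∈ hQfin.toFinset, volume (Sp c r₀ (r₀⁻¹ • q) ∩ D q)) * b :=
          (Finset.sum_mul _ _ _).symm
      _ ≤ _ := by gcongr
  have hfin' : 2 * q0 ≤ volume (ballHull r P) := (ENNReal.mul_le_mul_iff_left hb0 hbt).1 hfin
  calc volume (ballHull r {x, -x}) ≤ volume (Sp c r₀ u) := by
        refine measure_mono ?_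
        rw [hxu]
        exact spindle_subset hd r r₀ hr hr₀ u hun
    _ ≤ 2 * q0 := le_two_half volume u _ (Sp_symm c r₀ u)
    _ ≤ _ := hfin'
end
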